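/- Let (R, m, k) be a d-dimensional Cohen-Macaulay local ring with an isolated singularity (i.e., R_p is regular for every nonmaximal prime p). Then the maps φ and ψ, defined by φ(X)(p) = ht p − min_{X∈X} depth X_p and ψ(f) = { M ∈ mod R : depth M_p ≥ ht p − f(p) for all p ∈ Spec R }, are mutually inverse bijections between the set of resolving subcategories of mod R containing Ω^d k and the set of grade consistent functions on Spec R. -/

import Mathlib

universe u

open CategoryTheory

namespace ResolvPaper

variable (R : Type u) [CommRing R]

/-- `IsSES f g` means `0 → A → B → C → 0` is a short exact sequence. -/
def IsSES {R : Type u} [CommRing R] {A B C : Type u} [AddCommGroup A] [Module R A]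
    [AddCommGroup B] [Module R B] [AddCommGroup C] [Module R C]
    (f : A →ₗ[R] B) (g : B →ₗ[R] C) : Prop :=
  Function.Injective f ∧ Function.Surjective g ∧ LinearMap.range f = LinearMap.ker g

/-- A resolving subcategory of `mod R`, viewed as a set of bundled modules
closed under isomorphism, containing the finitely generated projective modules, and closed
under direct summands, extensions and syzygies. -/
structure IsResolving (𝒳 : Set (ModuleCat.{u} R)) : Prop where
  fg : ∀ M ∈ 𝒳, Module.Finite R M
  iso_closed : ∀ M N : ModuleCat.{u} R, Nonempty (M ≃ₗ[R] N) → M ∈ 𝒳 → N ∈ 𝒳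
  proj_mem : ∀ M : ModuleCat.{u} R, Module.Finite R M → Module.Projective R M → M ∈ 𝒳
  summand_closed : ∀ M N : ModuleCat.{u} R, ModuleCat.of R (↥M × ↥N) ∈ 𝒳 → M ∈ 𝒳
  ext_closed : ∀ (A B C : ModuleCat.{u} R) (f : A →ₗ[R] B) (g : B →ₗ[R] C),
    IsSES f g → A ∈ 𝒳 → C ∈ 𝒳 → B ∈ 𝒳
  syzygy_closed : ∀ (K P M : ModuleCat.{u} R) (f : K →ₗ[R] P) (g : P →ₗ[R] M),
    IsSES f g → Module.Finite R K → Module.Finite R P → Module.Projective R P →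
    M ∈ 𝒳 → K ∈ 𝒳

/-- The resolving closure: the smallest resolving subcategory containing `S`. -/
def resClosure (S : Set (ModuleCat.{u} R)) : Set (ModuleCat.{u} R) :=
  ⋂₀ {𝒳 | IsResolving R 𝒳 ∧ S ⊆ 𝒳}

/-- An extension-closed subcategory of `mod R`: closed under isomorphism,
direct summands and extensions. -/
def IsExtClosed (𝒳 : Set (ModuleCat.{u} R)) : Prop :=
  (∀ M N : ModuleCat.{u} R, Nonempty (M ≃ₗ[R] N) → M ∈ 𝒳 → N ∈ 𝒳) ∧
  (∀ M N : ModuleCat.{u} R, ModuleCat.of R (↥M × ↥N) ∈ 𝒳 → M ∈ 𝒳) ∧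
  (∀ (A B C : ModuleCat.{u} R) (f : A →ₗ[R] B) (g : B →ₗ[R] C),
    IsSES f g → A ∈ 𝒳 → C ∈ 𝒳 → B ∈ 𝒳)

/-- The extension closure of a set of modules. -/
def extClosure (S : Set (ModuleCat.{u} R)) : Set (ModuleCat.{u} R) :=
  ⋂₀ {𝒳 | IsExtClosed R 𝒳 ∧ S ⊆ 𝒳}

/-- `add R`: direct summands of finite free modules. -/
def addR : Set (ModuleCat.{u} R) :=
  {M | ∃ (n : ℕ) (N : ModuleCat.{u} R), Nonempty ((↥M × ↥N) ≃ₗ[R] (Fin n → R))}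

/-- `pdLE n M` : the projective dimension of `M` is at most `n`. -/
def pdLE : ℕ → ModuleCat.{u} R → Prop
  | 0, M => Module.Projective R M
  | n+1, M => ∃ (K P : ModuleCat.{u} R) (f : K →ₗ[R] P) (g : P →ₗ[R] M),
      Module.Finite R P ∧ Module.Projective R P ∧ IsSES f g ∧ pdLE n K

/-- The projective dimension, an element of `WithBot ℕ∞`; the zero module
has projective dimension `⊥ = -∞`. -/
noncomputable def pdim (M : ModuleCat.{u} R) : WithBot ℕ∞ :=
  sInf {x : WithBot ℕ∞ | (x = ⊥ ∧ Subsingleton M) ∨ ∃ n : ℕ, x = (n : ℕ∞) ∧ pdLE R n M}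

/-- The depth of `M` with respect to the ideal `I`: the supremum of lengths of weakly
`M`-regular sequences contained in `I`.  The zero module has depth `∞`. -/
noncomputable def depthE (I : Ideal R) (M : Type u) [AddCommGroup M] [Module R M] : ℕ∞ :=
  sSup {x : ℕ∞ | ∃ rs : List R, (∀ r ∈ rs, r ∈ I) ∧
    RingTheory.Sequence.IsWeaklyRegular M rs ∧ x = rs.length}

/-- The grade of an ideal: the length of a maximal `R`-regular sequence in `I`. -/
noncomputable def gradeE (I : Ideal R) : ℕ∞ := depthE R I R

/-- A grade consistent function on `Spec R`. -/
def GradeConsistent (f : PrimeSpectrum R → ℕ) : Prop :=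
  (∀ p : PrimeSpectrum R, (f p : ℕ∞) ≤ gradeE R p.asIdeal) ∧
  (∀ p q : PrimeSpectrum R, p.asIdeal ≤ q.asIdeal → f p ≤ f q)

/-- The localization of a module at a prime, as a module over the local ring `R_p`. -/
noncomputable abbrev localizeM (p : PrimeSpectrum R) (M : ModuleCat.{u} R) :
    ModuleCat.{u} (Localization.AtPrime p.asIdeal) :=
  ModuleCat.of (Localization.AtPrime p.asIdeal) (LocalizedModule p.asIdeal.primeCompl M)

/-- `pd_{R_p} M_p`. -/
noncomputable def localPdim (p : PrimeSpectrum R) (M : ModuleCat.{u} R) : WithBot ℕ∞ :=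
  pdim (Localization.AtPrime p.asIdeal) (localizeM R p M)

/-- `depth_{R_p} M_p`. -/
noncomputable def localDepth (p : PrimeSpectrum R) (M : ModuleCat.{u} R) : ℕ∞ :=
  depthE (Localization.AtPrime p.asIdeal)
    (IsLocalRing.maximalIdeal (Localization.AtPrime p.asIdeal))
    (LocalizedModule p.asIdeal.primeCompl M)

/-- The height of a prime ideal. -/
noncomputable def heightE (p : PrimeSpectrum R) : ℕ∞ := Order.height p

/-- `PD(R)` : finitely generated modules of finite projective dimension. -/
def PDcat : Set (ModuleCat.{u} R) :=
  {M | Module.Finite R M ∧ ∃ n : ℕ, pdLE R n M}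

/-- `MCM(R)` : maximal Cohen-Macaulay modules. -/
def MCMcat : Set (ModuleCat.{u} R) :=
  {M | Module.Finite R M ∧ ∀ p : PrimeSpectrum R, heightE R p ≤ localDepth R p M}

/-- The nonfree locus of a module. -/
def NF (M : ModuleCat.{u} R) : Set (PrimeSpectrum R) :=
  {p | ¬ Module.Free (Localization.AtPrime p.asIdeal) (LocalizedModule p.asIdeal.primeCompl M)}

/-- The infinite projective dimension locus of a module. -/
def IPD (M : ModuleCat.{u} R) : Set (PrimeSpectrum R) :=
  {p | localPdim R p M = (⊤ : WithBot ℕ∞)}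

/-- The infinite projective dimension locus of a collection of modules. -/
def IPDcat (𝒳 : Set (ModuleCat.{u} R)) : Set (PrimeSpectrum R) :=
  ⋃ M ∈ 𝒳, IPD R M

/-- The modules in `mod R` whose infinite projective dimension locus lies in `W`. -/
def IPDinv (W : Set (PrimeSpectrum R)) : Set (ModuleCat.{u} R) :=
  {M | Module.Finite R M ∧ IPD R M ⊆ W}

/-- A specialization closed subset of `Spec R`. -/
def SpecClosed (W : Set (PrimeSpectrum R)) : Prop :=
  ∀ p ∈ W, ∀ q : PrimeSpectrum R, p.asIdeal ≤ q.asIdeal → q ∈ W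

/-- Membership in `add 𝒳_p`: direct summands of localizations of finite direct sums
of members of `𝒳`. -/
def memAddLocal (𝒳 : Set (ModuleCat.{u} R)) (p : PrimeSpectrum R)
    (N : ModuleCat.{u} (Localization.AtPrime p.asIdeal)) : Prop :=
  ∃ (n : ℕ) (X : Fin n → ModuleCat.{u} R), (∀ i, X i ∈ 𝒳) ∧
    ∃ (N' : ModuleCat.{u} (Localization.AtPrime p.asIdeal)),
      Nonempty ((↥N × ↥N') ≃ₗ[Localization.AtPrime p.asIdeal]
        ((i : Fin n) → LocalizedModule p.asIdeal.primeCompl (X i)))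

/-- `K` is an `n`-th syzygy of `M` computed from a minimal free resolution over the
local ring `S`. -/
def IsMinSyz (S : Type u) [CommRing S] [IsLocalRing S] :
    ℕ → ModuleCat.{u} S → ModuleCat.{u} S → Prop
  | 0, M, K => Nonempty (K ≃ₗ[S] M)
  | n+1, M, K => ∃ (F : ModuleCat.{u} S) (g : F →ₗ[S] M) (K' : ModuleCat.{u} S)
      (i : K' →ₗ[S] F),
      Module.Finite S F ∧ Module.Free S F ∧ Function.Surjective g ∧
      (LinearMap.ker g ≤ (IsLocalRing.maximalIdeal S) • (⊤ : Submodule S F)) ∧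
      Function.Injective i ∧ LinearMap.range i = LinearMap.ker g ∧
      IsMinSyz S n K' K

/-- `K` is an `n`-th syzygy of `M` in some projective resolution (over any ring). -/
def IsSyz : ℕ → ModuleCat.{u} R → ModuleCat.{u} R → Prop
  | 0, M, K => Nonempty (K ≃ₗ[R] M)
  | n+1, M, K => ∃ (F : ModuleCat.{u} R) (g : F →ₗ[R] M) (K' : ModuleCat.{u} R)
      (i : K' →ₗ[R] F),
      Module.Finite R F ∧ Module.Projective R F ∧ Function.Surjective g ∧
      Function.Injective i ∧ LinearMap.range i = LinearMap.ker g ∧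
      IsSyz n K' K

/-- `T` is (isomorphic to) the Auslander transpose of `M`, computed from a minimal
free presentation over the local ring `S`. -/
def IsTranspose (S : Type u) [CommRing S] [IsLocalRing S] (M T : ModuleCat.{u} S) : Prop :=
  ∃ (F1 F0 : ModuleCat.{u} S) (d : F1 →ₗ[S] F0) (e : F0 →ₗ[S] M),
    Module.Finite S F0 ∧ Module.Free S F0 ∧ Module.Finite S F1 ∧ Module.Free S F1 ∧
    Function.Surjective e ∧ LinearMap.range d = LinearMap.ker e ∧
    LinearMap.ker e ≤ (IsLocalRing.maximalIdeal S) • (⊤ : Submodule S F0) ∧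
    LinearMap.ker d ≤ (IsLocalRing.maximalIdeal S) • (⊤ : Submodule S F1) ∧
    Nonempty (T ≃ₗ[S] ((Module.Dual S F1) ⧸ LinearMap.range d.dualMap))

/-- `T` is (isomorphic to) `Tr Ω^n M` over the local ring `S`. -/
def IsTrOmega (S : Type u) [CommRing S] [IsLocalRing S] (n : ℕ) (M T : ModuleCat.{u} S) :
    Prop :=
  ∃ K : ModuleCat.{u} S, IsMinSyz S n M K ∧ IsTranspose S K T

/-- Resolving subcategory `𝒳` is dominant on `W ⊆ Spec R`. -/
def DominantOn (𝒳 : Set (ModuleCat.{u} R)) (W : Set (PrimeSpectrum R)) : Prop :=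
  ∀ p ∈ W, ∃ (n : ℕ) (K : ModuleCat.{u} (Localization.AtPrime p.asIdeal)),
    IsMinSyz (Localization.AtPrime p.asIdeal) n
      (ModuleCat.of (Localization.AtPrime p.asIdeal)
        (IsLocalRing.ResidueField (Localization.AtPrime p.asIdeal))) K ∧
    memAddLocal R 𝒳 p K

/-- Dominant resolving subcategory. -/
def Dominant (𝒳 : Set (ModuleCat.{u} R)) : Prop := DominantOn R 𝒳 Set.univ

/-- A (noetherian) local ring is Cohen-Macaulay if its depth equals its Krull dimension. -/
def IsCMLocalRing (S : Type u) [CommRing S] [IsLocalRing S] : Prop :=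
  IsNoetherianRing S ∧
    ((depthE S (IsLocalRing.maximalIdeal S) S : WithBot ℕ∞) = ringKrullDim S)

/-- A regular local ring: a noetherian local ring whose maximal ideal is generated by
`dim S` elements. -/
def IsRegLocalRing (S : Type u) [CommRing S] [IsLocalRing S] : Prop :=
  IsNoetherianRing S ∧ ∃ s : Finset S,
    Ideal.span (s : Set S) = IsLocalRing.maximalIdeal S ∧
    ringKrullDim S = (s.card : WithBot ℕ∞)

/-- The singular locus of `R`. -/
def SingLocus : Set (PrimeSpectrum R) :=
  {p | ¬ IsRegLocalRing (Localization.AtPrime p.asIdeal)}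

/-- A hypersurface local ring: the completion is a quotient of a regular local ring by
one element. -/
def IsHypersurfaceLocalRing (S : Type u) [CommRing S] [IsLocalRing S] : Prop :=
  ∃ (T : Type u) (_ : CommRing T) (_ : IsLocalRing T) (f : T),
    IsRegLocalRing T ∧
    Nonempty ((AdicCompletion (IsLocalRing.maximalIdeal S) S) ≃+* (T ⧸ Ideal.span {f}))

/-- A complete intersection local ring: the completion is a quotient of a regular local
ring by a regular sequence. -/
def IsCompleteIntersectionLocalRing (S : Type u) [CommRing S] [IsLocalRing S] : Prop :=
  ∃ (T : Type u) (_ : CommRing T) (_ : IsLocalRing T) (rs : List T),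
    IsRegLocalRing T ∧ RingTheory.Sequence.IsRegular T rs ∧
    Nonempty ((AdicCompletion (IsLocalRing.maximalIdeal S) S) ≃+*
      (T ⧸ Ideal.ofList rs))

/-- The subquotient `A / (A ⊓ B)` of two submodules, used for homology. -/
def subquot {S M : Type u} [CommRing S] [AddCommGroup M] [Module S M]
    (A B : Submodule S M) : Type u :=
  A ⧸ (B.comap A.subtype)

noncomputable instance {S M : Type u} [CommRing S] [AddCommGroup M] [Module S M]
    (A B : Submodule S M) : AddCommGroup (subquot A B) :=
  inferInstanceAs (AddCommGroup (A ⧸ (B.comap A.subtype)))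

noncomputable instance {S M : Type u} [CommRing S] [AddCommGroup M] [Module S M]
    (A B : Submodule S M) : Module S (subquot A B) :=
  inferInstanceAs (Module S (A ⧸ (B.comap A.subtype)))

/-- `E` is (isomorphic to) `Ext^{j+1}_S(M, S)`, computed from a finite free resolution. -/
def IsExtPos (S : Type u) [CommRing S] (j : ℕ) (M E : ModuleCat.{u} S) : Prop :=
  ∃ (F : ℕ → ModuleCat.{u} S) (d : ∀ i : ℕ, (F (i+1) : Type u) →ₗ[S] F i)
    (e : (F 0 : Type u) →ₗ[S] M),
    (∀ i, Module.Finite S (F i)) ∧ (∀ i, Module.Free S (F i)) ∧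
    Function.Surjective e ∧ LinearMap.range (d 0) = LinearMap.ker e ∧
    (∀ i, LinearMap.range (d (i+1)) = LinearMap.ker (d i)) ∧
    Nonempty (E ≃ₗ[S]
      subquot (LinearMap.ker ((d (j+1)).dualMap)) (LinearMap.range ((d j).dualMap)))

/-- `T` is (isomorphic to) `Tor_n^S(M, N)`, computed from a projective resolution of `M`. -/
def IsTor (S : Type u) [CommRing S] (n : ℕ) (M N T : ModuleCat.{u} S) : Prop :=
  ∃ (F : ℕ → ModuleCat.{u} S) (d : ∀ i : ℕ, (F (i+1) : Type u) →ₗ[S] F i)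
    (e : (F 0 : Type u) →ₗ[S] M),
    (∀ i, Module.Projective S (F i)) ∧
    Function.Surjective e ∧ LinearMap.range (d 0) = LinearMap.ker e ∧
    (∀ i, LinearMap.range (d (i+1)) = LinearMap.ker (d i)) ∧
    (match n with
      | 0 => Nonempty (T ≃ₗ[S] TensorProduct S M N)
      | (j+1) => Nonempty (T ≃ₗ[S]
          subquot (LinearMap.ker (LinearMap.rTensor (↥N) (d j)))
            (LinearMap.range (LinearMap.rTensor (↥N) (d (j+1))))))

/-- `idLE n M` : the injective dimension of `M` is at most `n`. -/
def idLE (S : Type u) [CommRing S] : ℕ → ModuleCat.{u} S → Prop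
  | 0, M => Module.Injective S M
  | n+1, M => ∃ (I C : ModuleCat.{u} S) (f : M →ₗ[S] I) (g : I →ₗ[S] C),
      IsSES f g ∧ Module.Injective S I ∧ idLE S n C

/-- `PD_0^n(R)` over a local ring: modules of projective dimension at most `n` that are
free on the punctured spectrum. -/
def PD0n [IsLocalRing R] (n : ℕ) : Set (ModuleCat.{u} R) :=
  {M | Module.Finite R M ∧ pdLE R n M ∧
    ∀ p : PrimeSpectrum R, p.asIdeal ≠ IsLocalRing.maximalIdeal R →
      Module.Free (Localization.AtPrime p.asIdeal) (LocalizedModule p.asIdeal.primeCompl M)}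

/-- `PD_0(R)` over a local ring: modules of finite projective dimension that are
free on the punctured spectrum. -/
def PD0 [IsLocalRing R] : Set (ModuleCat.{u} R) :=
  {M | Module.Finite R M ∧ (∃ n : ℕ, pdLE R n M) ∧
    ∀ p : PrimeSpectrum R, p.asIdeal ≠ IsLocalRing.maximalIdeal R →
      Module.Free (Localization.AtPrime p.asIdeal) (LocalizedModule p.asIdeal.primeCompl M)}

/-- The residue field of a local ring, as a bundled module. -/
noncomputable abbrev residueMod (S : Type u) [CommRing S] [IsLocalRing S] : ModuleCat.{u} S :=
  ModuleCat.of S (IsLocalRing.ResidueField S)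


/-- The map `ψ` defined by depth conditions:
`ψ(f) = { M ∈ mod R | depth M_p ≥ ht p - f(p) for all p }`. -/
def psiDepth (f : PrimeSpectrum R → ℕ) : Set (ModuleCat.{u} R) :=
  {M | Module.Finite R M ∧
    ∀ p : PrimeSpectrum R, heightE R p - (f p : ℕ∞) ≤ localDepth R p M}

/-!
Write `depth M ≥ t` for a module over a local ring with residue field `k` as the vanishing of
`Ext^i(k, M)` for `i < t`, so that the depth lemma is the long exact sequence.  It shows that `ψ(f)`
is resolving and contains `Ω^d k`.  For `φ(ψ(f)) = f`, a module of depth `ht p - f(p)` at `p` is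
`R/(x_1, …, x_{f(p)})` with a regular sequence in `p`, made free off `V(p)` by pulling back its
presentation along multiplication by elements of `p`.  Monotonicity of `φ(𝒳)` is the inequality
`depth M_q ≤ depth M_p + ht q - ht p` for `p ⊆ q`.

For `ψ(φ(𝒳)) = 𝒳` one shows `M ∈ 𝒳` by noetherian induction on an ideal `I` whose zero set contains
the nonfree locus of `M`.

* If `I` is primary to the maximal ideal, let `t` be the least depth in `𝒳`.  By descending
  induction on `s ≥ t`, `𝒳` contains the modules free on the punctured spectrum of depth at least
  `s`; the start `s = d` rests on `Ω^d k ∈ 𝒳`.  For the step, a module of depth `s` in `𝒳`, made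
  free on the punctured spectrum, is divided by a regular sequence of length `s` in its stable
  annihilator; the quotient contains `k`, so an `s`-th syzygy of `k` lies in `𝒳`.  Dividing `M` in
  the same way leaves an extension of a module of positive depth by one of finite length.
* Otherwise `I` has a minimal prime `p` with `R_p` regular, where maximal Cohen–Macaulay modules are
  free.  The local case over `R_p` makes `M_p` a direct summand of `X_p` with `X ∈ 𝒳`, and this is
  descended to `R` along pullbacks that raise the depth at `p`, until `M_p` is free and the
  induction hypothesis applies to a strictly larger ideal.
-/

/-! ### Short exact sequences and fiber products -/

section ShortExact

variable {S : Type u} [CommRing S]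
variable {A B C D M : Type u} [AddCommGroup A] [Module S A] [AddCommGroup B] [Module S B]
  [AddCommGroup C] [Module S C] [AddCommGroup D] [Module S D] [AddCommGroup M] [Module S M]

lemma IsSES.injective {f : A →ₗ[S] B} {g : B →ₗ[S] C} (h : IsSES f g) : Function.Injective f :=
  h.1

lemma IsSES.surjective {f : A →ₗ[S] B} {g : B →ₗ[S] C} (h : IsSES f g) : Function.Surjective g :=
  h.2.1

lemma IsSES.exact {f : A →ₗ[S] B} {g : B →ₗ[S] C} (h : IsSES f g) : Function.Exact f g :=
  LinearMap.exact_iff.2 h.2.2.symm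

lemma IsSES.apply_apply_eq_zero {f : A →ₗ[S] B} {g : B →ₗ[S] C} (h : IsSES f g) (x : A) :
    g (f x) = 0 :=
  h.exact.apply_apply_eq_zero x

lemma IsSES.exists_of_apply_eq_zero {f : A →ₗ[S] B} {g : B →ₗ[S] C} (h : IsSES f g) {y : B}
    (hy : g y = 0) : ∃ x, f x = y :=
  (h.exact y).1 hy

lemma isSES_of_forall {f : A →ₗ[S] B} {g : B →ₗ[S] C} (hf : Function.Injective f)
    (hg : Function.Surjective g) (hfg : ∀ x, g (f x) = 0)
    (hker : ∀ y, g y = 0 → ∃ x, f x = y) : IsSES f g := by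
  refine ⟨hf, hg, le_antisymm ?_ hker⟩
  rintro _ ⟨x, rfl⟩
  exact hfg x

lemma isSES_ker {g : B →ₗ[S] C} (hg : Function.Surjective g) :
    IsSES (LinearMap.ker g).subtype g :=
  ⟨Submodule.injective_subtype _, hg, Submodule.range_subtype _⟩

lemma isSES_mkQ (N : Submodule S B) : IsSES N.subtype N.mkQ :=
  ⟨Submodule.injective_subtype _, Submodule.mkQ_surjective _, by
    rw [Submodule.range_subtype, Submodule.ker_mkQ]⟩

lemma isSES_inl_snd : IsSES (LinearMap.inl S A B) (LinearMap.snd S A B) :=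
  ⟨LinearMap.inl_injective, LinearMap.snd_surjective, LinearMap.range_inl S A B⟩

open scoped Pointwise in
lemma isSES_lsmul_mkQ {x : S} (hx : IsSMulRegular A x) :
    IsSES (LinearMap.lsmul S A x) (Submodule.mkQ (x • (⊤ : Submodule S A))) :=
  ⟨hx, Submodule.mkQ_surjective _,
    (LinearMap.exact_iff.1 (LinearMap.exact_lsmul_mkQ_smul_top A x)).symm⟩

lemma IsSES.nonempty_equiv_ker {f : A →ₗ[S] B} {g : B →ₗ[S] C} (h : IsSES f g) :
    Nonempty (A ≃ₗ[S] LinearMap.ker g) :=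
  ⟨(LinearEquiv.ofInjective f h.injective).trans (LinearEquiv.ofEq _ _ h.2.2)⟩

lemma IsSES.exists_comp_eq {f : A →ₗ[S] B} {g : B →ₗ[S] C} (h : IsSES f g) (u : M →ₗ[S] B)
    (hu : ∀ x, g (u x) = 0) : ∃ v : M →ₗ[S] A, ∀ x, f (v x) = u x := by
  have hu' : ∀ x, u x ∈ LinearMap.range f := fun x ↦ h.2.2 ▸ hu x
  refine ⟨(LinearEquiv.ofInjective f h.injective).symm ∘ₗ u.codRestrict _ hu', fun x ↦ ?_⟩
  exact congrArg Subtype.val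
    ((LinearEquiv.ofInjective f h.injective).apply_symm_apply ⟨u x, hu' x⟩)

lemma IsSES.comp_equiv {f : A →ₗ[S] B} {g : B →ₗ[S] C} (h : IsSES f g) (e : D ≃ₗ[S] A) :
    IsSES (f ∘ₗ e.toLinearMap) g :=
  ⟨h.injective.comp e.injective, h.surjective, by rw [LinearEquiv.range_comp, h.2.2]⟩

lemma IsSES.units_smul {f : A →ₗ[S] B} {g : B →ₗ[S] C} (h : IsSES f g) (w : Sˣ) :
    IsSES ((w : S) • f) g := by
  convert h.comp_equiv (LinearEquiv.smulOfUnit w)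
  ext x
  exact (map_smul f (w : S) x).symm

lemma IsSES.prodMap_id {f : A →ₗ[S] B} {g : B →ₗ[S] C} (h : IsSES f g) :
    IsSES (f.prodMap (LinearMap.id : D →ₗ[S] D)) (g ∘ₗ LinearMap.fst S B D) := by
  refine isSES_of_forall (h.injective.prodMap Function.injective_id)
    (h.surjective.comp Prod.fst_surjective) (fun x ↦ h.apply_apply_eq_zero x.1) fun y hy ↦ ?_
  obtain ⟨x, hx⟩ := h.exists_of_apply_eq_zero hy
  exact ⟨(x, y.2), Prod.ext hx rfl⟩

lemma IsSES.exists_desc {f : A →ₗ[S] B} {g : B →ₗ[S] C} (h : IsSES f g) (u : B →ₗ[S] M)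
    (hu : ∀ x, u (f x) = 0) : ∃ v : C →ₗ[S] M, ∀ x, v (g x) = u x := by
  have hker : LinearMap.ker g ≤ LinearMap.ker u := by
    rw [← h.2.2]
    rintro _ ⟨x, rfl⟩
    exact hu x
  let e := g.quotKerEquivOfSurjective h.surjective
  refine ⟨(LinearMap.ker g).liftQ u hker ∘ₗ e.symm, fun x ↦ ?_⟩
  have he : e.symm (g x) = Submodule.Quotient.mk x := e.symm_apply_eq.2 rfl
  simp [he]

lemma IsSES.bijective_of_comp_eq {f : A →ₗ[S] B} {g : B →ₗ[S] C} {f' : A →ₗ[S] D}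
    {g' : D →ₗ[S] C} (h : IsSES f g) (h' : IsSES f' g') {u : B →ₗ[S] D}
    (hf : ∀ x, u (f x) = f' x) (hg : ∀ y, g' (u y) = g y) : Function.Bijective u := by
  constructor
  · refine (injective_iff_map_eq_zero u).2 fun y hy ↦ ?_
    obtain ⟨x, rfl⟩ := h.exists_of_apply_eq_zero (y := y) (by rw [← hg, hy, map_zero])
    rw [h'.injective ((hf x).symm.trans (hy.trans (map_zero f').symm)), map_zero]
  · intro z
    obtain ⟨y, hy⟩ := h.surjective (g' z)
    obtain ⟨x, hx⟩ := h'.exists_of_apply_eq_zero (y := z - u y) (by rw [map_sub, hg, hy, sub_self])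
    exact ⟨f x + y, by rw [map_add, hf, hx, sub_add_cancel]⟩

lemma IsSES.prod_neg_injective {f : A →ₗ[S] B} {g : B →ₗ[S] C} (h : IsSES f g)
    (u : A →ₗ[S] D) : Function.Injective (u.prod (-f)) :=
  fun _ _ hxy ↦ h.injective (neg_injective (congrArg Prod.snd hxy))

lemma IsSES.exists_isSES_pushout {f : A →ₗ[S] B} {g : B →ₗ[S] C} (h : IsSES f g)
    {u : A →ₗ[S] D} {Q : D × B →ₗ[S] M} (hQ : IsSES (u.prod (-f)) Q) :
    ∃ r : M →ₗ[S] C, (∀ x, r (Q x) = g x.2) ∧ IsSES (Q ∘ₗ LinearMap.inl S D B) r := by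
  obtain ⟨r, hr⟩ := hQ.exists_desc (g ∘ₗ LinearMap.snd S D B)
    fun x ↦ by simp [h.apply_apply_eq_zero]
  refine ⟨r, hr, isSES_of_forall ?_ (fun c ↦ ?_) (fun x ↦ (hr _).trans (map_zero g)) fun y hy ↦ ?_⟩
  · refine (injective_iff_map_eq_zero _).2 fun x hx ↦ ?_
    obtain ⟨a, ha⟩ := hQ.exists_of_apply_eq_zero hx
    obtain rfl : a = 0 := h.injective
      ((neg_eq_zero.1 (congrArg Prod.snd ha)).trans (map_zero f).symm)
    exact (congrArg Prod.fst ha).symm.trans (map_zero u)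
  · obtain ⟨b, rfl⟩ := h.surjective c
    exact ⟨Q (0, b), hr _⟩
  · obtain ⟨⟨x, b⟩, rfl⟩ := hQ.surjective y
    obtain ⟨a, rfl⟩ := h.exists_of_apply_eq_zero ((hr _).symm.trans hy)
    have ha : LinearMap.inl S D B (x + u a) = (x, f a) + u.prod (-f) a := by simp
    exact ⟨x + u a, by
      rw [LinearMap.comp_apply, ha, map_add, hQ.apply_apply_eq_zero, add_zero]⟩

lemma IsSES.finite_middle {f : A →ₗ[S] B} {g : B →ₗ[S] C} (h : IsSES f g) [Module.Finite S A]
    [Module.Finite S C] : Module.Finite S B := by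
  have : Module.Finite S (B ⧸ LinearMap.range f) := Module.Finite.equiv
    ((Submodule.quotEquivOfEq _ _ h.2.2).trans (g.quotKerEquivOfSurjective h.surjective)).symm
  exact Module.Finite.of_submodule_quotient (LinearMap.range f)

lemma IsSES.finite_left [IsNoetherianRing S] {f : A →ₗ[S] B} {g : B →ₗ[S] C} (h : IsSES f g)
    [Module.Finite S B] : Module.Finite S A :=
  Module.Finite.of_injective f h.injective

lemma exists_lift_of_projective [Module.Projective S A] {g : B →ₗ[S] C}
    (hg : Function.Surjective g) (f : A →ₗ[S] C) : ∃ l : A →ₗ[S] B, ∀ x, g (l x) = f x := by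
  obtain ⟨l, hl⟩ := Module.projective_lifting_property g f hg
  exact ⟨l, LinearMap.congr_fun hl⟩

lemma nonempty_equiv_prod_ker {a : A →ₗ[S] B} {b : B →ₗ[S] A} (h : ∀ x, b (a x) = x) :
    Nonempty (B ≃ₗ[S] A × LinearMap.ker b) := by
  refine ⟨LinearEquiv.ofBijective (b.prod ((LinearMap.id - a ∘ₗ b).codRestrict (LinearMap.ker b)
    (fun x ↦ by simp [h]))) ⟨?_, ?_⟩⟩
  · refine (injective_iff_map_eq_zero _).2 fun x hx ↦ ?_
    have hbx : b x = 0 := congrArg Prod.fst hx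
    have hx' : x - a (b x) = 0 := congrArg (fun z ↦ (z.2 : B)) hx
    simpa [hbx] using hx'
  · rintro ⟨y, ⟨z, hz⟩⟩
    have hz' : b z = 0 := hz
    refine ⟨a y + z, Prod.ext ?_ (Subtype.ext ?_)⟩ <;> simp [h, hz']

lemma isSES_ker_comp {g : B →ₗ[S] C} {p : A →ₗ[S] B} (hp : Function.Surjective p) :
    IsSES (Submodule.inclusion (LinearMap.ker_le_ker_comp p g))
      (p.restrict (p := LinearMap.ker (g ∘ₗ p)) (q := LinearMap.ker g) fun _ hx ↦ hx) := by
  refine isSES_of_forall (Submodule.inclusion_injective _) ?_ ?_ ?_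
  · rintro ⟨y, hy⟩
    obtain ⟨x, rfl⟩ := hp y
    exact ⟨⟨x, hy⟩, rfl⟩
  · rintro ⟨x, hx⟩
    exact Subtype.ext hx
  · rintro ⟨x, hx⟩ h0
    exact ⟨⟨x, congrArg Subtype.val h0⟩, rfl⟩

section Horseshoe

variable {P Q : Type u} [AddCommGroup P] [Module S P] [AddCommGroup Q] [Module S Q]
  {f : A →ₗ[S] B} {g : B →ₗ[S] C} {a : P →ₗ[S] A} {c : Q →ₗ[S] C} {l : Q →ₗ[S] B}

lemma IsSES.coprod_surjective (h : IsSES f g) (ha : Function.Surjective a)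
    (hc : Function.Surjective c) (hl : ∀ q, g (l q) = c q) :
    Function.Surjective ((f ∘ₗ a).coprod l) := by
  intro y
  obtain ⟨q, hq⟩ := hc (g y)
  obtain ⟨x, hx⟩ := h.exists_of_apply_eq_zero (y := y - l q) (by rw [map_sub, hl, hq, sub_self])
  obtain ⟨p, rfl⟩ := ha x
  exact ⟨(p, q), by simp [hx]⟩

lemma IsSES.snd_mem_ker (h : IsSES f g) (hl : ∀ q, g (l q) = c q) {x : P × Q}
    (hx : x ∈ LinearMap.ker ((f ∘ₗ a).coprod l)) : LinearMap.snd S P Q x ∈ LinearMap.ker c := by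
  have hgx : g (f (a x.1) + l x.2) = 0 := (congrArg g hx).trans (map_zero g)
  rw [map_add, h.apply_apply_eq_zero, hl, zero_add] at hgx
  exact hgx

lemma isSES_horseshoe (h : IsSES f g) (ha : Function.Surjective a) (hl : ∀ q, g (l q) = c q) :
    IsSES
      ((LinearMap.inl S P Q).restrict (p := LinearMap.ker a)
        (q := LinearMap.ker ((f ∘ₗ a).coprod l)) fun x hx ↦ by
          simp [LinearMap.mem_ker.1 hx])
      ((LinearMap.snd S P Q).restrict (p := LinearMap.ker ((f ∘ₗ a).coprod l))
        (q := LinearMap.ker c) fun _ hx ↦ h.snd_mem_ker hl hx) := by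
  refine isSES_of_forall ?_ ?_ (fun _ ↦ rfl) ?_
  · intro x y hxy
    exact Subtype.ext (congrArg (fun z ↦ z.1.1) hxy)
  · rintro ⟨q, hq⟩
    obtain ⟨x, hx⟩ := h.exists_of_apply_eq_zero (y := -l q)
      (by rw [map_neg, hl, LinearMap.mem_ker.1 hq, neg_zero])
    obtain ⟨p, rfl⟩ := ha x
    exact ⟨⟨(p, q), by simp [hx]⟩, rfl⟩
  · rintro ⟨⟨p, q⟩, hpq⟩ hq
    obtain rfl : q = 0 := congrArg Subtype.val hq
    have hfa : f (a p) + l 0 = 0 := hpq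
    exact ⟨⟨p, h.injective (by simpa using hfa)⟩, rfl⟩

end Horseshoe

/-- The fiber product `B ×_D C` of two linear maps with common codomain. -/
def fiberProduct (g : B →ₗ[S] D) (h : C →ₗ[S] D) : Submodule S (B × C) :=
  LinearMap.eqLocus (g ∘ₗ LinearMap.fst S B C) (h ∘ₗ LinearMap.snd S B C)

namespace fiberProduct

variable {g : B →ₗ[S] D} {h : C →ₗ[S] D}

lemma mem_iff {x : B × C} : x ∈ fiberProduct g h ↔ g x.1 = h x.2 := Iff.rfl

variable (g h) in
/-- The projection `B ×_D C → B`. -/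
def fst : fiberProduct g h →ₗ[S] B := LinearMap.fst S B C ∘ₗ (fiberProduct g h).subtype

variable (g h) in
/-- The projection `B ×_D C → C`. -/
def snd : fiberProduct g h →ₗ[S] C := LinearMap.snd S B C ∘ₗ (fiberProduct g h).subtype

/-- The map into `B ×_D C` given by the universal property. -/
def lift (a : A →ₗ[S] B) (b : A →ₗ[S] C) (hab : ∀ x, g (a x) = h (b x)) :
    A →ₗ[S] fiberProduct g h :=
  (a.prod b).codRestrict (fiberProduct g h) hab

@[simp] lemma fst_apply (x : fiberProduct g h) : fst g h x = x.1.1 := rfl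

@[simp] lemma snd_apply (x : fiberProduct g h) : snd g h x = x.1.2 := rfl

@[simp] lemma coe_lift (a : A →ₗ[S] B) (b : A →ₗ[S] C) (hab : ∀ x, g (a x) = h (b x)) (x : A) :
    (lift a b hab x).1 = (a x, b x) := rfl

lemma ext {x y : fiberProduct g h} (h₁ : x.1.1 = y.1.1) (h₂ : x.1.2 = y.1.2) : x = y :=
  Subtype.ext (Prod.ext h₁ h₂)

lemma isSES_snd {f : A →ₗ[S] B} (hs : IsSES f g) (h : C →ₗ[S] D) :
    IsSES (lift (g := g) (h := h) f 0 fun _ ↦ by simp [hs.apply_apply_eq_zero]) (snd g h) := by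
  refine isSES_of_forall (fun x y hxy ↦ hs.injective (congrArg (fun z ↦ z.1.1) hxy)) ?_
    (fun _ ↦ by simp) ?_
  · intro c
    obtain ⟨b, hb⟩ := hs.surjective (h c)
    exact ⟨⟨(b, c), hb⟩, rfl⟩
  · rintro ⟨⟨b, c⟩, hbc⟩ hc
    obtain rfl : c = 0 := hc
    obtain ⟨x, rfl⟩ := hs.exists_of_apply_eq_zero ((mem_iff.1 hbc).trans (map_zero h))
    exact ⟨x, rfl⟩

lemma isSES_fst {f : A →ₗ[S] C} (hs : IsSES f h) (g : B →ₗ[S] D) :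
    IsSES (lift (g := g) (h := h) 0 f fun _ ↦ by simp [hs.apply_apply_eq_zero]) (fst g h) := by
  refine isSES_of_forall (fun x y hxy ↦ hs.injective (congrArg (fun z ↦ z.1.2) hxy)) ?_
    (fun _ ↦ by simp) ?_
  · intro b
    obtain ⟨c, hc⟩ := hs.surjective (g b)
    exact ⟨⟨(b, c), hc.symm⟩, rfl⟩
  · rintro ⟨⟨b, c⟩, hbc⟩ hb
    obtain rfl : b = 0 := hb
    obtain ⟨x, rfl⟩ := hs.exists_of_apply_eq_zero ((mem_iff.1 hbc).symm.trans (map_zero g))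
    exact ⟨x, rfl⟩

lemma isSES_subtype (hg : Function.Surjective g) (h : C →ₗ[S] D) :
    IsSES (fiberProduct g h).subtype (g.coprod (-h)) := by
  refine isSES_of_forall (Submodule.injective_subtype _) ?_ ?_ ?_
  · intro d
    obtain ⟨b, rfl⟩ := hg d
    exact ⟨(b, 0), by simp⟩
  · rintro ⟨⟨b, c⟩, hbc⟩
    simp [mem_iff.1 hbc]
  · rintro ⟨b, c⟩ hbc
    exact ⟨⟨(b, c), mem_iff.2 (by simpa [← sub_eq_add_neg, sub_eq_zero] using hbc)⟩, rfl⟩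

end fiberProduct

end ShortExact

/-! ### Vanishing of Ext and cohomological depth -/

section ExtVanishing

open Abelian

variable {S : Type u} [CommRing S] {N : ModuleCat.{u} S} {i : ℕ}
variable {A B C : Type u} [AddCommGroup A] [Module S A] [AddCommGroup B] [Module S B]
  [AddCommGroup C] [Module S C]

lemma IsSES.comp_eq_zero {f : A →ₗ[S] B} {g : B →ₗ[S] C} (h : IsSES f g) : g ∘ₗ f = 0 :=
  LinearMap.ext h.apply_apply_eq_zero

lemma IsSES.shortExact {f : A →ₗ[S] B} {g : B →ₗ[S] C} (h : IsSES f g) :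
    (ModuleCat.shortComplexOfCompEqZero f g h.comp_eq_zero).ShortExact :=
  ModuleCat.shortComplex_shortExact _ h.exact h.injective h.surjective

lemma IsSES.subsingleton_ext_middle {f : A →ₗ[S] B} {g : B →ₗ[S] C} (h : IsSES f g)
    (hA : Subsingleton (Ext N (ModuleCat.of S A) i))
    (hC : Subsingleton (Ext N (ModuleCat.of S C) i)) :
    Subsingleton (Ext N (ModuleCat.of S B) i) := by
  refine subsingleton_of_forall_eq 0 fun x ↦ ?_
  obtain ⟨y, rfl⟩ := Ext.covariant_sequence_exact₂ _ h.shortExact x (hC.elim _ _)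
  rw [hA.elim y 0, Ext.zero_comp]

lemma IsSES.subsingleton_ext_right {f : A →ₗ[S] B} {g : B →ₗ[S] C} (h : IsSES f g)
    (hA : Subsingleton (Ext N (ModuleCat.of S A) (i + 1)))
    (hB : Subsingleton (Ext N (ModuleCat.of S B) i)) :
    Subsingleton (Ext N (ModuleCat.of S C) i) := by
  refine subsingleton_of_forall_eq 0 fun x ↦ ?_
  obtain ⟨y, rfl⟩ := Ext.covariant_sequence_exact₃ _ h.shortExact x rfl (hA.elim _ _)
  rw [hB.elim y 0, Ext.zero_comp]

lemma IsSES.subsingleton_ext_left {f : A →ₗ[S] B} {g : B →ₗ[S] C} (h : IsSES f g)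
    (hB : Subsingleton (Ext N (ModuleCat.of S B) (i + 1)))
    (hC : Subsingleton (Ext N (ModuleCat.of S C) i)) :
    Subsingleton (Ext N (ModuleCat.of S A) (i + 1)) := by
  refine subsingleton_of_forall_eq 0 fun x ↦ ?_
  obtain ⟨y, rfl⟩ := Ext.covariant_sequence_exact₁ _ h.shortExact x (hB.elim _ _) rfl
  rw [hC.elim y 0, Ext.zero_comp]

lemma subsingleton_ext_zero_iff :
    Subsingleton (Ext N (ModuleCat.of S A) 0) ↔ Subsingleton (N →ₗ[S] A) :=
  (Ext.addEquiv₀.trans ModuleCat.homAddEquiv).subsingleton_congr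

lemma subsingleton_ext_zero_of_injective {f : A →ₗ[S] B} (hf : Function.Injective f)
    (hB : Subsingleton (Ext N (ModuleCat.of S B) 0)) :
    Subsingleton (Ext N (ModuleCat.of S A) 0) := by
  rw [subsingleton_ext_zero_iff] at hB ⊢
  refine ⟨fun u v ↦ LinearMap.ext fun x ↦ hf ?_⟩
  exact LinearMap.congr_fun (hB.elim (f ∘ₗ u) (f ∘ₗ v)) x

lemma ext_comp_mk₀_comp_mk₀_of_retract {a : A →ₗ[S] B} {b : B →ₗ[S] A}
    (h : b ∘ₗ a = LinearMap.id) (x : Ext N (ModuleCat.of S A) i) :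
    (x.comp (Ext.mk₀ (ModuleCat.ofHom a)) (add_zero i)).comp
      (Ext.mk₀ (ModuleCat.ofHom b)) (add_zero i) = x := by
  rw [Ext.comp_assoc_of_third_deg_zero, Ext.mk₀_comp_mk₀, ← ModuleCat.ofHom_comp, h,
    ModuleCat.ofHom_id, Ext.comp_mk₀_id]

lemma subsingleton_ext_of_retract {a : A →ₗ[S] B} {b : B →ₗ[S] A} (h : b ∘ₗ a = LinearMap.id)
    (hB : Subsingleton (Ext N (ModuleCat.of S B) i)) :
    Subsingleton (Ext N (ModuleCat.of S A) i) := by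
  refine subsingleton_of_forall_eq 0 fun x ↦ ?_
  rw [← ext_comp_mk₀_comp_mk₀_of_retract h x, hB.elim (x.comp _ _) 0, Ext.zero_comp]

lemma subsingleton_ext_of_subsingleton [Subsingleton A] :
    Subsingleton (Ext N (ModuleCat.of S A) i) := by
  refine subsingleton_of_forall_eq 0 fun x ↦ ?_
  have hid : 𝟙 (ModuleCat.of S A) = 0 := by
    ext y
    exact Subsingleton.elim _ _
  rw [← Ext.comp_mk₀_id x, hid, Ext.mk₀_zero, Ext.comp_zero]

lemma ext_comp_mk₀_smul_id_eq_zero {c : S} (hc : c ∈ Module.annihilator S N)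
    (x : Ext N (ModuleCat.of S A) i) :
    x.comp (Ext.mk₀ (ModuleCat.ofHom (c • LinearMap.id : A →ₗ[S] A))) (add_zero i) = 0 :=
  congrArg (fun φ ↦ φ.hom x)
    (Ext.postcomp_smul_id_eq_zero_of_mem_annihilator (M := ModuleCat.of S A) hc i)

/-- If the quotient map splits up to a scalar that annihilates `N`, then `Ext N C i` embeds into
`Ext N A i`, although `C` is a direct summand of the middle term only. -/
lemma IsSES.subsingleton_ext_of_smul_section {f : A →ₗ[S] B} {g : B →ₗ[S] C} (h : IsSES f g)
    {s : C →ₗ[S] B} {r : B →ₗ[S] C} (hrs : r ∘ₗ s = LinearMap.id) {c : S}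
    (hc : c ∈ Module.annihilator S N) (hgs : g ∘ₗ s = c • LinearMap.id)
    (hA : Subsingleton (Ext N (ModuleCat.of S A) i)) :
    Subsingleton (Ext N (ModuleCat.of S C) i) := by
  refine subsingleton_of_forall_eq 0 fun x ↦ ?_
  have hx : (x.comp (Ext.mk₀ (ModuleCat.ofHom s)) (add_zero i)).comp
      (Ext.mk₀ (ModuleCat.ofHom g)) (add_zero i) = 0 := by
    rw [Ext.comp_assoc_of_third_deg_zero, Ext.mk₀_comp_mk₀, ← ModuleCat.ofHom_comp, hgs]
    exact ext_comp_mk₀_smul_id_eq_zero hc x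
  obtain ⟨y, hy⟩ := Ext.covariant_sequence_exact₂ _ h.shortExact _ hx
  rw [← ext_comp_mk₀_comp_mk₀_of_retract hrs x, ← hy, hA.elim y 0, Ext.zero_comp, Ext.zero_comp]

end ExtVanishing

section Depth

open Abelian RingTheory.Sequence

variable (S : Type u) [CommRing S] [IsLocalRing S]

/-- The depth of `M` is at least `t`, expressed through Rees' theorem: `Ext^i(k, M)` vanishes for
`i < t`. Unlike a supremum of lengths of regular sequences this passes along long exact
sequences. -/
def DepthGE (t : ℕ) (M : Type u) [AddCommGroup M] [Module S M] : Prop :=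
  ∀ i < t, Subsingleton (Ext (residueMod S) (ModuleCat.of S M) i)

variable {S}
variable {A B C : Type u} [AddCommGroup A] [Module S A] [AddCommGroup B] [Module S B]
  [AddCommGroup C] [Module S C] {s t : ℕ}

lemma annihilator_residueMod :
    Module.annihilator S (residueMod S) = IsLocalRing.maximalIdeal S :=
  Ideal.annihilator_quotient

instance : Module.Finite S (IsLocalRing.ResidueField S) :=
  inferInstanceAs (Module.Finite S (S ⧸ IsLocalRing.maximalIdeal S))

lemma subsingleton_ext_residueMod_zero_iff :
    Subsingleton (Ext (residueMod S) (ModuleCat.of S A) 0) ↔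
      ∀ x : A, (∀ r ∈ IsLocalRing.maximalIdeal S, r • x = 0) → x = 0 := by
  rw [subsingleton_ext_zero_iff]
  constructor
  · intro h x hx
    have hle : IsLocalRing.maximalIdeal S ≤ LinearMap.ker (LinearMap.toSpanSingleton S A x) :=
      fun r hr ↦ by simpa using hx r hr
    have h0 : Submodule.liftQ _ _ hle = 0 := h.elim _ _
    have h1 := LinearMap.congr_fun h0 (Submodule.Quotient.mk 1)
    rwa [Submodule.liftQ_apply, LinearMap.toSpanSingleton_apply, one_smul,
      LinearMap.zero_apply] at h1
  · intro h
    refine subsingleton_of_forall_eq 0 fun φ ↦ LinearMap.ext fun y ↦ h _ fun r hr ↦ ?_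
    rw [← map_smul, Module.mem_annihilator.1 (annihilator_residueMod.ge hr), map_zero]

namespace DepthGE

lemma zero : DepthGE S 0 A := fun i hi ↦ absurd hi (Nat.not_lt_zero i)

lemma mono (h : s ≤ t) (hA : DepthGE S t A) : DepthGE S s A := fun i hi ↦ hA i (hi.trans_le h)

lemma of_retract {a : A →ₗ[S] B} {b : B →ₗ[S] A} (h : b ∘ₗ a = LinearMap.id)
    (hB : DepthGE S t B) : DepthGE S t A :=
  fun i hi ↦ subsingleton_ext_of_retract h (hB i hi)

lemma of_equiv (e : A ≃ₗ[S] B) (hB : DepthGE S t B) : DepthGE S t A :=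
  hB.of_retract (a := e.toLinearMap) (b := e.symm.toLinearMap) (by ext; simp)

lemma of_subsingleton [Subsingleton A] : DepthGE S t A :=
  fun _ _ ↦ subsingleton_ext_of_subsingleton

lemma middle {f : A →ₗ[S] B} {g : B →ₗ[S] C} (h : IsSES f g) (hA : DepthGE S t A)
    (hC : DepthGE S t C) : DepthGE S t B :=
  fun i hi ↦ h.subsingleton_ext_middle (hA i hi) (hC i hi)

lemma right {f : A →ₗ[S] B} {g : B →ₗ[S] C} (h : IsSES f g) (hA : DepthGE S (t + 1) A)
    (hB : DepthGE S t B) : DepthGE S t C :=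
  fun i hi ↦ h.subsingleton_ext_right (hA (i + 1) (Nat.succ_lt_succ hi)) (hB i hi)

lemma left {f : A →ₗ[S] B} {g : B →ₗ[S] C} (h : IsSES f g) (hB : DepthGE S (t + 1) B)
    (hC : DepthGE S t C) : DepthGE S (t + 1) A
  | 0, hi => subsingleton_ext_zero_of_injective h.injective (hB 0 hi)
  | i + 1, hi => h.subsingleton_ext_left (hB _ hi) (hC i (Nat.lt_of_succ_lt_succ hi))

lemma of_smul_section {f : A →ₗ[S] B} {g : B →ₗ[S] C} (h : IsSES f g) {s : C →ₗ[S] B}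
    {r : B →ₗ[S] C} (hrs : r ∘ₗ s = LinearMap.id) {c : S} (hc : c ∈ IsLocalRing.maximalIdeal S)
    (hgs : g ∘ₗ s = c • LinearMap.id) (hA : DepthGE S t A) : DepthGE S t C :=
  fun i hi ↦ h.subsingleton_ext_of_smul_section hrs (annihilator_residueMod.ge hc) hgs (hA i hi)

lemma prod (hA : DepthGE S t A) (hB : DepthGE S t B) : DepthGE S t (A × B) :=
  middle isSES_inl_snd hA hB

lemma pi (hS : DepthGE S t S) (n : ℕ) : DepthGE S t (Fin n → S) := by
  induction n with
  | zero => exact of_subsingleton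
  | succ n ih =>
    exact (hS.prod ih).of_equiv (Fin.consLinearEquiv S (fun _ : Fin (n + 1) ↦ S)).symm

lemma of_projective (hS : DepthGE S t S) [Module.Finite S A] [Module.Projective S A] :
    DepthGE S t A := by
  obtain ⟨n, f, hf⟩ := Module.Finite.exists_fin' S A
  obtain ⟨g, hg⟩ := Module.projective_lifting_property f LinearMap.id hf
  exact (hS.pi n).of_retract hg

lemma succ_iff_quotSMulTop {x : S} (hx : IsSMulRegular A x)
    (hm : x ∈ IsLocalRing.maximalIdeal S) :
    DepthGE S (t + 1) A ↔ DepthGE S t (QuotSMulTop x A) := by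
  refine ⟨fun h ↦ right (isSES_lsmul_mkQ hx) h (h.mono t.le_succ), fun h i hi ↦ ?_⟩
  cases i with
  | zero =>
    exact subsingleton_ext_residueMod_zero_iff.2 fun z hz ↦ hx (by simpa using hz x hm)
  | succ i =>
    refine subsingleton_of_forall_eq 0 fun y ↦ ?_
    have hxy : y.comp (Ext.mk₀ (ModuleCat.ofHom (LinearMap.lsmul S A x))) (add_zero _) = 0 :=
      ext_comp_mk₀_smul_id_eq_zero (annihilator_residueMod.ge hm) y
    obtain ⟨z, rfl⟩ := Ext.covariant_sequence_exact₁ _ (isSES_lsmul_mkQ hx).shortExact y hxy rfl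
    rw [(h i (Nat.lt_of_succ_lt_succ hi)).elim z 0, Ext.zero_comp]

lemma exists_isSMulRegular [IsNoetherianRing S] [Module.Finite S A] (h : DepthGE S (t + 1) A) :
    ∃ x ∈ IsLocalRing.maximalIdeal S, IsSMulRegular A x := by
  have h0 := subsingleton_ext_zero_iff.1 (h 0 t.succ_pos)
  obtain ⟨x, hx, hreg⟩ := IsSMulRegular.subsingleton_linearMap_iff.1 h0
  exact ⟨x, annihilator_residueMod.le hx, hreg⟩

lemma of_isWeaklyRegular {rs : List S} (hrs : ∀ r ∈ rs, r ∈ IsLocalRing.maximalIdeal S)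
    (h : IsWeaklyRegular A rs) : DepthGE S rs.length A := by
  induction rs generalizing A with
  | nil => exact zero
  | cons r rs ih =>
    rw [isWeaklyRegular_cons_iff] at h
    rw [List.forall_mem_cons] at hrs
    exact (succ_iff_quotSMulTop h.1 hrs.1).2 (ih hrs.2 h.2)

lemma exists_isWeaklyRegular [IsNoetherianRing S] [Module.Finite S A] (h : DepthGE S t A) :
    ∃ rs : List S, (∀ r ∈ rs, r ∈ IsLocalRing.maximalIdeal S) ∧ IsWeaklyRegular A rs ∧
      rs.length = t := by
  induction t generalizing A with
  | zero => exact ⟨[], by simp, IsWeaklyRegular.nil S A, rfl⟩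
  | succ t ih =>
    obtain ⟨x, hx, hreg⟩ := h.exists_isSMulRegular
    obtain ⟨rs, hmem, hrs, rfl⟩ := ih ((succ_iff_quotSMulTop hreg hx).1 h)
    exact ⟨x :: rs, List.forall_mem_cons.2 ⟨hx, hmem⟩,
      (isWeaklyRegular_cons_iff _ _ _).2 ⟨hreg, hrs⟩, rfl⟩

end DepthGE

lemma le_depthE_iff [IsNoetherianRing S] [Module.Finite S A] :
    (t : ℕ∞) ≤ depthE S (IsLocalRing.maximalIdeal S) A ↔ DepthGE S t A := by
  constructor
  · intro h
    cases t with
    | zero => exact DepthGE.zero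
    | succ t =>
      have hlt : (t : ℕ∞) < depthE S (IsLocalRing.maximalIdeal S) A :=
        lt_of_lt_of_le (by exact_mod_cast Nat.lt_succ_self t) h
      obtain ⟨_, ⟨rs, hmem, hreg, rfl⟩, hrs⟩ := lt_sSup_iff.1 hlt
      exact (DepthGE.of_isWeaklyRegular hmem hreg).mono (by exact_mod_cast hrs)
  · intro h
    obtain ⟨rs, hmem, hreg, rfl⟩ := h.exists_isWeaklyRegular
    exact le_sSup ⟨rs, hmem, hreg, rfl⟩

end Depth

/-! ### Resolving subcategories -/

section Resolving

variable {S : Type u} [CommRing S] {𝒴 𝒵 : Set (ModuleCat.{u} S)}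
variable {A B C P : Type u} [AddCommGroup A] [Module S A] [AddCommGroup B] [Module S B]
  [AddCommGroup C] [Module S C] [AddCommGroup P] [Module S P]

namespace IsResolving

lemma finite (hY : IsResolving S 𝒴) (h : ModuleCat.of S A ∈ 𝒴) : Module.Finite S A :=
  hY.fg _ h

lemma of_equiv (hY : IsResolving S 𝒴) (e : A ≃ₗ[S] B) (h : ModuleCat.of S A ∈ 𝒴) :
    ModuleCat.of S B ∈ 𝒴 :=
  hY.iso_closed (.of S A) (.of S B) ⟨e⟩ h

lemma of_projective (hY : IsResolving S 𝒴) [Module.Finite S A] [Module.Projective S A] :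
    ModuleCat.of S A ∈ 𝒴 :=
  hY.proj_mem (.of S A) ‹_› ‹_›

lemma of_retract (hY : IsResolving S 𝒴) {a : A →ₗ[S] B} {b : B →ₗ[S] A}
    (h : ∀ x, b (a x) = x) (hB : ModuleCat.of S B ∈ 𝒴) : ModuleCat.of S A ∈ 𝒴 := by
  obtain ⟨e⟩ := nonempty_equiv_prod_ker h
  exact hY.summand_closed (.of S A) (.of S (LinearMap.ker b)) (hY.of_equiv e hB)

lemma of_extension (hY : IsResolving S 𝒴) {f : A →ₗ[S] B} {g : B →ₗ[S] C} (h : IsSES f g)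
    (hA : ModuleCat.of S A ∈ 𝒴) (hC : ModuleCat.of S C ∈ 𝒴) : ModuleCat.of S B ∈ 𝒴 :=
  hY.ext_closed (.of S A) (.of S B) (.of S C) f g h hA hC

lemma prod (hY : IsResolving S 𝒴) (hA : ModuleCat.of S A ∈ 𝒴) (hB : ModuleCat.of S B ∈ 𝒴) :
    ModuleCat.of S (A × B) ∈ 𝒴 :=
  hY.of_extension isSES_inl_snd hA hB

lemma of_syzygy [IsNoetherianRing S] (hY : IsResolving S 𝒴) [Module.Finite S B]
    [Module.Projective S B] {f : A →ₗ[S] B} {g : B →ₗ[S] C} (h : IsSES f g)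
    (hC : ModuleCat.of S C ∈ 𝒴) : ModuleCat.of S A ∈ 𝒴 :=
  hY.syzygy_closed (.of S A) (.of S B) (.of S C) f g h h.finite_left ‹_› ‹_› hC

/-- The fiber product of `g` and `p` is an extension of `B` by `ker p`, and contains `ker g` as a
direct summand because `p` lifts through `g`. -/
lemma ker_mem_of_projective_cover (hY : IsResolving S 𝒴) [Module.Projective S P]
    {p : P →ₗ[S] C} (hp : Function.Surjective p) {g : B →ₗ[S] C} (hg : Function.Surjective g)
    (hB : ModuleCat.of S B ∈ 𝒴) (hk : ModuleCat.of S (LinearMap.ker p) ∈ 𝒴) :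
    ModuleCat.of S (LinearMap.ker g) ∈ 𝒴 := by
  obtain ⟨l, hl⟩ := exists_lift_of_projective hg p
  refine hY.of_retract
    (a := fiberProduct.lift (h := p) (LinearMap.ker g).subtype 0 fun x ↦ by simp)
    (b := LinearMap.codRestrict _ (fiberProduct.fst g p - l ∘ₗ fiberProduct.snd g p) ?_) ?_
    (hY.of_extension (fiberProduct.isSES_fst (isSES_ker hp) g) hk hB)
  · rintro ⟨⟨x, y⟩, hxy⟩
    simp [hl, fiberProduct.mem_iff.1 hxy]
  · intro x
    ext
    simp

end IsResolving

/-- The class of modules having a syzygy in `𝒴`. -/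
def syzygyPreimage (𝒴 : Set (ModuleCat.{u} S)) : Set (ModuleCat.{u} S) :=
  {M | ∃ (P : ModuleCat.{u} S) (g : P →ₗ[S] M), Module.Finite S P ∧ Module.Projective S P ∧
    Function.Surjective g ∧ ModuleCat.of S (LinearMap.ker g) ∈ 𝒴}

lemma mem_syzygyPreimage_of_surjective [Module.Projective S P] [Module.Finite S P]
    {p : P →ₗ[S] C} (hp : Function.Surjective p) (h : ModuleCat.of S (LinearMap.ker p) ∈ 𝒴) :
    ModuleCat.of S C ∈ syzygyPreimage 𝒴 :=
  ⟨.of S P, p, ‹_›, ‹_›, hp, h⟩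

lemma finite_of_mem_syzygyPreimage {M : ModuleCat.{u} S} (h : M ∈ syzygyPreimage 𝒴) :
    Module.Finite S M := by
  obtain ⟨P, g, _, _, hg, -⟩ := h
  exact Module.Finite.of_surjective g hg

lemma syzygyPreimage_mono (h : 𝒴 ⊆ 𝒵) : syzygyPreimage 𝒴 ⊆ syzygyPreimage 𝒵 := by
  rintro M ⟨P, g, hfin, hproj, hg, hk⟩
  exact ⟨P, g, hfin, hproj, hg, h hk⟩

namespace IsResolving

lemma mem_syzygyPreimage_of_isSES (hY : IsResolving S 𝒴) [Module.Projective S B]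
    [Module.Finite S B] {f : A →ₗ[S] B} {g : B →ₗ[S] C} (h : IsSES f g)
    (hA : ModuleCat.of S A ∈ 𝒴) : ModuleCat.of S C ∈ syzygyPreimage 𝒴 := by
  obtain ⟨e⟩ := h.nonempty_equiv_ker
  exact mem_syzygyPreimage_of_surjective h.surjective (hY.of_equiv e hA)

lemma mem_syzygyPreimage_iff (hY : IsResolving S 𝒴) [Module.Projective S P] [Module.Finite S P]
    {p : P →ₗ[S] C} (hp : Function.Surjective p) :
    ModuleCat.of S C ∈ syzygyPreimage 𝒴 ↔ ModuleCat.of S (LinearMap.ker p) ∈ 𝒴 := by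
  refine ⟨?_, mem_syzygyPreimage_of_surjective hp⟩
  rintro ⟨Q, q, _, _, hq, hk⟩
  exact hY.ker_mem_of_projective_cover hq hp hY.of_projective hk

lemma subset_syzygyPreimage [IsNoetherianRing S] (hY : IsResolving S 𝒴) : 𝒴 ⊆ syzygyPreimage 𝒴 := by
  intro M hM
  have := hY.fg M hM
  obtain ⟨n, f, hf⟩ := Module.Finite.exists_fin' S M
  exact mem_syzygyPreimage_of_surjective (C := M) hf (hY.of_syzygy (isSES_ker hf) hM)

lemma mem_syzygyPreimage_of_prod (hY : IsResolving S 𝒴)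
    (h : ModuleCat.of S (A × B) ∈ syzygyPreimage 𝒴) : ModuleCat.of S A ∈ syzygyPreimage 𝒴 := by
  have : Module.Finite S (A × B) := finite_of_mem_syzygyPreimage h
  have : Module.Finite S A := .of_surjective (.fst S A B) LinearMap.fst_surjective
  have : Module.Finite S B := .of_surjective (.snd S A B) LinearMap.snd_surjective
  obtain ⟨n, f, hf⟩ := Module.Finite.exists_fin' S A
  obtain ⟨m, g, hg⟩ := Module.Finite.exists_fin' S B
  have hfg : Function.Surjective (f.prodMap g) := hf.prodMap hg
  refine mem_syzygyPreimage_of_surjective hf (hY.of_retract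
    (a := (LinearMap.inl S (Fin n → S) (Fin m → S)).restrict (p := LinearMap.ker f)
      (q := LinearMap.ker (f.prodMap g)) fun x hx ↦ by simp [LinearMap.mem_ker.1 hx])
    (b := (LinearMap.fst S (Fin n → S) (Fin m → S)).restrict
      (p := LinearMap.ker (f.prodMap g)) (q := LinearMap.ker f) fun x hx ↦ congrArg Prod.fst hx)
    (fun _ ↦ rfl) ((hY.mem_syzygyPreimage_iff hfg).1 h))

lemma mem_syzygyPreimage_of_extension (hY : IsResolving S 𝒴) {f : A →ₗ[S] B} {g : B →ₗ[S] C}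
    (h : IsSES f g) (hA : ModuleCat.of S A ∈ syzygyPreimage 𝒴)
    (hC : ModuleCat.of S C ∈ syzygyPreimage 𝒴) : ModuleCat.of S B ∈ syzygyPreimage 𝒴 := by
  obtain ⟨P, a, _, _, ha, hka⟩ := hA
  obtain ⟨Q, c, _, _, hc, hkc⟩ := hC
  obtain ⟨l, hl⟩ := exists_lift_of_projective h.surjective c
  exact mem_syzygyPreimage_of_surjective (h.coprod_surjective ha hc hl)
    (hY.of_extension (isSES_horseshoe h ha hl) hka hkc)

lemma left_mem_of_right_mem_syzygyPreimage (hY : IsResolving S 𝒴) {f : A →ₗ[S] B}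
    {g : B →ₗ[S] C} (h : IsSES f g) (hB : ModuleCat.of S B ∈ 𝒴)
    (hC : ModuleCat.of S C ∈ syzygyPreimage 𝒴) : ModuleCat.of S A ∈ 𝒴 := by
  obtain ⟨P, p, _, _, hp, hk⟩ := hC
  obtain ⟨e⟩ := h.nonempty_equiv_ker
  exact hY.of_equiv e.symm (hY.ker_mem_of_projective_cover hp h.surjective hB hk)

lemma right_mem_syzygyPreimage (hY : IsResolving S 𝒴) {f : A →ₗ[S] B} {g : B →ₗ[S] C}
    (h : IsSES f g) (hA : ModuleCat.of S A ∈ 𝒴)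
    (hB : ModuleCat.of S B ∈ syzygyPreimage 𝒴) :
    ModuleCat.of S C ∈ syzygyPreimage 𝒴 := by
  obtain ⟨P, p, _, _, hp, hk⟩ := hB
  obtain ⟨e⟩ := h.nonempty_equiv_ker
  exact mem_syzygyPreimage_of_surjective (p := g ∘ₗ p) (h.surjective.comp hp)
    (hY.of_extension (isSES_ker_comp hp) hk (hY.of_equiv e hA))

end IsResolving

lemma isResolving_syzygyPreimage [IsNoetherianRing S] (hY : IsResolving S 𝒴) :
    IsResolving S (syzygyPreimage 𝒴) where
  fg _ := finite_of_mem_syzygyPreimage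
  iso_closed := by
    rintro M N ⟨e⟩ ⟨P, g, hfin, hproj, hg, hk⟩
    refine ⟨P, e.toLinearMap ∘ₗ g, hfin, hproj, e.surjective.comp hg, ?_⟩
    rwa [LinearEquiv.ker_comp]
  proj_mem M hfin hproj := hY.subset_syzygyPreimage (hY.proj_mem M hfin hproj)
  summand_closed _ _ := hY.mem_syzygyPreimage_of_prod
  ext_closed _ _ _ _ _ := hY.mem_syzygyPreimage_of_extension
  syzygy_closed := by
    intro K P M f g h _ _ _ hM
    obtain ⟨e⟩ := h.nonempty_equiv_ker
    exact hY.subset_syzygyPreimage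
      (hY.of_equiv (B := K) e.symm ((hY.mem_syzygyPreimage_iff (C := M) h.surjective).1 hM))

/-- The class of modules having a `t`-th syzygy in `𝒴`. -/
def iterSyzygyPreimage (t : ℕ) (𝒴 : Set (ModuleCat.{u} S)) : Set (ModuleCat.{u} S) :=
  syzygyPreimage^[t] 𝒴

lemma iterSyzygyPreimage_succ (t : ℕ) :
    iterSyzygyPreimage (t + 1) 𝒴 = syzygyPreimage (iterSyzygyPreimage t 𝒴) :=
  Function.iterate_succ_apply' _ _ _

lemma iterSyzygyPreimage_mono (h : 𝒴 ⊆ 𝒵) (t : ℕ) :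
    iterSyzygyPreimage t 𝒴 ⊆ iterSyzygyPreimage t 𝒵 := by
  induction t with
  | zero => exact h
  | succ t ih =>
    rw [iterSyzygyPreimage_succ, iterSyzygyPreimage_succ]
    exact syzygyPreimage_mono ih

lemma isResolving_iterSyzygyPreimage [IsNoetherianRing S] (hY : IsResolving S 𝒴) (t : ℕ) :
    IsResolving S (iterSyzygyPreimage t 𝒴) := by
  induction t with
  | zero => exact hY
  | succ t ih =>
    rw [iterSyzygyPreimage_succ]
    exact isResolving_syzygyPreimage ih

lemma iterSyzygyPreimage_subset_succ [IsNoetherianRing S] (hY : IsResolving S 𝒴) (t : ℕ) :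
    iterSyzygyPreimage t 𝒴 ⊆ iterSyzygyPreimage (t + 1) 𝒴 := by
  rw [iterSyzygyPreimage_succ]
  exact (isResolving_iterSyzygyPreimage hY t).subset_syzygyPreimage

end Resolving

/-! ### Stable annihilators -/

section StableAnnihilator

open scoped Pointwise

variable {S : Type u} [CommRing S] {𝒴 : Set (ModuleCat.{u} S)}
variable {A B C E P Q : Type u} [AddCommGroup A] [Module S A] [AddCommGroup B] [Module S B]
  [AddCommGroup C] [Module S C] [AddCommGroup E] [Module S E] [AddCommGroup P] [Module S P]
  [AddCommGroup Q] [Module S Q]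

/-- The stable annihilator of `M`: the scalars whose action on `M` factors through a finitely
generated projective module. Its radical defines the locus where `M` fails to be free. -/
def stableAnnihilator (S : Type u) [CommRing S] (M : Type u) [AddCommGroup M] [Module S M] :
    Ideal S where
  carrier := {y | ∃ (P : ModuleCat.{u} S) (a : M →ₗ[S] P) (b : P →ₗ[S] M),
    Module.Finite S P ∧ Module.Projective S P ∧ ∀ x, b (a x) = y • x}
  zero_mem' := ⟨.of S PUnit, 0, 0, inferInstance, inferInstance, by simp⟩
  add_mem' := by
    rintro y z ⟨P, a, b, _, _, hab⟩ ⟨Q, c, d, _, _, hcd⟩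
    refine ⟨.of S (P × Q), a.prod c, b.coprod d, inferInstanceAs (Module.Finite S (P × Q)),
      inferInstanceAs (Module.Projective S (P × Q)), fun x ↦ ?_⟩
    rw [add_smul, ← hab, ← hcd]
    rfl
  smul_mem' := by
    rintro c y ⟨P, a, b, hfin, hproj, hab⟩
    exact ⟨P, a, c • b, hfin, hproj, fun x ↦ by simp [hab, mul_smul]⟩

lemma mem_stableAnnihilator_of_comp [Module.Finite S P] [Module.Projective S P] {y : S}
    (a : A →ₗ[S] P) (b : P →ₗ[S] A) (h : ∀ x, b (a x) = y • x) : y ∈ stableAnnihilator S A :=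
  ⟨.of S P, a, b, ‹_›, ‹_›, h⟩

lemma exists_comp_eq_smul_of_mem_stableAnnihilator {y : S} (h : y ∈ stableAnnihilator S A) :
    ∃ (n : ℕ) (a : A →ₗ[S] (Fin n → S)) (b : (Fin n → S) →ₗ[S] A), ∀ x, b (a x) = y • x := by
  obtain ⟨P, a, b, _, _, hab⟩ := h
  obtain ⟨n, f, hf⟩ := Module.Finite.exists_fin' S P
  obtain ⟨l, hl⟩ := exists_lift_of_projective hf LinearMap.id
  exact ⟨n, l ∘ₗ a, b ∘ₗ f, fun x ↦ by simp [hl, hab]⟩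

lemma annihilator_le_stableAnnihilator : Module.annihilator S A ≤ stableAnnihilator S A :=
  fun _ hy ↦ mem_stableAnnihilator_of_comp (P := PUnit) 0 0
    (by simp [Module.mem_annihilator.1 hy])

lemma stableAnnihilator_eq_top [Module.Finite S A] [Module.Projective S A] :
    stableAnnihilator S A = ⊤ :=
  (Ideal.eq_top_iff_one _).2 (mem_stableAnnihilator_of_comp LinearMap.id LinearMap.id (by simp))

lemma stableAnnihilator_le_of_retract {a : A →ₗ[S] B} {b : B →ₗ[S] A} (h : ∀ x, b (a x) = x) :
    stableAnnihilator S B ≤ stableAnnihilator S A := by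
  rintro y ⟨P, c, d, hfin, hproj, hcd⟩
  exact ⟨P, c ∘ₗ a, b ∘ₗ d, hfin, hproj, fun x ↦ by simp [hcd, h]⟩

lemma IsSES.exists_apply_eq_smul_sub {f : A →ₗ[S] B} {g : B →ₗ[S] C} (h : IsSES f g)
    [Module.Projective S Q] {c : C →ₗ[S] Q} {d : Q →ₗ[S] C} {z : S}
    (hz : ∀ x, d (c x) = z • x) :
    ∃ (l : Q →ₗ[S] B) (ε : B →ₗ[S] A), ∀ x, f (ε x) = z • x - l (c (g x)) := by
  obtain ⟨l, hl⟩ := exists_lift_of_projective h.surjective d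
  obtain ⟨ε, hε⟩ := h.exists_comp_eq (z • LinearMap.id - l ∘ₗ c ∘ₗ g)
    fun x ↦ by simp [hl, hz]
  exact ⟨l, ε, hε⟩

lemma IsSES.stableAnnihilator_mul_le {f : A →ₗ[S] B} {g : B →ₗ[S] C} (h : IsSES f g) :
    stableAnnihilator S A * stableAnnihilator S C ≤ stableAnnihilator S B := by
  rw [Ideal.mul_le]
  rintro y ⟨P, a, b, _, _, hab⟩ z ⟨Q, c, d, _, _, hcd⟩
  obtain ⟨l, ε, hε⟩ := h.exists_apply_eq_smul_sub hcd
  exact mem_stableAnnihilator_of_comp (P := P × Q) ((a ∘ₗ ε).prod (c ∘ₗ g))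
    ((f ∘ₗ b).coprod (y • l)) fun x ↦ by simp [hab, hε, mul_smul, smul_sub]

lemma IsSES.stableAnnihilator_le_of_projective {f : A →ₗ[S] B} {g : B →ₗ[S] C} (h : IsSES f g)
    [Module.Finite S B] [Module.Projective S B] :
    stableAnnihilator S C ≤ stableAnnihilator S A := by
  rintro y ⟨Q, c, d, _, _, hcd⟩
  obtain ⟨l, ε, hε⟩ := h.exists_apply_eq_smul_sub hcd
  exact mem_stableAnnihilator_of_comp f ε fun x ↦ h.injective
    (by simp [hε, h.apply_apply_eq_zero])

lemma IsSES.le_radical_stableAnnihilator {f : A →ₗ[S] B} {g : B →ₗ[S] C} (h : IsSES f g)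
    {I : Ideal S} (hA : I ≤ (stableAnnihilator S A).radical)
    (hC : I ≤ (stableAnnihilator S C).radical) : I ≤ (stableAnnihilator S B).radical := by
  refine le_trans ?_ (Ideal.radical_mono h.stableAnnihilator_mul_le)
  rw [Ideal.radical_mul]
  exact le_inf hA hC

/-- The finitely generated modules that are locally free outside the closed set `V(I)`. -/
def freeOff (I : Ideal S) : Set (ModuleCat.{u} S) :=
  {M | Module.Finite S M ∧ I ≤ (stableAnnihilator S M).radical}

lemma isResolving_freeOff (I : Ideal S) : IsResolving S (freeOff I) where
  fg _ h := h.1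
  iso_closed := by
    rintro M N ⟨e⟩ ⟨hfin, hI⟩
    exact ⟨Module.Finite.equiv e, hI.trans (Ideal.radical_mono
      (stableAnnihilator_le_of_retract (a := e.symm.toLinearMap) (b := e.toLinearMap) (by simp)))⟩
  proj_mem M hfin hproj :=
    ⟨hfin, stableAnnihilator_eq_top (S := S) (A := M) ▸ le_top.trans Ideal.le_radical⟩
  summand_closed := by
    rintro M N ⟨(hfin : Module.Finite S (M × N)), hI⟩
    exact ⟨.of_surjective (.fst S M N) LinearMap.fst_surjective,
      hI.trans (Ideal.radical_mono (stableAnnihilator_le_of_retract (B := M × N)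
        (a := .inl S M N) (b := .fst S M N) (by simp)))⟩
  ext_closed := by
    rintro A B C f g h ⟨_, hA⟩ ⟨_, hC⟩
    exact ⟨h.finite_middle, h.le_radical_stableAnnihilator hA hC⟩
  syzygy_closed := by
    rintro K P M f g h hfin _ _ ⟨-, hI⟩
    exact ⟨hfin, hI.trans (Ideal.radical_mono h.stableAnnihilator_le_of_projective)⟩

/-- The finitely generated modules on which multiplication by `y` is stably zero. -/
def stablyKilledBy (y : S) : Set (ModuleCat.{u} S) :=
  {M | Module.Finite S M ∧ y ∈ stableAnnihilator S M}

lemma exists_forall_mem_iterSyzygyPreimage_stablyKilledBy_pow {I : Ideal S} {x : S} (hx : x ∈ I)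
    (t : ℕ) {M : ModuleCat.{u} S} (hM : M ∈ iterSyzygyPreimage t (freeOff I)) :
    ∃ N : ℕ, ∀ n ≥ N, M ∈ iterSyzygyPreimage t (stablyKilledBy (x ^ n)) := by
  induction t generalizing M with
  | zero =>
    obtain ⟨hfin, hI⟩ := hM
    obtain ⟨N, hN⟩ := hI hx
    exact ⟨N, fun n hn ↦ ⟨hfin, Ideal.mem_of_dvd _ (pow_dvd_pow x hn) hN⟩⟩
  | succ t ih =>
    rw [iterSyzygyPreimage_succ] at hM
    obtain ⟨P, g, hfin, hproj, hg, hk⟩ := hM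
    obtain ⟨N, hN⟩ := ih hk
    refine ⟨N, fun n hn ↦ ?_⟩
    rw [iterSyzygyPreimage_succ]
    exact ⟨P, g, hfin, hproj, hg, hN n hn⟩

/-- The pullback of `π : E → A` along multiplication by `y` on `A`. -/
abbrev smulPullback (π : E →ₗ[S] A) (y : S) : Submodule S (E × A) :=
  fiberProduct π (y • LinearMap.id)

lemma mem_stableAnnihilator_smulPullback [Module.Finite S P] [Module.Projective S P]
    (π : P →ₗ[S] A) (z : S) : z ∈ stableAnnihilator S (smulPullback π z) := by
  refine mem_stableAnnihilator_of_comp (fiberProduct.fst _ _)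
    (fiberProduct.lift (z • LinearMap.id) π (by simp)) ?_
  rintro ⟨⟨p, x⟩, hpx⟩
  exact fiberProduct.ext (by simp) (by simpa using fiberProduct.mem_iff.1 hpx)

lemma radical_stableAnnihilator_le_smulPullback [Module.Finite S P] [Module.Projective S P]
    {π : P →ₗ[S] A} (hπ : Function.Surjective π) (z : S) :
    (stableAnnihilator S A).radical ≤ (stableAnnihilator S (smulPullback π z)).radical :=
  (fiberProduct.isSES_snd (isSES_ker hπ) _).le_radical_stableAnnihilator
    (Ideal.radical_mono (isSES_ker hπ).stableAnnihilator_le_of_projective) le_rfl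

/-- Each pullback along multiplication by `z` adds `z` to the radical of the stable annihilator,
so iterating over generators of `J` shrinks the non-free locus into `V(J)`. -/
lemma exists_le_radical_stableAnnihilator [IsNoetherianRing S] {J : Ideal S}
    {p : ModuleCat.{u} S → Prop}
    (hp : ∀ (X : ModuleCat.{u} S) (n : ℕ) (π : (Fin n → S) →ₗ[S] X), ∀ z ∈ J,
      Function.Surjective π → p X → p (.of S (smulPullback π z)))
    (X : ModuleCat.{u} S) [Module.Finite S X] (hX : p X) :
    ∃ Y : ModuleCat.{u} S, Module.Finite S Y ∧ p Y ∧ J ≤ (stableAnnihilator S Y).radical := by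
  suffices h : ∀ I : Ideal S, I.FG → I ≤ J → ∀ X : ModuleCat.{u} S, Module.Finite S X → p X →
      ∃ Y : ModuleCat.{u} S, Module.Finite S Y ∧ p Y ∧
        I ⊔ (stableAnnihilator S X).radical ≤ (stableAnnihilator S Y).radical by
    obtain ⟨Y, hfin, hY, hJ⟩ := h J (IsNoetherian.noetherian J) le_rfl X ‹_› hX
    exact ⟨Y, hfin, hY, le_sup_left.trans hJ⟩
  intro I hI
  induction I, hI using Submodule.fg_induction with
  | singleton z =>
    intro hz X _ hX
    obtain ⟨n, π, hπ⟩ := Module.Finite.exists_fin' S X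
    refine ⟨.of S (smulPullback π z), inferInstanceAs (Module.Finite S (smulPullback π z)),
      hp X n π z (hz (Submodule.mem_span_singleton_self z)) hπ hX,
      sup_le ?_ (radical_stableAnnihilator_le_smulPullback hπ z)⟩
    rw [Submodule.span_singleton_le_iff_mem]
    exact Ideal.le_radical (mem_stableAnnihilator_smulPullback π z)
  | sup I₁ I₂ _ _ h₁ h₂ =>
    intro hI X hfin hX
    obtain ⟨Y, hYfin, hY, hYX⟩ := h₁ (le_sup_left.trans hI) X hfin hX
    obtain ⟨Z, hZfin, hZ, hZY⟩ := h₂ (le_sup_right.trans hI) Y hYfin hY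
    have hYZ := le_sup_right.trans hZY
    exact ⟨Z, hZfin, hZ, sup_le (sup_le ((le_sup_left.trans hYX).trans hYZ)
      (le_sup_left.trans hZY)) ((le_sup_right.trans hYX).trans hYZ)⟩

/-- A syzygy of a pullback along multiplication by `y` is again such a pullback, of the horseshoe
sequence of syzygies. -/
lemma IsSES.exists_isSES_smulPullback {f : B →ₗ[S] E} {π : E →ₗ[S] A} (h : IsSES f π)
    {r : P →ₗ[S] B} (hr : Function.Surjective r) {q : Q →ₗ[S] A} (hq : Function.Surjective q)
    {l : Q →ₗ[S] E} (hl : ∀ k, π (l k) = q k)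
    {j : LinearMap.ker ((f ∘ₗ r).coprod l) →ₗ[S] LinearMap.ker q} (hj : ∀ x, (j x : Q) = x.1.2)
    (y : S) :
    ∃ (ι : smulPullback j y →ₗ[S] P × Q) (θ : P × Q →ₗ[S] smulPullback π y),
      IsSES (A := smulPullback j y) (C := smulPullback π y) ι θ := by
  refine ⟨(LinearMap.fst S P Q ∘ₗ (LinearMap.ker ((f ∘ₗ r).coprod l)).subtype ∘ₗ
      fiberProduct.fst _ _).prod ((LinearMap.ker q).subtype ∘ₗ fiberProduct.snd _ _),
    fiberProduct.lift ((f ∘ₗ r).coprod (y • l)) (q ∘ₗ LinearMap.snd S P Q) ?_,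
    isSES_of_forall ?_ ?_ ?_ ?_⟩
  · rintro ⟨p, k⟩
    simp [h.apply_apply_eq_zero, hl]
  · rintro ⟨⟨x, k⟩, hx⟩ ⟨⟨x', k'⟩, hx'⟩ hxx'
    obtain rfl : k = k' := Subtype.ext (congrArg Prod.snd hxx')
    have hfst : x.1.1 = x'.1.1 := (congrArg Prod.fst hxx' :)
    have hsnd : x.1.2 = x'.1.2 := by
      rw [← hj, ← hj]
      exact congrArg Subtype.val ((fiberProduct.mem_iff.1 hx).trans
        (fiberProduct.mem_iff.1 hx').symm)
    exact fiberProduct.ext (Subtype.ext (Prod.ext hfst hsnd)) rfl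
  · rintro ⟨⟨e, a⟩, hea⟩
    obtain ⟨k, rfl⟩ := hq a
    obtain ⟨b, hb⟩ := h.exists_of_apply_eq_zero (y := e - y • l k)
      (by rw [map_sub, fiberProduct.mem_iff.1 hea, map_smul, hl]; exact sub_self _)
    obtain ⟨p, rfl⟩ := hr b
    exact ⟨(p, k), fiberProduct.ext (by simp [hb]) rfl⟩
  · rintro ⟨⟨⟨⟨p, k'⟩, hpk'⟩, ⟨k, hk⟩⟩, hjk⟩
    obtain rfl : k' = y • k := (hj _).symm.trans (congrArg Subtype.val (fiberProduct.mem_iff.1 hjk))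
    exact fiberProduct.ext (by simpa using hpk') (by simpa using hk)
  · rintro ⟨p, k⟩ hpk
    have hfst : f (r p) + y • l k = 0 := congrArg (fun z ↦ z.1.1) hpk
    have hsnd : q k = 0 := congrArg (fun z ↦ z.1.2) hpk
    exact ⟨⟨(⟨(p, y • k), by simpa using hfst⟩, ⟨k, hsnd⟩),
      fiberProduct.mem_iff.2 (Subtype.ext (hj _))⟩, rfl⟩

namespace IsResolving

lemma mem_of_smulPullback (hY : IsResolving S 𝒴) {y : S} {π : E →ₗ[S] A}
    (hπ : Function.Surjective π) (hA : y ∈ stableAnnihilator S A)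
    (h : ModuleCat.of S (smulPullback π y) ∈ 𝒴) : ModuleCat.of S A ∈ 𝒴 := by
  obtain ⟨P, a, b, _, _, hab⟩ := hA
  obtain ⟨l, hl⟩ := exists_lift_of_projective hπ b
  exact hY.of_retract
    (a := fiberProduct.lift (h := y • LinearMap.id) (l ∘ₗ a) LinearMap.id fun x ↦ by simp [hl, hab])
    (b := fiberProduct.snd π (y • LinearMap.id)) (fun _ ↦ rfl) h

variable [IsNoetherianRing S]

lemma mem_iterSyzygyPreimage_of_smulPullback (hY : IsResolving S 𝒴) (y : S) (s : ℕ)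
    (A E : Type u) [AddCommGroup A] [Module S A] [AddCommGroup E] [Module S E] [Module.Finite S E]
    {π : E →ₗ[S] A} (hπ : Function.Surjective π)
    (hA : ModuleCat.of S A ∈ iterSyzygyPreimage s (stablyKilledBy y))
    (h : ModuleCat.of S (smulPullback π y) ∈ iterSyzygyPreimage s 𝒴) :
    ModuleCat.of S A ∈ iterSyzygyPreimage s 𝒴 := by
  induction s generalizing A E with
  | zero => exact hY.mem_of_smulPullback hπ hA.2 h
  | succ s ih =>
    rw [iterSyzygyPreimage_succ] at hA h ⊢
    obtain ⟨Q, q, _, _, hq, hk⟩ := hA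
    obtain ⟨n, r, hr⟩ := Module.Finite.exists_fin' S (LinearMap.ker π)
    obtain ⟨l, hl⟩ := exists_lift_of_projective hπ q
    have hj := isSES_horseshoe (isSES_ker hπ) hr hl
    obtain ⟨ι, θ, hθ⟩ := (isSES_ker hπ).exists_isSES_smulPullback hr hq hl
      (j := (LinearMap.snd S _ Q).restrict fun _ hx ↦ (isSES_ker hπ).snd_mem_ker hl hx)
      (fun _ ↦ rfl) y
    obtain ⟨e⟩ := hθ.nonempty_equiv_ker
    have hYs := isResolving_iterSyzygyPreimage hY s
    exact mem_syzygyPreimage_of_surjective hq (ih _ _ hj.surjective hk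
      (hYs.of_equiv e.symm ((hYs.mem_syzygyPreimage_iff hθ.surjective).1 h)))

end IsResolving

lemma isSES_smulPullback_quotSMulTop {π : P →ₗ[S] A} (hπ : Function.Surjective π) {y : S}
    (hy : IsSMulRegular A y) :
    IsSES (fiberProduct.fst π (y • LinearMap.id))
      (Submodule.mkQ (y • (⊤ : Submodule S A)) ∘ₗ π : P →ₗ[S] QuotSMulTop y A) := by
  have hmk := isSES_lsmul_mkQ hy
  refine isSES_of_forall ?_ (hmk.surjective.comp hπ) ?_ ?_
  · rintro ⟨⟨p, a⟩, hpa⟩ ⟨⟨p', a'⟩, hpa'⟩ hpp'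
    obtain rfl : p = p' := hpp'
    exact fiberProduct.ext rfl
      (hy ((fiberProduct.mem_iff.1 hpa).symm.trans (fiberProduct.mem_iff.1 hpa')))
  · rintro ⟨⟨p, a⟩, hpa⟩
    exact (congrArg _ (fiberProduct.mem_iff.1 hpa)).trans (hmk.apply_apply_eq_zero a)
  · intro p hp
    obtain ⟨a, ha⟩ := hmk.exists_of_apply_eq_zero hp
    exact ⟨⟨(p, a), ha.symm⟩, rfl⟩

namespace IsResolving

variable [IsNoetherianRing S]

lemma quotSMulTop_mem_syzygyPreimage (hY : IsResolving S 𝒴) {y : S} (hy : IsSMulRegular A y)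
    (hA : ModuleCat.of S A ∈ 𝒴) :
    ModuleCat.of S (QuotSMulTop y A) ∈ syzygyPreimage 𝒴 := by
  have := hY.finite hA
  obtain ⟨n, π, hπ⟩ := Module.Finite.exists_fin' S A
  exact hY.mem_syzygyPreimage_of_isSES (isSES_smulPullback_quotSMulTop hπ hy)
    (hY.of_extension (fiberProduct.isSES_snd (isSES_ker hπ) _)
      (hY.of_syzygy (isSES_ker hπ) hA) hA)

lemma mem_iterSyzygyPreimage_of_quotSMulTop (hY : IsResolving S 𝒴) {y : S}
    (hy : IsSMulRegular A y) [Module.Finite S A] (s : ℕ)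
    (hA : ModuleCat.of S A ∈ iterSyzygyPreimage s (stablyKilledBy y))
    (h : ModuleCat.of S (QuotSMulTop y A) ∈ iterSyzygyPreimage (s + 1) 𝒴) :
    ModuleCat.of S A ∈ iterSyzygyPreimage s 𝒴 := by
  have hYs := isResolving_iterSyzygyPreimage hY s
  obtain ⟨n, π, hπ⟩ := Module.Finite.exists_fin' S A
  have hs := isSES_smulPullback_quotSMulTop hπ hy
  obtain ⟨e⟩ := hs.nonempty_equiv_ker
  rw [iterSyzygyPreimage_succ] at h
  exact hY.mem_iterSyzygyPreimage_of_smulPullback y s A _ hπ hA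
    (hYs.of_equiv e.symm ((hYs.mem_syzygyPreimage_iff hs.surjective).1 h))

end IsResolving

end StableAnnihilator

/-! ### Modules that are free on the punctured spectrum of a local ring -/

section LocalRing

open IsLocalRing RingTheory.Sequence

open scoped Pointwise

variable {S : Type u} [CommRing S] {𝒴 𝒵 : Set (ModuleCat.{u} S)}
variable {A B C : Type u} [AddCommGroup A] [Module S A] [AddCommGroup B] [Module S B]
  [AddCommGroup C] [Module S C]

lemma IsResolving.inter (hY : IsResolving S 𝒴) (hZ : IsResolving S 𝒵) :
    IsResolving S (𝒴 ∩ 𝒵) where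
  fg M h := hY.fg M h.1
  iso_closed M N e h := ⟨hY.iso_closed M N e h.1, hZ.iso_closed M N e h.2⟩
  proj_mem M hfin hproj := ⟨hY.proj_mem M hfin hproj, hZ.proj_mem M hfin hproj⟩
  summand_closed M N h := ⟨hY.summand_closed M N h.1, hZ.summand_closed M N h.2⟩
  ext_closed A B C f g h hA hC :=
    ⟨hY.ext_closed A B C f g h hA.1 hC.1, hZ.ext_closed A B C f g h hA.2 hC.2⟩
  syzygy_closed K P M f g h hK hP hproj hM :=
    ⟨hY.syzygy_closed K P M f g h hK hP hproj hM.1, hZ.syzygy_closed K P M f g h hK hP hproj hM.2⟩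

lemma IsSES.annihilator_mul_stableAnnihilator_le {f : A →ₗ[S] B} {g : B →ₗ[S] C}
    (h : IsSES f g) :
    Module.annihilator S A * stableAnnihilator S B ≤ stableAnnihilator S C := by
  rw [Ideal.mul_le]
  rintro x hx y ⟨P, a, b, _, _, hab⟩
  have hker : LinearMap.ker g ≤ LinearMap.ker (x • LinearMap.id : B →ₗ[S] B) := by
    intro z hz
    obtain ⟨w, rfl⟩ := h.exists_of_apply_eq_zero hz
    simp [← map_smul, Module.mem_annihilator.1 hx]
  have hθ (z : B) : (LinearMap.ker g).liftQ _ hker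
      ((g.quotKerEquivOfSurjective h.surjective).symm (g z)) = x • z := by
    rw [← LinearMap.quotKerEquivOfSurjective_apply_mk g h.surjective, LinearEquiv.symm_apply_apply]
    rfl
  refine mem_stableAnnihilator_of_comp (a ∘ₗ (LinearMap.ker g).liftQ _ hker ∘ₗ
    (g.quotKerEquivOfSurjective h.surjective).symm.toLinearMap) (g ∘ₗ b) fun c ↦ ?_
  obtain ⟨z, rfl⟩ := h.surjective c
  simp only [LinearMap.comp_apply, LinearEquiv.coe_coe, hθ, hab, map_smul]
  rw [smul_smul, mul_comm]

lemma isWeaklyRegular_of_retract {rs : List S} {a : A →ₗ[S] B} {b : B →ₗ[S] A}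
    (h : b ∘ₗ a = LinearMap.id) (hB : IsWeaklyRegular B rs) : IsWeaklyRegular A rs := by
  induction rs generalizing A B with
  | nil => exact IsWeaklyRegular.nil S A
  | cons r rs ih =>
    rw [isWeaklyRegular_cons_iff] at hB ⊢
    refine ⟨hB.1.of_injective a (Function.LeftInverse.injective (LinearMap.congr_fun h)),
      ih (a := QuotSMulTop.map r a) (b := QuotSMulTop.map r b) ?_ hB.2⟩
    rw [← QuotSMulTop.map_comp, h, QuotSMulTop.map_id]

variable [IsLocalRing S]

lemma IsResolving.mem_of_maximalIdeal_le_radical_annihilator [IsNoetherianRing S]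
    (hY : IsResolving S 𝒴) (hk : residueMod S ∈ 𝒴) [hA : Module.Finite S A]
    (h : maximalIdeal S ≤ (Module.annihilator S A).radical) : ModuleCat.of S A ∈ 𝒴 := by
  induction hA using IsNoetherianRing.induction_on_isQuotientEquivQuotientPrime S with
  | subsingleton N => exact hY.of_projective
  | quotient N p e =>
    rw [e.annihilator_eq, Ideal.annihilator_quotient, p.2.isRadical.radical] at h
    obtain ⟨p, hp⟩ := p
    obtain rfl : p = maximalIdeal S := le_antisymm (le_maximalIdeal hp.ne_top) h
    exact hY.of_equiv e.symm hk
  | exact N₁ N₂ N₃ f g hf hg hfg h₁ h₃ =>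
    exact hY.of_extension ⟨hf, hg, (LinearMap.exact_iff.1 hfg).symm⟩
      (h₁ (h.trans (Ideal.radical_mono (LinearMap.annihilator_le_of_injective f hf))))
      (h₃ (h.trans (Ideal.radical_mono (LinearMap.annihilator_le_of_surjective g hg))))

/-- The finitely generated modules that are locally free on the punctured spectrum. -/
abbrev freeOnPuncturedSpec (S : Type u) [CommRing S] [IsLocalRing S] : Set (ModuleCat.{u} S) :=
  freeOff (maximalIdeal S)

lemma isResolving_freeOnPuncturedSpec : IsResolving S (freeOnPuncturedSpec S) :=
  isResolving_freeOff _

/-- The finitely generated modules of depth at least `t`. -/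
def modulesOfDepthGE (S : Type u) [CommRing S] [IsLocalRing S] (t : ℕ) :
    Set (ModuleCat.{u} S) :=
  {M | Module.Finite S M ∧ DepthGE S t M}

lemma DepthGE.ker {f : A →ₗ[S] B} {g : B →ₗ[S] C} (h : IsSES f g) {t : ℕ} (hB : DepthGE S t B)
    (hC : DepthGE S t C) : DepthGE S t A := by
  cases t with
  | zero => exact .zero
  | succ t => exact .left h hB (hC.mono t.le_succ)

lemma residueMod_mem_iterSyzygyPreimage [IsNoetherianRing S] (t : ℕ) :
    residueMod S ∈ iterSyzygyPreimage t (freeOnPuncturedSpec S) := by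
  induction t with
  | zero => exact ⟨inferInstance,
      (annihilator_residueMod.ge.trans annihilator_le_stableAnnihilator).trans Ideal.le_radical⟩
  | succ t ih => exact iterSyzygyPreimage_subset_succ isResolving_freeOnPuncturedSpec t ih

lemma mem_iterSyzygyPreimage_inter_modulesOfDepthGE {j s : ℕ} (hS : DepthGE S (j + s) S)
    {M : ModuleCat.{u} S} (hM : M ∈ iterSyzygyPreimage s (freeOnPuncturedSpec S))
    (hd : DepthGE S j M) :
    M ∈ iterSyzygyPreimage s (freeOnPuncturedSpec S ∩ modulesOfDepthGE S (j + s)) := by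
  induction s generalizing j M with
  | zero => exact ⟨hM, hM.1, hd⟩
  | succ s ih =>
    rw [iterSyzygyPreimage_succ] at hM ⊢
    obtain ⟨P, g, hfin, hproj, hg, hk⟩ := hM
    refine ⟨P, g, hfin, hproj, hg, ?_⟩
    rw [← Nat.succ_add_eq_add_succ] at hS ⊢
    exact ih hS hk (.left (isSES_ker hg) (.of_projective (hS.mono (Nat.le_add_right _ _))) hd)

/-- `N` is obtained from `M` by dividing out the regular sequence `rs`, in such a way that `M` has
an `s`-th syzygy in a resolving subcategory if and only if `N` has an `(s + length rs)`-th syzygy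
in it. -/
structure IsRegularReduction (s : ℕ) (rs : List S) (M : Type u) [AddCommGroup M] [Module S M]
    (N : ModuleCat.{u} S) : Prop where
  mem_maximalIdeal : ∀ r ∈ rs, r ∈ maximalIdeal S
  isWeaklyRegular : IsWeaklyRegular M rs
  sup_le_annihilator : Module.annihilator S M ⊔ Ideal.ofList rs ≤ Module.annihilator S N
  depthGE_iff : ∀ j, DepthGE S (rs.length + j) M ↔ DepthGE S j N
  mem_iff : ∀ 𝒴 : Set (ModuleCat.{u} S), IsResolving S 𝒴 →
    (ModuleCat.of S M ∈ iterSyzygyPreimage s 𝒴 ↔ N ∈ iterSyzygyPreimage (s + rs.length) 𝒴)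

lemma isRegularReduction_nil (s : ℕ) : IsRegularReduction s [] A (.of S A) where
  mem_maximalIdeal := by simp
  isWeaklyRegular := IsWeaklyRegular.nil S A
  sup_le_annihilator := by simp
  depthGE_iff j := by rw [List.length_nil, zero_add]
  mem_iff 𝒴 _ := Iff.rfl

lemma IsRegularReduction.cons {s : ℕ} {y : S} {rs : List S} {N : ModuleCat.{u} S}
    (hm : y ∈ maximalIdeal S) (hy : IsSMulRegular A y)
    (hA : ∀ 𝒴 : Set (ModuleCat.{u} S), IsResolving S 𝒴 →
      (ModuleCat.of S A ∈ iterSyzygyPreimage s 𝒴 ↔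
        ModuleCat.of S (QuotSMulTop y A) ∈ iterSyzygyPreimage (s + 1) 𝒴))
    (h : IsRegularReduction (s + 1) rs (QuotSMulTop y A) N) :
    IsRegularReduction s (y :: rs) A N where
  mem_maximalIdeal := List.forall_mem_cons.2 ⟨hm, h.mem_maximalIdeal⟩
  isWeaklyRegular := (isWeaklyRegular_cons_iff _ _ _).2 ⟨hy, h.isWeaklyRegular⟩
  sup_le_annihilator := by
    have hN := sup_le_iff.1 h.sup_le_annihilator
    rw [Ideal.ofList_cons]
    refine sup_le ((LinearMap.annihilator_le_of_surjective
      (Submodule.mkQ (y • (⊤ : Submodule S A))) (Submodule.mkQ_surjective _)).trans hN.1)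
      (sup_le ?_ hN.2)
    rw [Ideal.span_singleton_le_iff_mem]
    exact hN.1 (QuotSMulTop.mem_annihilator A y)
  depthGE_iff j := by
    rw [← h.depthGE_iff j, List.length_cons, Nat.add_right_comm,
      DepthGE.succ_iff_quotSMulTop hy hm]
  mem_iff 𝒴 hY := by
    rw [hA 𝒴 hY, h.mem_iff 𝒴 hY, List.length_cons, Nat.succ_add_eq_add_succ]

lemma exists_isSMulRegular_forall_mem_iff [IsNoetherianRing S] {s t : ℕ}
    (hA : ModuleCat.of S A ∈ iterSyzygyPreimage s (freeOnPuncturedSpec S))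
    (hd : DepthGE S (t + 1) A) :
    ∃ y ∈ maximalIdeal S, IsSMulRegular A y ∧
      ∀ 𝒴 : Set (ModuleCat.{u} S), IsResolving S 𝒴 →
        (ModuleCat.of S A ∈ iterSyzygyPreimage s 𝒴 ↔
          ModuleCat.of S (QuotSMulTop y A) ∈ iterSyzygyPreimage (s + 1) 𝒴) := by
  have := (isResolving_iterSyzygyPreimage isResolving_freeOnPuncturedSpec s).finite hA
  obtain ⟨x, hx, hreg⟩ := hd.exists_isSMulRegular
  obtain ⟨N, hN⟩ := exists_forall_mem_iterSyzygyPreimage_stablyKilledBy_pow hx s hA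
  refine ⟨x ^ (N + 1), Ideal.pow_mem_of_mem _ hx _ N.succ_pos, hreg.pow _, fun 𝒴 hY ↦
    ⟨fun h ↦ ?_, hY.mem_iterSyzygyPreimage_of_quotSMulTop (hreg.pow _) s (hN _ N.le_succ)⟩⟩
  rw [iterSyzygyPreimage_succ]
  exact (isResolving_iterSyzygyPreimage hY s).quotSMulTop_mem_syzygyPreimage (hreg.pow _) h

lemma exists_isRegularReduction [IsNoetherianRing S] {s t : ℕ}
    (hA : ModuleCat.of S A ∈ iterSyzygyPreimage s (freeOnPuncturedSpec S)) (hd : DepthGE S t A) :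
    ∃ (rs : List S) (N : ModuleCat.{u} S), rs.length = t ∧ IsRegularReduction s rs A N := by
  induction t generalizing s A with
  | zero => exact ⟨[], _, rfl, isRegularReduction_nil s⟩
  | succ t ih =>
    obtain ⟨y, hm, hy, hiff⟩ := exists_isSMulRegular_forall_mem_iff hA hd
    obtain ⟨rs, N, rfl, hN⟩ := ih ((hiff _ isResolving_freeOnPuncturedSpec).1 hA)
      ((DepthGE.succ_iff_quotSMulTop hy hm).1 hd)
    exact ⟨y :: rs, N, rfl, .cons hm hy hiff hN⟩

lemma exists_injective_residueField_of_not_depthGE_one (h : ¬ DepthGE S 1 A) :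
    ∃ f : ResidueField S →ₗ[S] A, Function.Injective f := by
  have hHom : ¬ Subsingleton (residueMod S →ₗ[S] A) := fun h0 ↦ h fun i hi ↦ by
    obtain rfl := Nat.lt_one_iff.1 hi
    exact subsingleton_ext_zero_iff.2 h0
  have : IsSimpleModule S (ResidueField S) :=
    isSimpleModule_iff_isCoatom.2 (maximalIdeal.isMaximal S).out
  rw [not_subsingleton_iff_nontrivial] at hHom
  obtain ⟨f, hf⟩ := exists_ne (0 : ResidueField S →ₗ[S] A)
  exact ⟨f, LinearMap.injective_of_ne_zero hf⟩

lemma exists_submodule_depthGE_one_quotient [IsNoetherianRing S] [Module.Finite S A] :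
    ∃ Γ : Submodule S A,
      maximalIdeal S ≤ (Module.annihilator S Γ).radical ∧ DepthGE S 1 (A ⧸ Γ) := by
  obtain ⟨Γ, hΓ, hmax⟩ := (inferInstance : WellFoundedGT (Submodule S A)).wf.has_min
    {Γ | maximalIdeal S ≤ Γ.annihilator.radical} ⟨⊥, by
      rw [Set.mem_ofPred_eq, Submodule.annihilator_bot, Ideal.radical_top]; exact le_top⟩
  refine ⟨Γ, hΓ, of_not_not fun hd ↦ ?_⟩
  obtain ⟨f, hf⟩ := exists_injective_residueField_of_not_depthGE_one hd
  let Γ' := (LinearMap.range f).comap Γ.mkQ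
  have hsmul : maximalIdeal S • Γ' ≤ Γ := by
    refine Submodule.smul_le.2 fun r hr x ⟨y, hy⟩ ↦ ?_
    rw [← Γ.ker_mkQ, LinearMap.mem_ker, map_smul, ← hy, ← map_smul,
      Module.mem_annihilator.1 (annihilator_residueMod.ge hr), map_zero]
  have hann : Γ.annihilator * maximalIdeal S ≤ Γ'.annihilator := by
    rw [Submodule.le_annihilator_iff, Submodule.mul_smul, eq_bot_iff]
    exact (Submodule.smul_mono le_rfl hsmul).trans Γ.annihilator_smul.le
  refine hmax Γ' ?_ (lt_of_le_of_ne ?_ fun hΓΓ' ↦ one_ne_zero (α := ResidueField S) (hf ?_))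
  · refine le_trans ?_ (Ideal.radical_mono hann)
    rw [Ideal.radical_mul]
    exact le_inf hΓ Ideal.le_radical
  · exact (Γ.ker_mkQ.ge.trans (LinearMap.ker_le_comap _) :)
  · obtain ⟨v, hv⟩ := Γ.mkQ_surjective (f 1)
    have hvΓ : v ∈ Γ := hΓΓ' ▸ (⟨1, hv.symm⟩ : v ∈ Γ')
    rw [map_zero, ← hv, ← LinearMap.mem_ker, Γ.ker_mkQ]
    exact hvΓ

lemma IsSES.right_mem_iterSyzygyPreimage [IsNoetherianRing S] {f : A →ₗ[S] B} {g : B →ₗ[S] C}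
    (h : IsSES f g) (hA : maximalIdeal S ≤ (Module.annihilator S A).radical) {t : ℕ}
    (hB : ModuleCat.of S B ∈ iterSyzygyPreimage t (freeOnPuncturedSpec S)) :
    ModuleCat.of S C ∈ iterSyzygyPreimage t (freeOnPuncturedSpec S) := by
  cases t with
  | zero =>
    have := hB.1
    refine ⟨.of_surjective g h.surjective,
      le_trans ?_ (Ideal.radical_mono h.annihilator_mul_stableAnnihilator_le)⟩
    rw [Ideal.radical_mul]
    exact le_inf hA hB.2
  | succ t =>
    have hLF := isResolving_iterSyzygyPreimage isResolving_freeOnPuncturedSpec (S := S) t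
    rw [iterSyzygyPreimage_succ] at hB ⊢
    have : Module.Finite S B := finite_of_mem_syzygyPreimage hB
    have := h.finite_left
    exact hLF.right_mem_syzygyPreimage h (hLF.mem_of_maximalIdeal_le_radical_annihilator
      (residueMod_mem_iterSyzygyPreimage t) hA) hB

/-! ### Resolving subcategories over a local ring -/

namespace IsResolving

variable [IsNoetherianRing S] {t : ℕ}

lemma exists_mem_freeOnPuncturedSpec (hY : IsResolving S 𝒴) (hS : DepthGE S t S)
    {X : ModuleCat.{u} S} (hX : X ∈ 𝒴) (hle : DepthGE S t X) (hlt : ¬ DepthGE S (t + 1) X) :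
    ∃ Y ∈ 𝒴 ∩ freeOnPuncturedSpec S, DepthGE S t Y ∧ ¬ DepthGE S (t + 1) Y := by
  have := hY.fg X hX
  have hcut (Y : ModuleCat.{u} S) (n : ℕ) (π : (Fin n → S) →ₗ[S] Y) (z : S)
      (hz : z ∈ maximalIdeal S) (hπ : Function.Surjective π)
      (h : Y ∈ 𝒴 ∧ DepthGE S t Y ∧ ¬ DepthGE S (t + 1) Y) :
      .of S (smulPullback π z) ∈ 𝒴 ∧ DepthGE S t (smulPullback π z) ∧
        ¬ DepthGE S (t + 1) (smulPullback π z) := by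
    have hs := fiberProduct.isSES_snd (isSES_ker hπ) (z • LinearMap.id)
    refine ⟨hY.of_extension hs (hY.of_syzygy (isSES_ker hπ) h.1) h.1,
      .middle hs (.ker (isSES_ker hπ) (.pi hS n) h.2.1) h.2.1, fun hd ↦ h.2.2 ?_⟩
    exact .of_smul_section (fiberProduct.isSES_subtype hπ (z • LinearMap.id))
      (LinearMap.snd_comp_inr S _ _) (neg_mem hz) (by ext; simp) hd
  obtain ⟨Y, hfin, ⟨hY𝒴, hYle, hYlt⟩, hrad⟩ := exists_le_radical_stableAnnihilator
    (p := fun Y ↦ Y ∈ 𝒴 ∧ DepthGE S t Y ∧ ¬ DepthGE S (t + 1) Y) hcut X ⟨hX, hle, hlt⟩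
  exact ⟨Y, ⟨hY𝒴, hfin, hrad⟩, hYle, hYlt⟩

lemma residueMod_mem_iterSyzygyPreimage (hY : IsResolving S 𝒴) (hS : DepthGE S (t + 1) S)
    (hP : freeOnPuncturedSpec S ∩ modulesOfDepthGE S (t + 1) ⊆ 𝒴)
    {X : ModuleCat.{u} S} (hX : X ∈ 𝒴 ∩ freeOnPuncturedSpec S) (hle : DepthGE S t X)
    (hlt : ¬ DepthGE S (t + 1) X) : residueMod S ∈ iterSyzygyPreimage t 𝒴 := by
  have hLF := isResolving_iterSyzygyPreimage isResolving_freeOnPuncturedSpec (S := S) t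
  obtain ⟨rs, N, rfl, hN⟩ := exists_isRegularReduction (s := 0) hX.2 hle
  obtain ⟨f, hf⟩ := exists_injective_residueField_of_not_depthGE_one
    fun hc ↦ hlt ((hN.depthGE_iff 1).2 hc)
  have hs : IsSES f (LinearMap.range f).mkQ :=
    ⟨hf, Submodule.mkQ_surjective _, (Submodule.ker_mkQ _).symm⟩
  have hNLF := (hN.mem_iff _ isResolving_freeOnPuncturedSpec).1 hX.2
  have hNY := (hN.mem_iff _ hY).1 hX.1
  rw [zero_add] at hNLF hNY
  have hq : ModuleCat.of S (N ⧸ LinearMap.range f) ∈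
      iterSyzygyPreimage (rs.length + 1) (freeOnPuncturedSpec S) := by
    rw [iterSyzygyPreimage_succ]
    exact hLF.right_mem_syzygyPreimage hs (ResolvPaper.residueMod_mem_iterSyzygyPreimage _)
      (hLF.subset_syzygyPreimage hNLF)
  have hqY := iterSyzygyPreimage_mono hP _ <| zero_add (rs.length + 1) ▸
    mem_iterSyzygyPreimage_inter_modulesOfDepthGE (j := 0) (by rwa [zero_add]) hq .zero
  rw [iterSyzygyPreimage_succ] at hqY
  exact (isResolving_iterSyzygyPreimage hY _).left_mem_of_right_mem_syzygyPreimage hs hNY hqY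

lemma inter_modulesOfDepthGE_subset_of_residueMod_mem (hY : IsResolving S 𝒴)
    (hS : DepthGE S (t + 1) S) (hP : freeOnPuncturedSpec S ∩ modulesOfDepthGE S (t + 1) ⊆ 𝒴)
    (hk : residueMod S ∈ iterSyzygyPreimage t 𝒴) :
    freeOnPuncturedSpec S ∩ modulesOfDepthGE S t ⊆ 𝒴 := by
  rintro M ⟨hM, -, hd⟩
  have hYt := isResolving_iterSyzygyPreimage hY t
  obtain ⟨rs, N, rfl, hN⟩ := exists_isRegularReduction (s := 0) hM hd
  have hNLF := (hN.mem_iff _ isResolving_freeOnPuncturedSpec).1 hM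
  rw [zero_add] at hNLF
  have := (isResolving_iterSyzygyPreimage isResolving_freeOnPuncturedSpec _).fg N hNLF
  obtain ⟨Γ, hΓ, hdepth⟩ := exists_submodule_depthGE_one_quotient (S := S) (A := N)
  rw [add_comm] at hS hP
  have hq : ModuleCat.of S (N ⧸ Γ) ∈ iterSyzygyPreimage rs.length 𝒴 :=
    iterSyzygyPreimage_mono hP _ (mem_iterSyzygyPreimage_inter_modulesOfDepthGE hS
      ((isSES_mkQ Γ).right_mem_iterSyzygyPreimage hΓ hNLF) hdepth)
  refine (hN.mem_iff 𝒴 hY).2 ?_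
  rw [zero_add]
  exact hYt.of_extension (isSES_mkQ Γ)
    (hYt.mem_of_maximalIdeal_le_radical_annihilator hk hΓ) hq

theorem inter_modulesOfDepthGE_subset (hY : IsResolving S 𝒴) {h : ℕ} (hS : DepthGE S h S)
    (hP : freeOnPuncturedSpec S ∩ modulesOfDepthGE S h ⊆ 𝒴) (ht : t ≤ h) {X : ModuleCat.{u} S}
    (hX : X ∈ 𝒴) (hle : DepthGE S t X) (hlt : ¬ DepthGE S (t + 1) X) :
    freeOnPuncturedSpec S ∩ modulesOfDepthGE S t ⊆ 𝒴 := by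
  obtain ⟨s, rfl⟩ := Nat.exists_eq_add_of_le ht
  induction s generalizing t X with
  | zero => exact hP
  | succ s ih =>
    have hSt : DepthGE S (t + 1) S := hS.mono (by omega)
    have hPt : freeOnPuncturedSpec S ∩ modulesOfDepthGE S (t + 1) ⊆ 𝒴 := by
      have := hY.fg X hX
      obtain ⟨n, π, hπ⟩ := Module.Finite.exists_fin' S X
      have hs := isSES_ker hπ
      rw [← Nat.succ_add_eq_add_succ] at hS hP
      exact ih (X := .of S (LinearMap.ker π)) (hY.of_syzygy hs hX) (.left hs (.pi hSt n) hle)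
        (fun hc ↦ hlt (.right hs hc (.pi hSt n))) hS hP (Nat.le_add_right _ _)
    obtain ⟨Y, hYmem, hYle, hYlt⟩ :=
      hY.exists_mem_freeOnPuncturedSpec (hSt.mono t.le_succ) hX hle hlt
    exact hY.inter_modulesOfDepthGE_subset_of_residueMod_mem hSt hPt
      (hY.residueMod_mem_iterSyzygyPreimage hSt hPt hYmem hYle hYlt)

end IsResolving

lemma ringKrullDim_quotient_ofList_add_length [IsNoetherianRing S] {rs : List S}
    (hm : ∀ r ∈ rs, r ∈ maximalIdeal S) (h : IsWeaklyRegular S rs) :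
    ringKrullDim (S ⧸ Ideal.ofList rs) + rs.length = ringKrullDim S :=
  ringKrullDim_add_length_eq_ringKrullDim_of_isRegular rs
    ((isRegular_iff_isWeaklyRegular_of_subset_maximalIdeal hm).2 h)

lemma nontrivial_quotient_ofList {rs : List S} (hm : ∀ r ∈ rs, r ∈ maximalIdeal S) :
    Nontrivial (S ⧸ Ideal.ofList rs) :=
  Ideal.Quotient.nontrivial_iff.2
    (ne_top_of_le_ne_top (maximalIdeal.isMaximal S).ne_top (Ideal.span_le.2 hm))

lemma DepthGE.le_ringKrullDim [IsNoetherianRing S] {t : ℕ} (h : DepthGE S t S) :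
    t ≤ ringKrullDim S := by
  obtain ⟨rs, hm, hrs, rfl⟩ := h.exists_isWeaklyRegular
  have := nontrivial_quotient_ofList hm
  rw [← ringKrullDim_quotient_ofList_add_length hm hrs]
  exact le_add_of_nonneg_left ringKrullDim_nonneg_of_nontrivial

lemma maximalIdeal_le_radical_ofList [IsNoetherianRing S] {rs : List S}
    (hm : ∀ r ∈ rs, r ∈ maximalIdeal S) (h : IsWeaklyRegular S rs)
    (hdim : ringKrullDim S = rs.length) :
    maximalIdeal S ≤ (Ideal.ofList rs).radical := by
  have := nontrivial_quotient_ofList hm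
  have hzero : ringKrullDim (S ⧸ Ideal.ofList rs) = 0 := by
    have hadd := ringKrullDim_quotient_ofList_add_length hm h
    rw [hdim] at hadd
    exact ENat.WithBot.add_natCast_cancel.1 (hadd.trans (zero_add _).symm)
  rw [← ringKrullDimZero_iff_ringKrullDim_eq_zero,
    Ideal.krullDimLE_zero_quotient_iff_forall_minimalPrimes_isMaximal] at hzero
  rw [← Ideal.sInf_minimalPrimes]
  exact le_sInf fun p hp ↦ (eq_maximalIdeal (hzero p hp)).ge

/-- Adding the free summand `S` to the given module makes the regular sequence used to reduce it a
system of parameters of `S`. -/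
lemma IsResolving.inter_modulesOfDepthGE_subset_of_ringKrullDim_eq [IsNoetherianRing S]
    (hY : IsResolving S 𝒴) {d : ℕ} (hdim : ringKrullDim S = d) (hS : DepthGE S d S)
    (hk : residueMod S ∈ iterSyzygyPreimage d 𝒴) :
    freeOnPuncturedSpec S ∩ modulesOfDepthGE S d ⊆ 𝒴 := by
  rintro M ⟨hM, -, hd⟩
  have hMS : ModuleCat.of S (M × S) ∈ freeOnPuncturedSpec S :=
    isResolving_freeOnPuncturedSpec.prod hM isResolving_freeOnPuncturedSpec.of_projective
  obtain ⟨rs, N, rfl, hN⟩ := exists_isRegularReduction (s := 0) hMS (hd.prod hS)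
  have hrad := maximalIdeal_le_radical_ofList hN.mem_maximalIdeal
    (isWeaklyRegular_of_retract (LinearMap.snd_comp_inr S M S) hN.isWeaklyRegular) hdim
  have hNLF := (hN.mem_iff _ isResolving_freeOnPuncturedSpec).1 hMS
  have := (isResolving_iterSyzygyPreimage isResolving_freeOnPuncturedSpec _).fg N hNLF
  refine hY.summand_closed M (.of S S) ((hN.mem_iff 𝒴 hY).2 ?_)
  rw [zero_add]
  exact (isResolving_iterSyzygyPreimage hY _).mem_of_maximalIdeal_le_radical_annihilator hk
    (hrad.trans (Ideal.radical_mono (le_sup_right.trans hN.sup_le_annihilator)))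

end LocalRing

/-! ### Minimal syzygies and regular local rings -/

section RegularLocalRing

open IsLocalRing RingTheory.Sequence TensorProduct

open scoped Pointwise

variable {S : Type u} [CommRing S] [IsLocalRing S] {𝒴 : Set (ModuleCat.{u} S)}
variable {A : Type u} [AddCommGroup A] [Module S A]

variable (A) in
lemma exists_surjective_ker_le_maximalIdeal_smul_top [Module.Finite S A] :
    ∃ (n : ℕ) (f : (Fin n → S) →ₗ[S] A), Function.Surjective f ∧
      LinearMap.ker f ≤ maximalIdeal S • (⊤ : Submodule S (Fin n → S)) := by
  let b := Module.finBasis (ResidueField S) (ResidueField S ⊗[S] A)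
  obtain ⟨v, hv⟩ :=
    (TensorProduct.mk_surjective S A (ResidueField S) residue_surjective).comp_left b
  refine ⟨_, Fintype.linearCombination S v, ?_, fun w hw ↦ ?_⟩
  · rw [← LinearMap.range_eq_top, Fintype.range_linearCombination]
    exact span_eq_top_of_tmul_eq_basis v b (congrFun hv)
  · have hsum : ∑ i, residue S (w i) • b i = 0 := by
      simpa [Fintype.linearCombination_apply, tmul_sum, tmul_smul, ← hv,
        ← ResidueField.algebraMap_eq, algebraMap_smul] using
        congrArg (TensorProduct.mk S (ResidueField S) A 1) (LinearMap.mem_ker.1 hw)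
    have hcoord (i) : w i ∈ maximalIdeal S :=
      (residue_eq_zero_iff _).1 (Fintype.linearIndependent_iff.1 b.linearIndependent _ hsum i)
    rw [pi_eq_sum_univ' w]
    exact Submodule.sum_mem _ fun i _ ↦ Submodule.smul_mem_smul (hcoord i) trivial

lemma exists_isMinSyz [IsNoetherianRing S] (n : ℕ) (M : ModuleCat.{u} S) [Module.Finite S M] :
    ∃ K, IsMinSyz S n M K := by
  induction n generalizing M with
  | zero => exact ⟨M, ⟨.refl _ _⟩⟩
  | succ n ih =>
    obtain ⟨r, f, hf, hker⟩ := exists_surjective_ker_le_maximalIdeal_smul_top (S := S) M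
    obtain ⟨K, hK⟩ := ih (.of S (LinearMap.ker f))
    exact ⟨K, .of S (Fin r → S), f, .of S (LinearMap.ker f), (LinearMap.ker f).subtype,
      inferInstance, inferInstance, hf, hker, Subtype.val_injective, Submodule.range_subtype _, hK⟩

lemma IsResolving.mem_iterSyzygyPreimage_of_isMinSyz [IsNoetherianRing S]
    (hY : IsResolving S 𝒴) {n : ℕ} {M K : ModuleCat.{u} S} (h : IsMinSyz S n M K) (hK : K ∈ 𝒴) :
    M ∈ iterSyzygyPreimage n 𝒴 := by
  induction n generalizing M with
  | zero => exact hY.of_equiv h.some hK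
  | succ n ih =>
    obtain ⟨F, g, K', i, _, _, hg, -, hi, hgi, hK'⟩ := h
    rw [iterSyzygyPreimage_succ]
    exact (isResolving_iterSyzygyPreimage hY n).mem_syzygyPreimage_of_isSES ⟨hi, hg, hgi⟩ (ih hK')

lemma DepthGE.maximalIdeal_ne_bot [IsNoetherianRing S] [Module.Finite S A] [Nontrivial A]
    (hA : DepthGE S 1 A) : maximalIdeal S ≠ ⊥ := by
  obtain ⟨x, hx, hreg⟩ := hA.exists_isSMulRegular
  rintro hbot
  rw [hbot, Ideal.mem_bot] at hx
  exact IsSMulRegular.not_zero_iff.2 ‹_› (hx ▸ hreg)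

lemma DepthGE.exists_isSMulRegular_notMem_sq [IsNoetherianRing S] [Module.Finite S A]
    [Nontrivial A] (hA : DepthGE S 1 A) :
    ∃ x ∈ maximalIdeal S, x ∉ maximalIdeal S ^ 2 ∧ IsSMulRegular A x := by
  by_contra! hno
  have hcover : (maximalIdeal S : Set S) ⊆
      ⋃ p ∈ insert (maximalIdeal S ^ 2) (associatedPrimes S A), (p : Set S) := by
    intro x hx
    rw [Set.biUnion_insert, biUnion_associatedPrimes_eq_compl_regular]
    exact or_iff_not_imp_left.2 (hno x hx)
  obtain ⟨p, rfl | hp, hle⟩ := (Ideal.subset_union_prime_finite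
    ((associatedPrimes.finite S A).insert _) (f := id) (maximalIdeal S ^ 2) (maximalIdeal S ^ 2)
    fun p hp hne _ ↦ (hp.resolve_left hne).isPrime).1 hcover
  · refine hA.maximalIdeal_ne_bot (Submodule.eq_bot_of_le_smul_of_le_jacobson_bot _ _
      (IsNoetherian.noetherian _) ?_ (maximalIdeal_le_jacobson _))
    rwa [smul_eq_mul, ← pow_two]
  · obtain ⟨y, hy, hreg⟩ := hA.exists_isSMulRegular
    refine (biUnion_associatedPrimes_eq_compl_regular S A).le ?_ hreg
    exact Set.mem_biUnion hp (hle hy)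

lemma exists_mem_span_sup_span_erase [DecidableEq S] {s : Finset S}
    (hs : Ideal.span (s : Set S) = maximalIdeal S) {x : S} (hx : x ∈ maximalIdeal S)
    (hx2 : x ∉ maximalIdeal S ^ 2) :
    ∃ z ∈ s, Ideal.span {x} ⊔ Ideal.span (s.erase z : Set S) = maximalIdeal S := by
  have hsm {z} (hz : z ∈ s) : z ∈ maximalIdeal S := hs ▸ Ideal.subset_span hz
  obtain ⟨c, -, rfl⟩ := Submodule.mem_span_finset.1 (hs ▸ hx)
  obtain ⟨z, hz, hcz⟩ : ∃ z ∈ s, IsUnit (c z) := by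
    by_contra! hc
    refine hx2 (Ideal.sum_mem _ fun z hz ↦ ?_)
    exact pow_two (maximalIdeal S) ▸
      Ideal.mul_mem_mul ((mem_maximalIdeal _).2 (hc z hz)) (hsm hz)
  refine ⟨z, hz, le_antisymm (sup_le ((Ideal.span_singleton_le_iff_mem _).2 hx)
    (Ideal.span_le.2 fun y hy ↦ hsm (Finset.mem_of_mem_erase hy))) ?_⟩
  rw [← hs, Ideal.span_le]
  intro y hy
  obtain rfl | hyz := eq_or_ne y z
  · refine (Ideal.unit_mul_mem_iff_mem _ hcz).1 ?_
    refine (Submodule.add_mem_iff_right _ (Ideal.mem_sup_right (sum_mem fun y hy ↦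
      Ideal.mul_mem_left _ (c y) (Ideal.subset_span hy)))).1 ?_
    rw [Finset.sum_erase_add s (fun y ↦ c y * y) hz]
    exact Ideal.mem_sup_left (Ideal.mem_span_singleton_self _)
  · exact Ideal.mem_sup_right (Ideal.subset_span (Finset.mem_erase.2 ⟨hyz, hy⟩))

lemma DepthGE.quotient_span_singleton [IsNoetherianRing S] [Module.Finite S A] {x : S}
    [IsLocalRing (S ⧸ Ideal.span {x})] [Module (S ⧸ Ideal.span {x}) A]
    [IsScalarTower S (S ⧸ Ideal.span {x}) A] {t : ℕ} (h : DepthGE S t A) :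
    DepthGE (S ⧸ Ideal.span {x}) t A := by
  obtain ⟨rs, hrs, hreg, rfl⟩ := h.exists_isWeaklyRegular
  have : IsLocalHom (Ideal.Quotient.mk (Ideal.span {x})) :=
    .of_surjective _ Ideal.Quotient.mk_surjective
  rw [← List.length_map (algebraMap S (S ⧸ Ideal.span {x}))]
  refine .of_isWeaklyRegular (List.forall_mem_map.2 fun r hr ↦ ?_)
    ((isWeaklyRegular_map_algebraMap_iff _ _ rs).2 hreg)
  exact map_maximalIdeal_le (Ideal.Quotient.mk (Ideal.span {x}))
    (Ideal.mem_map_of_mem _ (hrs r hr))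

lemma DepthGE.quotient_self [IsNoetherianRing S] {x : S} [IsLocalRing (S ⧸ Ideal.span {x})]
    (hx : x ∈ maximalIdeal S) (hreg : IsSMulRegular S x) {t : ℕ} (h : DepthGE S (t + 1) S) :
    DepthGE (S ⧸ Ideal.span {x}) t (S ⧸ Ideal.span {x}) := by
  refine ((succ_iff_quotSMulTop hreg hx).1 h).of_equiv
    (Submodule.quotEquivOfEq _ _ ?_) |>.quotient_span_singleton
  rw [← Submodule.ideal_span_singleton_smul, smul_eq_mul, Ideal.mul_top]

theorem DepthGE.free {h : ℕ} [IsNoetherianRing S] {s : Finset S}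
    (hs : Ideal.span (s : Set S) = maximalIdeal S) (hcard : s.card ≤ h) (hS : DepthGE S h S)
    [Module.Finite S A] (hA : DepthGE S h A) : Module.Free S A := by
  classical
  induction h generalizing S A with
  | zero =>
    obtain rfl := Finset.card_eq_zero.1 (Nat.le_zero.1 hcard)
    rw [Finset.coe_empty, Ideal.span_empty, eq_comm, ← isField_iff_maximalIdeal_eq] at hs
    let := hs.toField
    exact Module.Free.of_divisionRing S A
  | succ h ih =>
    obtain ⟨x, hx, hx2, hreg⟩ := ((hA.prod hS).mono h.succ_pos).exists_isSMulRegular_notMem_sq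
    have hxA : IsSMulRegular A x := hreg.of_injective (LinearMap.inl S A S) LinearMap.inl_injective
    have hxS : IsSMulRegular S x := hreg.of_injective (LinearMap.inr S A S) LinearMap.inr_injective
    obtain ⟨z, hz, hspan⟩ := exists_mem_span_sup_span_erase hs hx hx2
    let π := Ideal.Quotient.mk (Ideal.span {x})
    have : Nontrivial (S ⧸ Ideal.span {x}) := Ideal.Quotient.nontrivial_iff.2 fun htop ↦
      (mem_maximalIdeal x).1 hx (Ideal.span_singleton_eq_top.1 htop)
    have : IsLocalRing (S ⧸ Ideal.span {x}) := .of_surjective' π Ideal.Quotient.mk_surjective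
    have hspan' : Ideal.span (((s.erase z).image π : Finset _) : Set (S ⧸ Ideal.span {x})) =
        maximalIdeal (S ⧸ Ideal.span {x}) := by
      rw [← map_maximalIdeal_of_surjective π Ideal.Quotient.mk_surjective, ← hspan, Ideal.map_sup,
        Ideal.map_quotient_self, bot_sup_eq, Ideal.map_span, Finset.coe_image]
    have hcard' : ((s.erase z).image π).card ≤ h :=
      Finset.card_image_le.trans (by rw [Finset.card_erase_of_mem hz]; omega)
    have : Module.Finite (S ⧸ Ideal.span {x}) (QuotSMulTop x A) :=
      .of_restrictScalars_finite S _ _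
    have hfree : Module.Free (S ⧸ Ideal.span {x}) (QuotSMulTop x A) :=
      ih hspan' hcard' (.quotient_self hx hxS hS)
        ((DepthGE.succ_iff_quotSMulTop hxA hx).1 hA).quotient_span_singleton
    have := Module.finitePresentation_of_finite S A
    exact (Module.free_quotSMulTop_iff_free S A (maximalIdeal_le_jacobson _ hx) hxA).1 hfree

end RegularLocalRing

/-! ### Localization at a prime -/

section Stalk

open IsLocalRing RingTheory.Sequence
open scoped Pointwise

variable {R : Type u} [CommRing R]
variable {A B C : Type u} [AddCommGroup A] [Module R A] [AddCommGroup B] [Module R B]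
  [AddCommGroup C] [Module R C]

/-- The local ring `R_p`. -/
abbrev StalkRing (p : PrimeSpectrum R) : Type u := Localization.AtPrime p.asIdeal

/-- The localized module `M_p`. -/
abbrev Stalk (p : PrimeSpectrum R) (M : Type u) [AddCommGroup M] [Module R M] : Type u :=
  LocalizedModule p.asIdeal.primeCompl M

/-- The localized map `f_p`, linear over `R_p`. -/
noncomputable abbrev stalkMap (p : PrimeSpectrum R) (f : A →ₗ[R] B) :
    Stalk p A →ₗ[StalkRing p] Stalk p B :=
  LocalizedModule.map p.asIdeal.primeCompl f

lemma stalkMap_comp (p : PrimeSpectrum R) (f : A →ₗ[R] B) (g : B →ₗ[R] C) :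
    stalkMap p (g ∘ₗ f) = stalkMap p g ∘ₗ stalkMap p f := by
  ext x
  induction x using LocalizedModule.induction_on with
  | h m s => simp

lemma stalkMap_comp_apply (p : PrimeSpectrum R) (f : A →ₗ[R] B) (g : B →ₗ[R] C) (x : Stalk p A) :
    stalkMap p g (stalkMap p f x) = stalkMap p (g ∘ₗ f) x := by
  rw [stalkMap_comp, LinearMap.comp_apply]

lemma stalkMap_id (p : PrimeSpectrum R) :
    stalkMap p (LinearMap.id : A →ₗ[R] A) = LinearMap.id := by
  ext x
  induction x using LocalizedModule.induction_on with
  | h m s => simp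

lemma stalkMap_smul (p : PrimeSpectrum R) (r : R) (f : A →ₗ[R] B) :
    stalkMap p (r • f) = algebraMap R (StalkRing p) r • stalkMap p f := by
  ext x
  induction x using LocalizedModule.induction_on with
  | h m s =>
    rw [LinearMap.smul_apply, algebraMap_smul, LocalizedModule.map_mk, LocalizedModule.map_mk,
      LocalizedModule.smul'_mk]
    rfl

lemma exact_stalkMap (p : PrimeSpectrum R) {f : A →ₗ[R] B} {g : B →ₗ[R] C}
    (h : Function.Exact f g) : Function.Exact (stalkMap p f) (stalkMap p g) :=
  LocalizedModule.map_exact p.asIdeal.primeCompl f g h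

lemma IsSES.stalk (p : PrimeSpectrum R) {f : A →ₗ[R] B} {g : B →ₗ[R] C} (h : IsSES f g) :
    IsSES (stalkMap p f) (stalkMap p g) :=
  ⟨IsLocalizedModule.map_injective _ _ _ f h.injective,
    IsLocalizedModule.map_surjective _ _ _ g h.surjective,
    (LinearMap.exact_iff.1 (exact_stalkMap p h.exact)).symm⟩

/-- `depth_{R_p} A_p ≥ t`. -/
def LocalDepthGE (p : PrimeSpectrum R) (t : ℕ) (A : Type u) [AddCommGroup A] [Module R A] :
    Prop :=
  DepthGE (StalkRing p) t (Stalk p A)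

lemma stalk_mk_eq_zero_iff {p : PrimeSpectrum R} {m : A} {s : p.asIdeal.primeCompl} :
    (LocalizedModule.mk m s : Stalk p A) = 0 ↔ ∃ c ∉ p.asIdeal, c • m = 0 := by
  rw [← LocalizedModule.zero_mk 1, LocalizedModule.mk_eq]
  constructor
  · rintro ⟨u, hu⟩
    exact ⟨u, u.2, by simpa [Submonoid.smul_def] using hu⟩
  · rintro ⟨c, hc, h⟩
    exact ⟨⟨c, hc⟩, by simpa [Submonoid.smul_def] using h⟩

lemma isSMulRegular_stalk_iff {p : PrimeSpectrum R} {x : R} :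
    IsSMulRegular (Stalk p A) (algebraMap R (StalkRing p) x) ↔
      ∀ m : A, (∃ c ∉ p.asIdeal, c • x • m = 0) → ∃ c ∉ p.asIdeal, c • m = 0 := by
  rw [isSMulRegular_iff_right_eq_zero_of_smul]
  constructor
  · intro h m hm
    refine stalk_mk_eq_zero_iff.1 (h (LocalizedModule.mk m 1) ?_)
    rw [algebraMap_smul, LocalizedModule.smul'_mk]
    exact stalk_mk_eq_zero_iff.2 hm
  · intro h u hu
    induction u using LocalizedModule.induction_on with
    | h m s =>
      rw [algebraMap_smul, LocalizedModule.smul'_mk] at hu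
      exact stalk_mk_eq_zero_iff.2 (h m (stalk_mk_eq_zero_iff.1 hu))

lemma isSMulRegular_stalk_of_le {p q : PrimeSpectrum R} (hpq : p ≤ q) {x : R}
    (h : IsSMulRegular (Stalk q A) (algebraMap R (StalkRing q) x)) :
    IsSMulRegular (Stalk p A) (algebraMap R (StalkRing p) x) := by
  rw [isSMulRegular_stalk_iff] at h ⊢
  rintro m ⟨c, hc, hcm⟩
  obtain ⟨c', hc', hc'm⟩ := h (c • m)
    ⟨1, q.asIdeal.one_notMem, by rw [one_smul, smul_comm, hcm]⟩
  exact ⟨c' * c, p.asIdeal.primeCompl.mul_mem (fun hp ↦ hc' (hpq hp)) hc, by rw [mul_smul, hc'm]⟩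

lemma nonempty_quotSMulTop_stalk_equiv (p : PrimeSpectrum R) (x : R) :
    Nonempty (QuotSMulTop (algebraMap R (StalkRing p) x) (Stalk p A) ≃ₗ[StalkRing p]
      Stalk p (QuotSMulTop x A)) := by
  have hg : Function.Surjective (stalkMap p (x • (⊤ : Submodule R A)).mkQ) :=
    IsLocalizedModule.map_surjective _ _ _ _ (Submodule.mkQ_surjective _)
  have hker : algebraMap R (StalkRing p) x • (⊤ : Submodule (StalkRing p) (Stalk p A)) =
      LinearMap.ker (stalkMap p (x • (⊤ : Submodule R A)).mkQ) := by
    have hex := exact_stalkMap p (LinearMap.exact_lsmul_mkQ_smul_top A x)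
    have hlsmul : stalkMap p (LinearMap.lsmul R A x) =
        algebraMap R (StalkRing p) x • LinearMap.id := by
      rw [← stalkMap_id, ← stalkMap_smul]
      rfl
    ext y
    refine (Submodule.mem_smul_pointwise_iff_exists _ _ _).trans (.trans ?_ (hex y).symm)
    rw [hlsmul]
    simp
  exact ⟨(Submodule.quotEquivOfEq _ _ hker).trans (LinearMap.quotKerEquivOfSurjective _ hg)⟩

lemma LocalDepthGE.succ_iff_quotSMulTop {p : PrimeSpectrum R} {x : R} (hx : x ∈ p.asIdeal)
    (h : IsSMulRegular (Stalk p A) (algebraMap R (StalkRing p) x)) {t : ℕ} :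
    LocalDepthGE p (t + 1) A ↔ LocalDepthGE p t (QuotSMulTop x A) := by
  obtain ⟨e⟩ := nonempty_quotSMulTop_stalk_equiv (A := A) p x
  rw [LocalDepthGE, DepthGE.succ_iff_quotSMulTop h
    ((IsLocalization.AtPrime.to_map_mem_maximal_iff (StalkRing p) p.asIdeal x).2 hx)]
  exact ⟨DepthGE.of_equiv e.symm, DepthGE.of_equiv e⟩

end Stalk

section CovBy

open IsLocalRing
open scoped Pointwise

variable {S : Type u} [CommRing S]
variable {N : Type u} [AddCommGroup N] [Module S N]

lemma not_isSMulRegular_of_mem_associatedPrimes [IsNoetherianRing S] {P : Ideal S}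
    (hP : P ∈ associatedPrimes S N) {x : S} (hx : x ∈ P) : ¬ IsSMulRegular N x := by
  have hx' : x ∈ ({r | IsSMulRegular N r}ᶜ : Set S) := by
    rw [← biUnion_associatedPrimes_eq_compl_regular]
    exact Set.mem_biUnion hP hx
  exact hx'

variable [IsLocalRing S]

lemma maximalIdeal_le_radical_sup_span_singleton {P : PrimeSpectrum S} (hP : P ⋖ closedPoint S)
    {y : S} (hy : y ∉ P.asIdeal) : maximalIdeal S ≤ (P.asIdeal ⊔ Ideal.span {y}).radical := by
  rw [Ideal.radical_eq_sInf]
  refine le_sInf fun Q ⟨hle, hQ⟩ ↦ ?_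
  rcases hP.eq_or_eq (c := ⟨Q, hQ⟩) (le_sup_left.trans hle) (le_maximalIdeal hQ.ne_top) with h | h
  · have hQP : Q = P.asIdeal := congrArg PrimeSpectrum.asIdeal h
    exact absurd (hQP ▸ hle (Ideal.mem_sup_right (Ideal.mem_span_singleton_self y))) hy
  · exact (congrArg PrimeSpectrum.asIdeal h).ge

/- The submodule `U` of elements killed by `P` satisfies `U ≤ yU`: a power of `z` lies in
`P + (y)`, hence kills `U` modulo `y`. -/
lemma torsionBySet_eq_bot_of_isSMulRegular [IsNoetherian S N] {P : Ideal S} {y z : S}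
    (hy : y ∈ maximalIdeal S) (hyN : IsSMulRegular N y) (hzN : IsSMulRegular (QuotSMulTop y N) z)
    (hz : z ∈ (P ⊔ Ideal.span {y}).radical) : Submodule.torsionBySet S N P = ⊥ := by
  obtain ⟨k, hk⟩ := hz
  obtain ⟨a, ha, b, hb, hab⟩ := Submodule.mem_sup.1 hk
  obtain ⟨c, rfl⟩ := Ideal.mem_span_singleton'.1 hb
  refine Submodule.eq_bot_of_le_smul_of_le_jacobson_bot (Ideal.span {y}) _
    (IsNoetherian.noetherian _) (fun w hw ↦ ?_)
    (((Ideal.span_singleton_le_iff_mem _).2 hy).trans (maximalIdeal_le_jacobson _))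
  rw [Submodule.mem_torsionBySet_iff] at hw
  have hzw : z ^ k • (y • (⊤ : Submodule S N)).mkQ w = 0 := by
    rw [← map_smul, Submodule.mkQ_apply, Submodule.Quotient.mk_eq_zero, ← hab, add_smul,
      hw ⟨a, ha⟩, zero_add, mul_comm, mul_smul]
    exact Submodule.smul_mem_pointwise_smul _ _ _ trivial
  have hw_mem := isSMulRegular_iff_right_eq_zero_of_smul.1 (hzN.pow k) _ hzw
  rw [Submodule.mkQ_apply, Submodule.Quotient.mk_eq_zero,
    Submodule.mem_smul_pointwise_iff_exists] at hw_mem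
  obtain ⟨v, -, rfl⟩ := hw_mem
  refine Submodule.smul_mem_smul (Ideal.mem_span_singleton_self y)
    ((Submodule.mem_torsionBySet_iff _ _).2 fun r ↦ ?_)
  exact isSMulRegular_iff_right_eq_zero_of_smul.1 hyN _ ((smul_comm _ _ _).trans (hw r))

lemma not_depthGE_two_of_covBy_closedPoint [IsNoetherianRing S] [Module.Finite S N]
    {P : PrimeSpectrum S} (hP : P ⋖ closedPoint S) (hN : P.asIdeal ∈ associatedPrimes S N) :
    ¬ DepthGE S 2 N := by
  intro hdepth
  obtain ⟨y, hy, hyN⟩ := DepthGE.exists_isSMulRegular (t := 1) hdepth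
  obtain ⟨z, hz, hzN⟩ :=
    DepthGE.exists_isSMulRegular ((DepthGE.succ_iff_quotSMulTop hyN hy).1 hdepth)
  have hyP : y ∉ P.asIdeal := fun hyP ↦ not_isSMulRegular_of_mem_associatedPrimes hN hyP hyN
  obtain ⟨-, u, hu⟩ := isAssociatedPrime_iff.1 hN
  have hmem (r : S) : r ∈ P.asIdeal ↔ r • u = 0 := by
    rw [hu, Submodule.mem_colon_singleton, Submodule.mem_bot]
  have hu_torsion : u ∈ Submodule.torsionBySet S N P.asIdeal :=
    (Submodule.mem_torsionBySet_iff _ _).2 fun r ↦ (hmem r).1 r.2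
  rw [torsionBySet_eq_bot_of_isSMulRegular hy hyN hzN
    (maximalIdeal_le_radical_sup_span_singleton hP hyP hz), Submodule.mem_bot] at hu_torsion
  exact P.asIdeal.one_notMem ((hmem 1).2 (by rw [hu_torsion, smul_zero]))

end CovBy

section Monotone

open IsLocalRing

variable {R : Type u} [CommRing R]
variable {A : Type u} [AddCommGroup A] [Module R A]

lemma comap_stalkRing_le (q : PrimeSpectrum R) (P : PrimeSpectrum (StalkRing q)) :
    P.comap (algebraMap R (StalkRing q)) ≤ q := fun x hx ↦
  (IsLocalization.AtPrime.to_map_mem_maximal_iff (StalkRing q) q.asIdeal x).1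
    (le_maximalIdeal P.2.ne_top hx)

lemma comap_stalkRing_closedPoint (q : PrimeSpectrum R) :
    (closedPoint (StalkRing q)).comap (algebraMap R (StalkRing q)) = q :=
  PrimeSpectrum.ext (IsLocalization.AtPrime.under_maximalIdeal (StalkRing q) q.asIdeal)

lemma covBy_closedPoint_of_comap {p q : PrimeSpectrum R} (hpq : p ⋖ q)
    {P : PrimeSpectrum (StalkRing q)} (hP : P.comap (algebraMap R (StalkRing q)) = p) :
    P ⋖ closedPoint (StalkRing q) := by
  have hinj := PrimeSpectrum.localization_comap_injective (StalkRing q) q.asIdeal.primeCompl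
  have hmono : Monotone (PrimeSpectrum.comap (algebraMap R (StalkRing q))) :=
    fun _ _ h ↦ Ideal.comap_mono h
  refine ⟨lt_of_le_of_ne (le_maximalIdeal P.2.ne_top) ?_, fun Q hPQ hQ ↦ ?_⟩
  · rintro rfl
    exact hpq.ne (hP.symm.trans (comap_stalkRing_closedPoint q))
  · have hlt := hmono.strictMono_of_injective hinj
    exact hpq.2 (hP ▸ hlt hPQ) ((hlt hQ).trans_eq (comap_stalkRing_closedPoint q))

variable [IsNoetherianRing R]

lemma exists_associatedPrimes_stalk_le_comap [Module.Finite R A] {p q : PrimeSpectrum R}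
    (h : ∀ x ∈ p.asIdeal, ¬ IsSMulRegular (Stalk q A) (algebraMap R (StalkRing q) x)) :
    ∃ P : PrimeSpectrum (StalkRing q), P.asIdeal ∈ associatedPrimes (StalkRing q) (Stalk q A) ∧
      p ≤ P.comap (algebraMap R (StalkRing q)) := by
  have hfin := associatedPrimes.finite (StalkRing q) (Stalk q A)
  have hsub : (p.asIdeal : Set R) ⊆
      ⋃ P ∈ associatedPrimes (StalkRing q) (Stalk q A), (P.comap (algebraMap R (StalkRing q))) := by
    intro x hx
    have hx' : algebraMap R (StalkRing q) x ∈ {r | IsSMulRegular (Stalk q A) r}ᶜ := h x hx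
    rw [← biUnion_associatedPrimes_eq_compl_regular] at hx'
    simpa only [Set.mem_iUnion, SetLike.mem_coe, Ideal.mem_comap] using hx'
  obtain ⟨P, hP, hle⟩ := (Ideal.subset_union_prime_finite hfin ⊤ ⊤ fun P hP _ _ ↦
    have := IsAssociatedPrime.isPrime hP
    Ideal.comap_isPrime _ _).1 hsub
  exact ⟨⟨P, IsAssociatedPrime.isPrime hP⟩, hP, hle⟩

lemma LocalDepthGE.of_covBy {p q : PrimeSpectrum R} (hpq : p ⋖ q) {t : ℕ} [Module.Finite R A]
    (h : LocalDepthGE q (t + 1) A) : LocalDepthGE p t A := by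
  induction t generalizing A with
  | zero => exact DepthGE.zero
  | succ t ih =>
    by_cases hreg : ∃ x ∈ p.asIdeal, IsSMulRegular (Stalk q A) (algebraMap R (StalkRing q) x)
    · obtain ⟨x, hxp, hx⟩ := hreg
      rw [LocalDepthGE.succ_iff_quotSMulTop hxp (isSMulRegular_stalk_of_le hpq.le hx)]
      exact ih ((LocalDepthGE.succ_iff_quotSMulTop (hpq.le hxp) hx).1 h)
    · push Not at hreg
      obtain ⟨P, hP, hpP⟩ := exists_associatedPrimes_stalk_le_comap hreg
      have hne : P ≠ closedPoint (StalkRing q) := by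
        rintro rfl
        obtain ⟨x, hx, hxA⟩ := DepthGE.exists_isSMulRegular (DepthGE.mono (by omega : 1 ≤ _) h)
        exact not_isSMulRegular_of_mem_associatedPrimes hP hx hxA
      have hcomap : P.comap (algebraMap R (StalkRing q)) = p := by
        refine (hpq.eq_or_eq hpP (comap_stalkRing_le q P)).resolve_right fun hPq ↦ hne ?_
        exact PrimeSpectrum.localization_comap_injective (StalkRing q) q.asIdeal.primeCompl
          (hPq.trans (comap_stalkRing_closedPoint q).symm)
      exact absurd (DepthGE.mono (by omega) h)
        (not_depthGE_two_of_covBy_closedPoint (covBy_closedPoint_of_comap hpq hcomap) hP)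

/-- The height of a prime of a noetherian ring as a natural number; it is finite, so
`ENat.toNat` loses nothing. -/
noncomputable def natHeight (p : PrimeSpectrum R) : ℕ := (Order.height p).toNat

lemma heightE_eq_natHeight (p : PrimeSpectrum R) : heightE R p = (natHeight p : ℕ∞) := by
  have hp := Ideal.height_ne_top p.2.ne_top
  rw [PrimeSpectrum.height_eq_orderHeight] at hp
  exact (ENat.natCast_toNat hp).symm

lemma natHeight_strictMono : StrictMono (natHeight (R := R)) := by
  intro p q hpq
  have hlt : heightE R p < heightE R q := by
    refine Order.height_strictMono hpq ?_
    exact (heightE_eq_natHeight p).trans_lt (ENat.natCast_lt_top _)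
  rw [heightE_eq_natHeight, heightE_eq_natHeight] at hlt
  exact_mod_cast hlt

lemma LocalDepthGE.of_le [Module.Finite R A] {j : ℕ} {p q : PrimeSpectrum R} (hpq : p ≤ q)
    (h : LocalDepthGE q (natHeight q - j) A) : LocalDepthGE p (natHeight p - j) A := by
  induction hn : natHeight q using Nat.strong_induction_on generalizing q with
  | _ n ih =>
    rcases hpq.eq_or_lt with rfl | hlt
    · exact h
    · have : WellFoundedGT (PrimeSpectrum R) :=
        StrictMono.wellFoundedGT (f := PrimeSpectrum.asIdeal) fun _ _ ↦ id
      obtain ⟨q', hpq', hq'⟩ := exists_le_covBy_of_lt hlt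
      have hheight := natHeight_strictMono hq'.lt
      refine ih (natHeight q') (hn ▸ hheight) hpq' ?_ rfl
      rcases le_or_gt (natHeight q') j with hj | hj
      · rw [Nat.sub_eq_zero_of_le hj]
        exact DepthGE.zero
      · exact DepthGE.mono (by omega : natHeight q' - j ≤ natHeight q - j - 1)
          (LocalDepthGE.of_covBy hq' (by rwa [Nat.sub_add_cancel (by omega)]))

end Monotone

/-! ### Depth along the spectrum -/

section LocalDepth

open IsLocalRing RingTheory.Sequence
open scoped Pointwise

variable {R : Type u} [CommRing R]
variable {A B : Type u} [AddCommGroup A] [Module R A] [AddCommGroup B] [Module R B]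
variable {p : PrimeSpectrum R} {t : ℕ}

lemma isUnit_algebraMap_stalkRing {s : R} (hs : s ∉ p.asIdeal) :
    IsUnit (algebraMap R (StalkRing p) s) :=
  IsLocalization.map_units (StalkRing p) (⟨s, hs⟩ : p.asIdeal.primeCompl)

lemma exists_stalk_retract {s : R} (hs : s ∉ p.asIdeal) {a : A →ₗ[R] B} {b : B →ₗ[R] A}
    (h : b ∘ₗ a = s • LinearMap.id) :
    ∃ (a' : Stalk p A →ₗ[StalkRing p] Stalk p B) (b' : Stalk p B →ₗ[StalkRing p] Stalk p A),
      b' ∘ₗ a' = LinearMap.id := by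
  obtain ⟨w, hw⟩ := isUnit_algebraMap_stalkRing hs
  refine ⟨stalkMap p a, (↑w⁻¹ : StalkRing p) • stalkMap p b, ?_⟩
  rw [LinearMap.smul_comp, ← stalkMap_comp, h, stalkMap_smul, stalkMap_id, ← hw, smul_smul,
    Units.inv_mul, one_smul]

lemma nonempty_stalk_self_equiv (p : PrimeSpectrum R) :
    Nonempty (Stalk p R ≃ₗ[StalkRing p] StalkRing p) :=
  ⟨(IsLocalizedModule.iso p.asIdeal.primeCompl
    (Algebra.linearMap R (StalkRing p))).extendScalarsOfIsLocalization p.asIdeal.primeCompl _⟩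

lemma projective_stalk (p : PrimeSpectrum R) [Module.Projective R A] :
    Module.Projective (StalkRing p) (Stalk p A) :=
  Module.projective_of_isLocalizedModule p.asIdeal.primeCompl
    (LocalizedModule.mkLinearMap p.asIdeal.primeCompl A)

lemma isSMulRegular_stalk_of_isSMulRegular {x : R} (hx : IsSMulRegular A x) :
    IsSMulRegular (Stalk p A) (algebraMap R (StalkRing p) x) := by
  refine isSMulRegular_stalk_iff.2 fun m ⟨c, hc, hcm⟩ ↦ ⟨c, hc, ?_⟩
  exact isSMulRegular_iff_right_eq_zero_of_smul.1 hx _ ((smul_comm x c m).trans hcm)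

lemma isSMulRegular_stalk_closedPoint_iff [IsLocalRing R] {x : R} :
    IsSMulRegular (Stalk (closedPoint R) A) (algebraMap R (StalkRing (closedPoint R)) x) ↔
      IsSMulRegular A x := by
  refine ⟨fun h ↦ isSMulRegular_iff_right_eq_zero_of_smul.2 fun m hm ↦ ?_,
    isSMulRegular_stalk_of_isSMulRegular⟩
  obtain ⟨c, hc, hcm⟩ := isSMulRegular_stalk_iff.1 h m
    ⟨1, (closedPoint R).asIdeal.one_notMem, by rw [one_smul, hm]⟩
  exact (notMem_maximalIdeal.1 hc).smul_eq_zero.1 hcm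

namespace LocalDepthGE

lemma of_smul_retract {s : R} (hs : s ∉ p.asIdeal) {a : A →ₗ[R] B} {b : B →ₗ[R] A}
    (h : b ∘ₗ a = s • LinearMap.id) (hB : LocalDepthGE p t B) : LocalDepthGE p t A := by
  obtain ⟨a', b', h'⟩ := exists_stalk_retract hs h
  exact DepthGE.of_retract h' hB

lemma of_retract {a : A →ₗ[R] B} {b : B →ₗ[R] A} (h : b ∘ₗ a = LinearMap.id)
    (hB : LocalDepthGE p t B) : LocalDepthGE p t A :=
  hB.of_smul_retract p.asIdeal.one_notMem (h.trans (one_smul _ _).symm)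

lemma self_iff : LocalDepthGE p t R ↔ DepthGE (StalkRing p) t (StalkRing p) := by
  obtain ⟨e⟩ := nonempty_stalk_self_equiv p
  exact ⟨DepthGE.of_equiv e.symm, DepthGE.of_equiv e⟩

lemma of_projective (h : LocalDepthGE p t R) [Module.Finite R A] [Module.Projective R A] :
    LocalDepthGE p t A := by
  have := projective_stalk (A := A) p
  exact DepthGE.of_projective (self_iff.1 h)

lemma of_not_stableAnnihilator_le (h : LocalDepthGE p t R)
    (hA : ¬ stableAnnihilator R A ≤ p.asIdeal) : LocalDepthGE p t A := by
  obtain ⟨s, hs, hsp⟩ := Set.not_subset.1 hA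
  obtain ⟨n, a, b, hab⟩ := exists_comp_eq_smul_of_mem_stableAnnihilator hs
  exact of_smul_retract hsp (LinearMap.ext hab) h.of_projective

lemma exists_isSMulRegular [IsNoetherianRing R] [Module.Finite R A]
    (h : LocalDepthGE p (t + 1) A) :
    ∃ x ∈ p.asIdeal, IsSMulRegular (Stalk p A) (algebraMap R (StalkRing p) x) := by
  obtain ⟨y, hy, hyA⟩ := DepthGE.exists_isSMulRegular h
  obtain ⟨⟨x, s⟩, hxs : y * algebraMap R _ s = algebraMap R _ x⟩ :=
    IsLocalization.surj p.asIdeal.primeCompl y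
  refine ⟨x, ?_, ?_⟩
  · rw [← IsLocalization.AtPrime.to_map_mem_maximal_iff (StalkRing p) p.asIdeal x, ← hxs]
    exact Ideal.mul_mem_right _ _ hy
  · rw [← hxs]
    exact hyA.mul ((isUnit_algebraMap_stalkRing s.2).isSMulRegular _)

lemma closedPoint_iff [IsLocalRing R] [IsNoetherianRing R] [Module.Finite R A] :
    LocalDepthGE (closedPoint R) t A ↔ DepthGE R t A := by
  induction t generalizing A with
  | zero => exact iff_of_true DepthGE.zero DepthGE.zero
  | succ t ih =>
    constructor
    · intro h
      obtain ⟨x, hx, hxA⟩ := h.exists_isSMulRegular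
      rw [DepthGE.succ_iff_quotSMulTop (isSMulRegular_stalk_closedPoint_iff.1 hxA) hx, ← ih]
      exact (LocalDepthGE.succ_iff_quotSMulTop hx hxA).1 h
    · intro h
      obtain ⟨x, hx, hxA⟩ := h.exists_isSMulRegular
      rw [LocalDepthGE.succ_iff_quotSMulTop (p := closedPoint R) hx
        (isSMulRegular_stalk_closedPoint_iff.2 hxA), ih]
      exact (DepthGE.succ_iff_quotSMulTop hxA hx).1 h

lemma of_isWeaklyRegular {rs : List R} (hmem : ∀ r ∈ rs, r ∈ p.asIdeal)
    (hrs : IsWeaklyRegular A rs) : LocalDepthGE p rs.length A := by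
  have hloc := hrs.of_isLocalizedModule (StalkRing p) p.asIdeal.primeCompl
    (LocalizedModule.mkLinearMap p.asIdeal.primeCompl A)
  have h := DepthGE.of_isWeaklyRegular (fun r hr ↦ ?_) hloc
  · rwa [List.length_map] at h
  · obtain ⟨x, hx, rfl⟩ := List.mem_map.1 hr
    exact (IsLocalization.AtPrime.to_map_mem_maximal_iff (StalkRing p) p.asIdeal x).2 (hmem x hx)

end LocalDepthGE

/-- `t` is the minimum of `depth X_p` over `X ∈ 𝒳`. -/
def IsMinLocalDepth (𝒳 : Set (ModuleCat.{u} R)) (p : PrimeSpectrum R) (t : ℕ) : Prop :=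
  (∀ X ∈ 𝒳, LocalDepthGE p t X) ∧ ∃ X ∈ 𝒳, ¬ LocalDepthGE p (t + 1) X

variable [IsNoetherianRing R]

lemma exists_mem_isSMulRegular_of_forall_localDepthGE [Module.Finite R A] (p : PrimeSpectrum R)
    (h : ∀ q, p ≤ q → LocalDepthGE q 1 A) : ∃ x ∈ p.asIdeal, IsSMulRegular A x := by
  by_contra! hx
  have hsub : (p.asIdeal : Set R) ⊆ ⋃ P ∈ associatedPrimes R A, (P : Set R) := by
    rw [biUnion_associatedPrimes_eq_compl_regular]
    exact hx
  obtain ⟨P, hP, hle⟩ := (Ideal.subset_union_prime_finite (associatedPrimes.finite R A) ⊤ ⊤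
    fun P hP _ _ ↦ IsAssociatedPrime.isPrime hP).1 hsub
  obtain ⟨hprime, u, hu⟩ := isAssociatedPrime_iff.1 hP
  have hmem (r : R) : r ∈ P ↔ r • u = 0 := by
    rw [hu, Submodule.mem_colon_singleton, Submodule.mem_bot]
  obtain ⟨x, hxP, hxA⟩ := (h ⟨P, hprime⟩ hle).exists_isSMulRegular
  obtain ⟨c, hc, hcu⟩ := isSMulRegular_stalk_iff.1 hxA u
    ⟨1, hprime.one_notMem, by rw [one_smul, (hmem x).1 hxP]⟩
  exact hc ((hmem c).2 hcu)

lemma exists_isWeaklyRegular_of_forall_localDepthGE [Module.Finite R A] (p : PrimeSpectrum R)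
    (h : ∀ q, p ≤ q → LocalDepthGE q t A) :
    ∃ rs : List R, (∀ r ∈ rs, r ∈ p.asIdeal) ∧ IsWeaklyRegular A rs ∧ rs.length = t := by
  induction t generalizing A with
  | zero => exact ⟨[], by simp, IsWeaklyRegular.nil R A, rfl⟩
  | succ t ih =>
    obtain ⟨x, hx, hxA⟩ := exists_mem_isSMulRegular_of_forall_localDepthGE (A := A) p
      fun q hq ↦ DepthGE.mono (by omega) (h q hq)
    have hquot (q : PrimeSpectrum R) (hq : p ≤ q) : LocalDepthGE q t (QuotSMulTop x A) :=
      (LocalDepthGE.succ_iff_quotSMulTop (hq hx) (isSMulRegular_stalk_of_isSMulRegular hxA)).1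
        (h q hq)
    obtain ⟨rs, hmem, hrs, rfl⟩ := ih hquot
    exact ⟨x :: rs, List.forall_mem_cons.2 ⟨hx, hmem⟩, IsWeaklyRegular.cons hxA hrs, rfl⟩

lemma natCast_le_localDepth_iff {M : ModuleCat.{u} R} [Module.Finite R M] :
    (t : ℕ∞) ≤ localDepth R p M ↔ LocalDepthGE p t M :=
  le_depthE_iff

lemma IsMinLocalDepth.iInf_localDepth_eq {𝒳 : Set (ModuleCat.{u} R)}
    (hfin : ∀ X ∈ 𝒳, Module.Finite R X) (h : IsMinLocalDepth 𝒳 p t) :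
    ⨅ X ∈ 𝒳, localDepth R p X = (t : ℕ∞) := by
  apply le_antisymm
  · obtain ⟨X, hX, hlt⟩ := h.2
    have := hfin X hX
    rw [← natCast_le_localDepth_iff, not_le] at hlt
    exact (iInf₂_le X hX).trans (Order.le_of_lt_add_one (by exact_mod_cast hlt))
  · refine le_iInf₂ fun X hX ↦ ?_
    have := hfin X hX
    exact natCast_le_localDepth_iff.2 (h.1 X hX)

lemma IsMinLocalDepth.natCast_eq_heightE_sub_iInf {𝒳 : Set (ModuleCat.{u} R)}
    (hfin : ∀ X ∈ 𝒳, Module.Finite R X) (ht : t ≤ natHeight p)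
    (h : IsMinLocalDepth 𝒳 p (natHeight p - t)) :
    (t : ℕ∞) = heightE R p - ⨅ X ∈ 𝒳, localDepth R p X := by
  rw [h.iInf_localDepth_eq hfin, heightE_eq_natHeight]
  norm_cast
  omega

lemma mem_psiDepth_iff {f : PrimeSpectrum R → ℕ} {M : ModuleCat.{u} R} :
    M ∈ psiDepth R f ↔ Module.Finite R M ∧ ∀ p, LocalDepthGE p (natHeight p - f p) M := by
  refine and_congr_right fun _ ↦ forall_congr' fun p ↦ ?_
  rw [heightE_eq_natHeight, ← natCast_le_localDepth_iff, ENat.natCast_sub]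

lemma ringKrullDim_stalkRing (p : PrimeSpectrum R) :
    ringKrullDim (StalkRing p) = (natHeight p : WithBot ℕ∞) := by
  have hp : Order.height p = (natHeight p : ℕ∞) := heightE_eq_natHeight p
  rw [IsLocalization.AtPrime.ringKrullDim_eq_height p.asIdeal (StalkRing p),
    PrimeSpectrum.height_eq_orderHeight, hp]
  rfl

lemma LocalDepthGE.le_natHeight (h : LocalDepthGE p t R) : t ≤ natHeight p := by
  have hle := DepthGE.le_ringKrullDim (self_iff.1 h)
  rw [ringKrullDim_stalkRing] at hle
  exact_mod_cast hle

lemma gradeE_le_natHeight (p : PrimeSpectrum R) : gradeE R p.asIdeal ≤ (natHeight p : ℕ∞) := by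
  refine sSup_le ?_
  rintro _ ⟨rs, hmem, hrs, rfl⟩
  exact_mod_cast (LocalDepthGE.of_isWeaklyRegular hmem hrs).le_natHeight

lemma natHeight_le_gradeE (hR : ∀ p : PrimeSpectrum R, LocalDepthGE p (natHeight p) R)
    (p : PrimeSpectrum R) : (natHeight p : ℕ∞) ≤ gradeE R p.asIdeal := by
  obtain ⟨rs, hmem, hrs, hlen⟩ := exists_isWeaklyRegular_of_forall_localDepthGE (A := R) p
    fun q hq ↦ DepthGE.mono (natHeight_strictMono.monotone hq) (hR q)
  exact le_sSup ⟨rs, hmem, hrs, by rw [hlen]⟩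

section LocalRing

variable [IsLocalRing R] {d : ℕ}

lemma natHeight_closedPoint (hd : ringKrullDim R = (d : WithBot ℕ∞)) :
    natHeight (closedPoint R) = d := by
  have hheight : (maximalIdeal R).height = (natHeight (closedPoint R) : ℕ∞) :=
    (PrimeSpectrum.height_eq_orderHeight (closedPoint R)).trans (heightE_eq_natHeight _)
  have hdim := maximalIdeal_height_eq_ringKrullDim (R := R)
  rw [hheight, hd] at hdim
  exact_mod_cast hdim

lemma IsCMLocalRing.depthGE (hCM : IsCMLocalRing R) (hd : ringKrullDim R = (d : WithBot ℕ∞)) :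
    DepthGE R d R := by
  have h := hCM.2
  rw [hd] at h
  exact le_depthE_iff.1 (by exact_mod_cast h.ge)

lemma DepthGE.localDepthGE_natHeight (hR : DepthGE R d R)
    (hd : ringKrullDim R = (d : WithBot ℕ∞)) (p : PrimeSpectrum R) :
    LocalDepthGE p (natHeight p) R := by
  refine LocalDepthGE.of_le (j := 0) (q := closedPoint R) (le_maximalIdeal p.2.ne_top) ?_
  rw [natHeight_closedPoint hd]
  exact LocalDepthGE.closedPoint_iff.2 hR

end LocalRing

end LocalDepth

/-! ### Localization of a resolving subcategory -/

section LocalizedSubcat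

open IsLocalRing

variable {R : Type u} [CommRing R]
variable {A B X Z : Type u} [AddCommGroup A] [Module R A] [AddCommGroup B] [Module R B]
  [AddCommGroup X] [Module R X] [AddCommGroup Z] [Module R Z]
variable {p : PrimeSpectrum R}

lemma nonempty_stalk_prod_equiv (p : PrimeSpectrum R) :
    Nonempty ((Stalk p A × Stalk p B) ≃ₗ[StalkRing p] Stalk p (A × B)) :=
  ⟨((IsLocalizedModule.iso p.asIdeal.primeCompl
    ((LocalizedModule.mkLinearMap p.asIdeal.primeCompl A).prodMap
      (LocalizedModule.mkLinearMap p.asIdeal.primeCompl B))).extendScalarsOfIsLocalization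
        p.asIdeal.primeCompl _).symm⟩

lemma nonempty_stalk_pi_equiv (p : PrimeSpectrum R) (n : ℕ) :
    Nonempty ((Fin n → StalkRing p) ≃ₗ[StalkRing p] Stalk p (Fin n → R)) :=
  ⟨((IsLocalizedModule.iso p.asIdeal.primeCompl
    (LinearMap.pi fun i : Fin n ↦ Algebra.linearMap R (StalkRing p) ∘ₗ
      LinearMap.proj i)).extendScalarsOfIsLocalization p.asIdeal.primeCompl _).symm⟩

section Noetherian

variable [IsNoetherianRing R] [Module.Finite R A]

lemma exists_stalkMap_eq_smul (h : Stalk p A →ₗ[StalkRing p] Stalk p B) :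
    ∃ s ∉ p.asIdeal, ∃ h₀ : A →ₗ[R] B, stalkMap p h₀ = algebraMap R (StalkRing p) s • h := by
  have : Module.FinitePresentation R A := Module.finitePresentation_of_finite R A
  obtain ⟨⟨h₀, s⟩, hs⟩ := IsLocalizedModule.surj p.asIdeal.primeCompl
    (LocalizedModule.map p.asIdeal.primeCompl (M := A) (N := B)) h
  exact ⟨s, s.2, h₀, by rw [algebraMap_smul]; exact hs.symm⟩

lemma exists_smul_eq_smul_of_stalkMap_eq {g h : A →ₗ[R] B} (e : stalkMap p g = stalkMap p h) :
    ∃ s ∉ p.asIdeal, s • g = s • h := by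
  have : Module.FinitePresentation R A := Module.finitePresentation_of_finite R A
  obtain ⟨s, hs⟩ := IsLocalizedModule.exists_of_eq (S := p.asIdeal.primeCompl)
    (f := LocalizedModule.map p.asIdeal.primeCompl (M := A) (N := B)) e
  exact ⟨s, s.2, hs⟩

end Noetherian

/-- `A` is a direct summand of `B` locally at `p`, with denominators cleared: some `s ∉ p`, acting
on `A`, factors through `B`. -/
def IsLocalSummand (p : PrimeSpectrum R) (A B : Type u) [AddCommGroup A] [Module R A]
    [AddCommGroup B] [Module R B] : Prop :=
  ∃ s ∉ p.asIdeal, ∃ (a : A →ₗ[R] B) (b : B →ₗ[R] A), b ∘ₗ a = s • LinearMap.id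

lemma isLocalSummand_of_retract [IsNoetherianRing R] [Module.Finite R A] [Module.Finite R B]
    {a : Stalk p A →ₗ[StalkRing p] Stalk p B} {b : Stalk p B →ₗ[StalkRing p] Stalk p A}
    (h : b ∘ₗ a = LinearMap.id) : IsLocalSummand p A B := by
  obtain ⟨s, hs, a₀, ha⟩ := exists_stalkMap_eq_smul a
  obtain ⟨t, ht, b₀, hb⟩ := exists_stalkMap_eq_smul b
  have hba : stalkMap p (b₀ ∘ₗ a₀) = stalkMap p ((t * s) • (LinearMap.id : A →ₗ[R] A)) := by
    rw [stalkMap_comp, ha, hb, LinearMap.comp_smul, LinearMap.smul_comp, h, stalkMap_smul,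
      stalkMap_id, smul_smul, map_mul, mul_comm]
  obtain ⟨w, hw, hwba⟩ := exists_smul_eq_smul_of_stalkMap_eq hba
  exact ⟨w * (t * s), p.asIdeal.primeCompl.mul_mem hw (p.asIdeal.primeCompl.mul_mem ht hs),
    a₀, w • b₀, by rw [LinearMap.smul_comp, hwba, smul_smul]⟩

section StalkRing

variable {N P Q : Type u} [AddCommGroup N] [Module (StalkRing p) N] [AddCommGroup P]
  [Module (StalkRing p) P] [AddCommGroup Q] [Module (StalkRing p) Q]

lemma exists_retract_stalk_pi [Module.Finite (StalkRing p) N]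
    [Module.Projective (StalkRing p) N] :
    ∃ (n : ℕ) (a : N →ₗ[StalkRing p] Stalk p (Fin n → R))
      (b : Stalk p (Fin n → R) →ₗ[StalkRing p] N), ∀ x, b (a x) = x := by
  obtain ⟨n, f, hf⟩ := Module.Finite.exists_fin' (StalkRing p) N
  obtain ⟨g, hg⟩ := exists_lift_of_projective hf LinearMap.id
  obtain ⟨e⟩ := nonempty_stalk_pi_equiv p n
  exact ⟨n, e.toLinearMap ∘ₗ g, f ∘ₗ e.symm.toLinearMap, fun x ↦ by simp [hg]⟩

lemma not_stableAnnihilator_le_of_projective_stalk [IsNoetherianRing R] [Module.Finite R A]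
    [Module.Projective (StalkRing p) (Stalk p A)] : ¬ stableAnnihilator R A ≤ p.asIdeal := by
  obtain ⟨n, a, b, h⟩ := exists_retract_stalk_pi (p := p) (N := Stalk p A)
  obtain ⟨s, hs, a₀, b₀, hab⟩ := isLocalSummand_of_retract (LinearMap.ext h)
  exact fun hle ↦ hs (hle (mem_stableAnnihilator_of_comp a₀ b₀ (LinearMap.congr_fun hab)))

/-- Lift `R_p^n → Z_p` to `B` and compare: up to a unit, the induced map on kernels comes from a map
over `R`, and `E` is the pushout along it. -/
lemma IsSES.exists_isSES_stalk_equiv [IsNoetherianRing R] [Module.Finite R Z]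
    {f : Stalk p X →ₗ[StalkRing p] N} {g : N →ₗ[StalkRing p] Stalk p Z} (h : IsSES f g) :
    ∃ (E : ModuleCat.{u} R) (j : X →ₗ[R] E) (r : E →ₗ[R] Z),
      IsSES j r ∧ Nonempty (Stalk p E ≃ₗ[StalkRing p] N) := by
  obtain ⟨n, c, hc⟩ := Module.Finite.exists_fin' R Z
  set ι := (LinearMap.ker c).subtype
  have hιc : IsSES ι c := isSES_ker hc
  have := hιc.finite_left
  have := projective_stalk (A := Fin n → R) p
  obtain ⟨l, hl⟩ := exists_lift_of_projective h.surjective (stalkMap p c)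
  obtain ⟨k, hk⟩ := h.exists_comp_eq (l ∘ₗ stalkMap p ι) fun x ↦ by
    rw [LinearMap.comp_apply, hl, (hιc.stalk p).apply_apply_eq_zero]
  obtain ⟨s, hs, k₀, hk₀⟩ := exists_stalkMap_eq_smul k
  obtain ⟨w, hw⟩ := isUnit_algebraMap_stalkRing hs
  let Q := (LinearMap.range (k₀.prod (-ι))).mkQ
  have hQ : IsSES (k₀.prod (-ι)) Q :=
    ⟨hιc.prod_neg_injective k₀, Submodule.mkQ_surjective _, (Submodule.ker_mkQ _).symm⟩
  obtain ⟨r, hr, hjr⟩ := hιc.exists_isSES_pushout hQ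
  have hf : IsSES ((↑w⁻¹ : StalkRing p) • f) g := h.units_smul w⁻¹
  obtain ⟨u, hu⟩ := (hQ.stalk p).exists_desc
    (((↑w⁻¹ : StalkRing p) • f) ∘ₗ stalkMap p (LinearMap.fst R X (Fin n → R)) +
      l ∘ₗ stalkMap p (LinearMap.snd R X (Fin n → R))) fun x ↦ by
    have hneg : stalkMap p (-ι) = -stalkMap p ι := map_neg _ _
    rw [LinearMap.add_apply, LinearMap.comp_apply, LinearMap.comp_apply, stalkMap_comp_apply,
      stalkMap_comp_apply, LinearMap.fst_prod, LinearMap.snd_prod, hk₀, hneg,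
      LinearMap.smul_apply, LinearMap.smul_apply, map_smul, hk, ← hw, smul_smul, w.inv_mul,
      one_smul, LinearMap.neg_apply, map_neg, LinearMap.comp_apply, add_neg_cancel]
  refine ⟨.of R _, _, r, hjr, ⟨LinearEquiv.ofBijective u
    ((hjr.stalk p).bijective_of_comp_eq hf (fun x ↦ ?_) fun y ↦ ?_)⟩⟩
  · rw [← stalkMap_comp_apply, hu]
    simp [stalkMap_comp_apply]
  · obtain ⟨z, rfl⟩ := (hQ.stalk p).surjective y
    have hrQ : r ∘ₗ Q = c ∘ₗ LinearMap.snd R X (Fin n → R) := LinearMap.ext hr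
    rw [hu, stalkMap_comp_apply, hrQ, ← stalkMap_comp_apply]
    simp [hl, h.apply_apply_eq_zero]

end StalkRing

/-- The additive closure of `𝒳_p`: the direct summands of the localizations `X_p`, `X ∈ 𝒳`. -/
def localizedSubcat (𝒳 : Set (ModuleCat.{u} R)) (p : PrimeSpectrum R) :
    Set (ModuleCat.{u} (StalkRing p)) :=
  {N | ∃ X ∈ 𝒳, ∃ (a : N →ₗ[StalkRing p] Stalk p X) (b : Stalk p X →ₗ[StalkRing p] N),
    ∀ x, b (a x) = x}

section Membership

variable {𝒳 : Set (ModuleCat.{u} R)}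
variable {K M N P : Type u} [AddCommGroup K] [Module (StalkRing p) K] [AddCommGroup M]
  [Module (StalkRing p) M] [AddCommGroup N] [Module (StalkRing p) N] [AddCommGroup P]
  [Module (StalkRing p) P]

lemma stalk_mem_localizedSubcat (hX : ModuleCat.of R X ∈ 𝒳) :
    ModuleCat.of (StalkRing p) (Stalk p X) ∈ localizedSubcat 𝒳 p :=
  ⟨.of R X, hX, LinearMap.id, LinearMap.id, fun _ ↦ rfl⟩

lemma localizedSubcat_of_retract {a : M →ₗ[StalkRing p] N} {b : N →ₗ[StalkRing p] M}
    (h : ∀ x, b (a x) = x) (hN : ModuleCat.of (StalkRing p) N ∈ localizedSubcat 𝒳 p) :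
    ModuleCat.of (StalkRing p) M ∈ localizedSubcat 𝒳 p := by
  obtain ⟨X, hX, a', b', h'⟩ := hN
  exact ⟨X, hX, a' ∘ₗ a, b ∘ₗ b', fun x ↦ (congrArg b (h' (a x))).trans (h x)⟩

lemma localizedSubcat_prod (hX : IsResolving R 𝒳)
    (hM : ModuleCat.of (StalkRing p) M ∈ localizedSubcat 𝒳 p)
    (hN : ModuleCat.of (StalkRing p) N ∈ localizedSubcat 𝒳 p) :
    ModuleCat.of (StalkRing p) (M × N) ∈ localizedSubcat 𝒳 p := by
  obtain ⟨X, hX₁, a, b, h⟩ := hM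
  obtain ⟨Y, hY₁, a', b', h'⟩ := hN
  obtain ⟨e⟩ := nonempty_stalk_prod_equiv (A := X) (B := Y) p
  refine localizedSubcat_of_retract (a := e.toLinearMap ∘ₗ a.prodMap a')
    (b := b.prodMap b' ∘ₗ e.symm.toLinearMap) (fun x ↦ ?_)
    (stalk_mem_localizedSubcat (hX.prod hX₁ hY₁))
  simp only [LinearMap.comp_apply, LinearEquiv.coe_coe, e.symm_apply_apply]
  exact Prod.ext (h x.1) (h' x.2)

lemma localizedSubcat_of_projective (hX : IsResolving R 𝒳) [Module.Finite (StalkRing p) N]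
    [Module.Projective (StalkRing p) N] :
    ModuleCat.of (StalkRing p) N ∈ localizedSubcat 𝒳 p := by
  obtain ⟨n, a, b, h⟩ := exists_retract_stalk_pi (p := p) (N := N)
  exact ⟨.of R (Fin n → R), hX.of_projective, a, b, h⟩

variable [IsNoetherianRing R]

/-- If `N` is a direct summand of `X_p`, lift both maps to surjections from projectives; then `K`
is a direct summand of `(Ω X)_p × P`. -/
lemma localizedSubcat_of_syzygy (hX : IsResolving R 𝒳) [Module.Finite (StalkRing p) P]
    [Module.Projective (StalkRing p) P] {i : K →ₗ[StalkRing p] P} {q : P →ₗ[StalkRing p] N}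
    (h : IsSES i q) (hN : ModuleCat.of (StalkRing p) N ∈ localizedSubcat 𝒳 p) :
    ModuleCat.of (StalkRing p) K ∈ localizedSubcat 𝒳 p := by
  obtain ⟨X, hX₁, a, b, hab⟩ : ∃ X ∈ 𝒳, ∃ (a : N →ₗ[StalkRing p] Stalk p X)
    (b : Stalk p X →ₗ[StalkRing p] N), ∀ x, b (a x) = x := hN
  have := hX.fg X hX₁
  obtain ⟨n, c, hc⟩ := Module.Finite.exists_fin' R X
  have hsyz : ModuleCat.of R (LinearMap.ker c) ∈ 𝒳 := hX.of_syzygy (isSES_ker hc) hX₁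
  have hL := (isSES_ker hc).stalk p
  have := projective_stalk (A := Fin n → R) p
  obtain ⟨α, hα⟩ := exists_lift_of_projective hL.surjective (a ∘ₗ q)
  obtain ⟨β, hβ⟩ := exists_lift_of_projective h.surjective (b ∘ₗ stalkMap p c)
  obtain ⟨α', hα'⟩ := hL.exists_comp_eq (α ∘ₗ i) fun x ↦ by simp [hα, h.apply_apply_eq_zero]
  obtain ⟨β', hβ'⟩ := h.exists_comp_eq (β ∘ₗ stalkMap p (LinearMap.ker c).subtype)
    fun x ↦ by simp only [LinearMap.comp_apply, hβ, hL.apply_apply_eq_zero, map_zero]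
  obtain ⟨δ, hδ⟩ := h.exists_comp_eq (LinearMap.id - β ∘ₗ α) fun x ↦ by simp [hα, hβ, hab]
  refine localizedSubcat_of_retract (a := α'.prod i) (b := β'.coprod δ) (fun x ↦ h.injective ?_)
    (localizedSubcat_prod hX (stalk_mem_localizedSubcat hsyz)
      (localizedSubcat_of_projective (N := P) hX))
  simp [hα', hβ', hδ]

lemma localizedSubcat_of_stalk_extension (hX : IsResolving R 𝒳) (hZ : ModuleCat.of R Z ∈ 𝒳)
    {f : N →ₗ[StalkRing p] M} {g : M →ₗ[StalkRing p] Stalk p Z} (h : IsSES f g)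
    (hN : ModuleCat.of (StalkRing p) N ∈ localizedSubcat 𝒳 p) :
    ModuleCat.of (StalkRing p) M ∈ localizedSubcat 𝒳 p := by
  have := hX.finite hZ
  obtain ⟨X, hX₁, a, b, hab⟩ := hN
  obtain ⟨e⟩ := nonempty_equiv_prod_ker hab
  obtain ⟨E, j, r, hjr, ⟨e'⟩⟩ := (h.prodMap_id.comp_equiv e).exists_isSES_stalk_equiv
  exact localizedSubcat_of_retract (a := e'.symm.toLinearMap ∘ₗ LinearMap.inl _ _ _)
    (b := LinearMap.fst _ _ _ ∘ₗ e'.toLinearMap) (fun x ↦ by simp)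
    (stalk_mem_localizedSubcat (hX.of_extension hjr hX₁ hZ))

lemma localizedSubcat_of_extension (hX : IsResolving R 𝒳) {f : N →ₗ[StalkRing p] M}
    {g : M →ₗ[StalkRing p] P} (h : IsSES f g)
    (hN : ModuleCat.of (StalkRing p) N ∈ localizedSubcat 𝒳 p)
    (hP : ModuleCat.of (StalkRing p) P ∈ localizedSubcat 𝒳 p) :
    ModuleCat.of (StalkRing p) M ∈ localizedSubcat 𝒳 p := by
  obtain ⟨Z, hZ, a, b, hab⟩ : ∃ Z ∈ 𝒳, ∃ (a : P →ₗ[StalkRing p] Stalk p Z)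
    (b : Stalk p Z →ₗ[StalkRing p] P), ∀ x, b (a x) = x := hP
  exact localizedSubcat_of_retract
    (a := fiberProduct.lift LinearMap.id (a ∘ₗ g) fun x ↦ (hab (g x)).symm)
    (b := fiberProduct.fst g b) (fun _ ↦ rfl)
    (localizedSubcat_of_stalk_extension hX hZ (fiberProduct.isSES_snd h b) hN)

lemma isResolving_localizedSubcat (hX : IsResolving R 𝒳) (p : PrimeSpectrum R) :
    IsResolving (StalkRing p) (localizedSubcat 𝒳 p) where
  fg := by
    rintro N ⟨X, hX₁, a, b, hab⟩
    have := hX.fg X hX₁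
    exact Module.Finite.of_surjective b fun x ↦ ⟨a x, hab x⟩
  iso_closed := by
    rintro M N ⟨e⟩ hM
    exact localizedSubcat_of_retract (a := e.symm.toLinearMap) (b := e.toLinearMap)
      (fun x ↦ by simp) hM
  proj_mem M _ _ := localizedSubcat_of_projective hX
  summand_closed M N h := localizedSubcat_of_retract (a := LinearMap.inl _ M N)
    (b := LinearMap.fst _ M N) (fun _ ↦ rfl) h
  ext_closed A B C f g h hA hC := localizedSubcat_of_extension hX h hA hC
  syzygy_closed K P M f g h _ _ _ hM := localizedSubcat_of_syzygy hX h hM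

end Membership

end LocalizedSubcat

/-! ### The subcategory `ψ(f)` -/

section PsiDepth

open IsLocalRing
open scoped Pointwise

variable {R : Type u} [CommRing R]
variable {E X : Type u} [AddCommGroup E] [Module R E] [AddCommGroup X] [Module R X]
variable {p : PrimeSpectrum R}

lemma LocalDepthGE.of_smulPullback {π : E →ₗ[R] X} (hπ : Function.Surjective π) {z : R}
    (hz : z ∈ p.asIdeal) {t : ℕ} (h : LocalDepthGE p t (smulPullback π z)) :
    LocalDepthGE p t X := by
  have hs := (fiberProduct.isSES_subtype hπ (z • LinearMap.id)).stalk p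
  refine DepthGE.of_smul_section hs (r := stalkMap p (LinearMap.snd R E X))
    (s := stalkMap p (LinearMap.inr R E X)) (c := algebraMap R (StalkRing p) (-z)) ?_ ?_ ?_ h
  · rw [← stalkMap_comp, LinearMap.snd_comp_inr, stalkMap_id]
  · exact (IsLocalization.AtPrime.to_map_mem_maximal_iff (StalkRing p) p.asIdeal (-z)).2
      (neg_mem hz)
  · rw [← stalkMap_comp, ← stalkMap_id, ← stalkMap_smul]
    congr 1
    ext x
    simp

lemma subsingleton_stalk_residueMod [IsLocalRing R] (hp : p ≠ closedPoint R) :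
    Subsingleton (Stalk p (residueMod R)) := by
  obtain ⟨c, hc, hcp⟩ : ∃ c ∈ maximalIdeal R, c ∉ p.asIdeal := by
    by_contra! hle
    exact hp (PrimeSpectrum.ext (le_antisymm (le_maximalIdeal p.2.ne_top) hle))
  refine subsingleton_of_forall_eq 0 fun u ↦ ?_
  induction u using LocalizedModule.induction_on with
  | h m s =>
    refine stalk_mk_eq_zero_iff.2 ⟨c, hcp, ?_⟩
    change c • (m : ResidueField R) = 0
    rw [Algebra.smul_def, ResidueField.algebraMap_eq, (residue_eq_zero_iff c).2 hc, zero_mul]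

variable [IsNoetherianRing R]

lemma isResolving_psiDepth (hR : ∀ p : PrimeSpectrum R, LocalDepthGE p (natHeight p) R)
    (f : PrimeSpectrum R → ℕ) : IsResolving R (psiDepth R f) where
  fg _ h := h.1
  iso_closed M N := by
    rintro ⟨e⟩ h
    obtain ⟨_, hM⟩ := mem_psiDepth_iff.1 h
    exact mem_psiDepth_iff.2 ⟨.equiv e, fun p ↦ (hM p).of_retract (a := e.symm.toLinearMap)
      (b := e.toLinearMap) (by ext; simp)⟩
  proj_mem M _ _ := mem_psiDepth_iff.2
    ⟨inferInstance, fun p ↦ .of_projective ((hR p).mono (Nat.sub_le _ _))⟩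
  summand_closed M N h := by
    obtain ⟨(_ : Module.Finite R (M × N)), hMN⟩ := mem_psiDepth_iff.1 h
    exact mem_psiDepth_iff.2 ⟨.of_surjective (LinearMap.fst R M N) LinearMap.fst_surjective,
      fun p ↦ LocalDepthGE.of_retract (B := M × N) (LinearMap.fst_comp_inl R M N) (hMN p)⟩
  ext_closed A B C i q h hA hC := by
    obtain ⟨_, hA⟩ := mem_psiDepth_iff.1 hA
    obtain ⟨_, hC⟩ := mem_psiDepth_iff.1 hC
    exact mem_psiDepth_iff.2 ⟨h.finite_middle, fun p ↦ DepthGE.middle (h.stalk p) (hA p) (hC p)⟩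
  syzygy_closed K P M i q h _ _ _ hM := mem_psiDepth_iff.2 ⟨inferInstance, fun p ↦
    DepthGE.ker (h.stalk p) (.of_projective ((hR p).mono (Nat.sub_le _ _)))
      ((mem_psiDepth_iff.1 hM).2 p)⟩

lemma LocalDepthGE.of_isMinSyz [IsLocalRing R] (hR : LocalDepthGE p (natHeight p) R) (n : ℕ)
    {t : ℕ} {M K : ModuleCat.{u} R} (hK : IsMinSyz R n M K) [Module.Finite R M]
    (hM : LocalDepthGE p (min (natHeight p) t) M) :
    LocalDepthGE p (min (natHeight p) (t + n)) K := by
  induction n generalizing t M with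
  | zero =>
    obtain ⟨e⟩ := hK
    exact hM.of_retract (a := e.toLinearMap) (b := e.symm.toLinearMap) (by ext; simp)
  | succ n ih =>
    obtain ⟨F, g, K', i, _, _, hg, -, hi, hgi, hK'⟩ := hK
    have hs : IsSES i g := ⟨hi, hg, hgi⟩
    have := hs.finite_left
    rw [← add_assoc, Nat.add_right_comm]
    refine ih (t := t + 1) hK' ?_
    rcases Nat.lt_or_ge t (natHeight p) with ht | ht
    · rw [min_eq_right ht.le] at hM
      rw [min_eq_right ht]
      exact DepthGE.left (hs.stalk p) (.of_projective (hR.mono ht)) hM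
    · rw [min_eq_left ht] at hM
      rw [min_eq_left (by omega)]
      exact DepthGE.ker (hs.stalk p) (.of_projective hR) hM

lemma finite_of_isMinSyz [IsLocalRing R] (n : ℕ) {M K : ModuleCat.{u} R} (hK : IsMinSyz R n M K)
    [Module.Finite R M] : Module.Finite R K := by
  induction n generalizing M with
  | zero =>
    obtain ⟨e⟩ := hK
    exact .equiv e.symm
  | succ n ih =>
    obtain ⟨F, g, K', i, _, _, hg, -, hi, hgi, hK'⟩ := hK
    have := IsSES.finite_left ⟨hi, hg, hgi⟩
    exact ih hK'

lemma mem_psiDepth_of_isMinSyz_residueMod [IsLocalRing R] {d : ℕ}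
    (hd : ringKrullDim R = (d : WithBot ℕ∞))
    (hR : ∀ p : PrimeSpectrum R, LocalDepthGE p (natHeight p) R) (f : PrimeSpectrum R → ℕ)
    {K : ModuleCat.{u} R} (hK : IsMinSyz R d (residueMod R) K) : K ∈ psiDepth R f := by
  suffices hdepth : ∀ p, LocalDepthGE p (natHeight p) K from
    mem_psiDepth_iff.2 ⟨finite_of_isMinSyz d hK, fun p ↦ (hdepth p).mono (Nat.sub_le _ _)⟩
  intro p
  rcases eq_or_ne p (closedPoint R) with rfl | hp
  · have h := (hR (closedPoint R)).of_isMinSyz d (t := 0) hK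
      (by rw [Nat.min_zero]; exact DepthGE.zero)
    rwa [zero_add, natHeight_closedPoint hd, min_self, ← natHeight_closedPoint hd] at h
  · have := subsingleton_stalk_residueMod hp
    have h := (hR p).of_isMinSyz d (t := natHeight p) hK DepthGE.of_subsingleton
    rwa [min_eq_left (Nat.le_add_right _ _)] at h

lemma exists_localDepth_eq_natHeight_sub
    (hR : ∀ p : PrimeSpectrum R, LocalDepthGE p (natHeight p) R) (p : PrimeSpectrum R) {a : ℕ}
    (ha : a ≤ natHeight p) :
    ∃ A : ModuleCat.{u} R, Module.Finite R A ∧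
      (∀ q, p ≤ q → LocalDepthGE q (natHeight q - a) A) ∧
      ¬ LocalDepthGE p (natHeight p - a + 1) A := by
  induction a with
  | zero =>
    exact ⟨.of R R, inferInstanceAs (Module.Finite R R), fun q _ ↦ hR q,
      fun h ↦ h.le_natHeight.not_gt (Nat.lt_succ_self _)⟩
  | succ a ih =>
    obtain ⟨A, hA, hge, hlt⟩ := ih (by omega)
    have hpos (q : PrimeSpectrum R) (hq : p ≤ q) : natHeight q - a = natHeight q - (a + 1) + 1 := by
      have := natHeight_strictMono.monotone hq
      omega
    obtain ⟨x, hx, hxA⟩ := exists_mem_isSMulRegular_of_forall_localDepthGE (A := A) p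
      fun q hq ↦ (hge q hq).mono (by have := hpos q hq; omega)
    refine ⟨.of R (QuotSMulTop x A), inferInstanceAs (Module.Finite R (QuotSMulTop x A)),
      fun q hq ↦ ?_, fun h ↦ hlt ?_⟩
    · refine (LocalDepthGE.succ_iff_quotSMulTop (hq hx)
        (isSMulRegular_stalk_of_isSMulRegular hxA)).1 ?_
      rw [← hpos q hq]
      exact hge q hq
    · rw [hpos p le_rfl]
      exact (LocalDepthGE.succ_iff_quotSMulTop hx (isSMulRegular_stalk_of_isSMulRegular hxA)).2 h

/-- A module of depth `ht p - f p` at `p` is made free off `V(p)` by pullbacks along multiplication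
by elements of `p`; grade consistency then bounds its depth at the primes containing `p`. -/
lemma exists_mem_psiDepth_not_localDepthGE
    (hR : ∀ p : PrimeSpectrum R, LocalDepthGE p (natHeight p) R) {f : PrimeSpectrum R → ℕ}
    (hf : ∀ p q : PrimeSpectrum R, p.asIdeal ≤ q.asIdeal → f p ≤ f q) {p : PrimeSpectrum R}
    (hp : f p ≤ natHeight p) :
    ∃ Y ∈ psiDepth R f, ¬ LocalDepthGE p (natHeight p - f p + 1) Y := by
  obtain ⟨A, hA, hdepth⟩ := exists_localDepth_eq_natHeight_sub hR p hp
  obtain ⟨Y, hY, ⟨hge, hlt⟩, hfree⟩ := exists_le_radical_stableAnnihilator (J := p.asIdeal)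
    (p := fun Y ↦ (∀ q, p ≤ q → LocalDepthGE q (natHeight q - f p) Y) ∧
      ¬ LocalDepthGE p (natHeight p - f p + 1) Y)
    (fun X n π z hz hπ ⟨hge, hlt⟩ ↦ by
      refine ⟨fun q hq ↦ ?_, fun h ↦ hlt (h.of_smulPullback hπ hz)⟩
      have hker : LocalDepthGE q (natHeight q - f p) (LinearMap.ker π) :=
        DepthGE.ker ((isSES_ker hπ).stalk q) (.of_projective ((hR q).mono (Nat.sub_le _ _)))
          (hge q hq)
      exact DepthGE.middle ((fiberProduct.isSES_snd (isSES_ker hπ) _).stalk q) hker (hge q hq))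
    A hdepth
  refine ⟨Y, mem_psiDepth_iff.2 ⟨hY, fun q ↦ ?_⟩, hlt⟩
  by_cases hq : p ≤ q
  · exact (hge q hq).mono (Nat.sub_le_sub_left (hf p q hq) _)
  · exact .of_not_stableAnnihilator_le ((hR q).mono (Nat.sub_le _ _))
      fun hle ↦ hq (hfree.trans (q.2.radical_le_iff.2 hle))

lemma GradeConsistent.le_natHeight {f : PrimeSpectrum R → ℕ} (hf : GradeConsistent R f)
    (p : PrimeSpectrum R) : f p ≤ natHeight p := by
  exact_mod_cast (hf.1 p).trans (gradeE_le_natHeight p)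

lemma GradeConsistent.isMinLocalDepth_psiDepth {f : PrimeSpectrum R → ℕ}
    (hf : GradeConsistent R f) (hR : ∀ p : PrimeSpectrum R, LocalDepthGE p (natHeight p) R)
    (p : PrimeSpectrum R) : IsMinLocalDepth (psiDepth R f) p (natHeight p - f p) :=
  ⟨fun _ hX ↦ (mem_psiDepth_iff.1 hX).2 p,
    exists_mem_psiDepth_not_localDepthGE hR hf.2 (hf.le_natHeight p)⟩

end PsiDepth

/-! ### Resolving subcategories are determined by depth -/

section Classification

open IsLocalRing

variable {R : Type u} [CommRing R]
variable {A F M X : Type u} [AddCommGroup A] [Module R A] [AddCommGroup F] [Module R F]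
  [AddCommGroup M] [Module R M] [AddCommGroup X] [Module R X]
variable {p : PrimeSpectrum R}

lemma algebraMap_mem_stableAnnihilator_stalk {y : R} (h : y ∈ stableAnnihilator R A) :
    algebraMap R (StalkRing p) y ∈ stableAnnihilator (StalkRing p) (Stalk p A) := by
  obtain ⟨n, a, b, hab⟩ := exists_comp_eq_smul_of_mem_stableAnnihilator h
  have := projective_stalk (A := Fin n → R) p
  refine mem_stableAnnihilator_of_comp (stalkMap p a) (stalkMap p b) fun x ↦ ?_
  have hba : b ∘ₗ a = y • LinearMap.id := LinearMap.ext hab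
  rw [stalkMap_comp_apply, hba, stalkMap_smul, stalkMap_id]
  rfl

lemma stalk_mem_freeOnPuncturedSpec [Module.Finite R A] {I : Ideal R}
    (hp : p.asIdeal ∈ I.minimalPrimes) (hI : I ≤ (stableAnnihilator R A).radical) :
    ModuleCat.of (StalkRing p) (Stalk p A) ∈ freeOnPuncturedSpec (StalkRing p) := by
  refine ⟨inferInstanceAs (Module.Finite (StalkRing p) (Stalk p A)), ?_⟩
  change maximalIdeal (StalkRing p) ≤ (stableAnnihilator (StalkRing p) (Stalk p A)).radical
  rw [Ideal.radical_eq_sInf]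
  refine le_sInf fun Q ⟨hle, hQ⟩ ↦ ?_
  have hprime : (Q.comap (algebraMap R (StalkRing p))).IsPrime := Ideal.IsPrime.comap _
  have hIQ : I ≤ Q.comap (algebraMap R (StalkRing p)) :=
    hI.trans (hprime.radical_le_iff.2 fun y hy ↦ hle (algebraMap_mem_stableAnnihilator_stalk hy))
  rw [← Localization.AtPrime.map_eq_maximalIdeal, Ideal.map_le_iff_le_comap]
  exact hp.2 ⟨hprime, hIQ⟩ (comap_stalkRing_le p ⟨Q, hQ⟩)

lemma isLocalSummand_fiberProduct [Module.Projective R F] {π : F →ₗ[R] X}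
    (hπ : Function.Surjective π) {s : R} (hs : s ∉ p.asIdeal) {a : M →ₗ[R] X} {b : X →ₗ[R] M}
    (hab : b ∘ₗ a = s • LinearMap.id) :
    IsLocalSummand p (fiberProduct π a) (LinearMap.ker π × F) := by
  have hab' (x : M) : b (a x) = s • x := LinearMap.congr_fun hab x
  obtain ⟨e, he⟩ := exists_lift_of_projective hπ (a ∘ₗ b ∘ₗ π)
  have hV (v : fiberProduct π a) : π v.1.1 = a v.1.2 := fiberProduct.mem_iff.1 v.2
  obtain ⟨ψ, hψ⟩ := (isSES_ker hπ).exists_comp_eq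
    (s • fiberProduct.fst π a - e ∘ₗ fiberProduct.fst π a) fun v ↦ by simp [he, hV, hab']
  refine ⟨s, hs, ψ.prod (fiberProduct.fst π a),
    fiberProduct.lift ((LinearMap.ker π).subtype.coprod e)
      ((0 : LinearMap.ker π →ₗ[R] M).coprod (b ∘ₗ π)) ?_, ?_⟩
  · rintro ⟨k, y⟩
    simp [he]
  · refine LinearMap.ext fun v ↦ fiberProduct.ext ?_ ?_
    · have h := hψ v
      simp only [Submodule.subtype_apply] at h
      simp [h]
    · simp [hV, hab']

variable [IsNoetherianRing R]

lemma free_of_isRegLocalRing (hreg : IsRegLocalRing (StalkRing p))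
    (hR : LocalDepthGE p (natHeight p) R) {N : Type u} [AddCommGroup N] [Module (StalkRing p) N]
    [Module.Finite (StalkRing p) N] (hN : DepthGE (StalkRing p) (natHeight p) N) :
    Module.Free (StalkRing p) N := by
  obtain ⟨_, s, hs, hdim⟩ := hreg
  rw [ringKrullDim_stalkRing] at hdim
  exact DepthGE.free hs (by exact_mod_cast hdim.ge) (LocalDepthGE.self_iff.1 hR) hN

variable {𝒳 𝒵 : Set (ModuleCat.{u} R)}

lemma exists_isMinLocalDepth (hX : ModuleCat.of R R ∈ 𝒳) (p : PrimeSpectrum R) :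
    ∃ t, IsMinLocalDepth 𝒳 p t := by
  classical
  have hex : ∃ t, ∃ X ∈ 𝒳, ¬ LocalDepthGE p (t + 1) X :=
    ⟨natHeight p, .of R R, hX, fun h ↦ h.le_natHeight.not_gt (Nat.lt_succ_self _)⟩
  refine ⟨Nat.find hex, fun X hX' ↦ ?_, Nat.find_spec hex⟩
  rcases ht : Nat.find hex with _ | t
  · exact DepthGE.zero
  · by_contra hlt
    exact Nat.find_min hex (m := t) (by omega) ⟨X, hX', hlt⟩

namespace IsResolving

lemma isMinLocalDepth_le_natHeight (hX : IsResolving R 𝒳) {t : ℕ}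
    (h : IsMinLocalDepth 𝒳 p t) : t ≤ natHeight p :=
  (h.1 (.of R R) hX.of_projective).le_natHeight

lemma exists_isMinLocalDepth_natHeight_sub (hX : IsResolving R 𝒳) :
    ∃ f : PrimeSpectrum R → ℕ, ∀ p, f p ≤ natHeight p ∧
      IsMinLocalDepth 𝒳 p (natHeight p - f p) := by
  choose n hn using exists_isMinLocalDepth (𝒳 := 𝒳) hX.of_projective
  refine ⟨fun p ↦ natHeight p - n p, fun p ↦ ⟨Nat.sub_le _ _, ?_⟩⟩
  rw [Nat.sub_sub_self (hX.isMinLocalDepth_le_natHeight (hn p))]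
  exact hn p

lemma gradeConsistent (hX : IsResolving R 𝒳)
    (hR : ∀ p : PrimeSpectrum R, LocalDepthGE p (natHeight p) R) {f : PrimeSpectrum R → ℕ}
    (hf : ∀ p, f p ≤ natHeight p ∧ IsMinLocalDepth 𝒳 p (natHeight p - f p)) :
    GradeConsistent R f := by
  refine ⟨fun p ↦ (Nat.cast_le.2 (hf p).1).trans (natHeight_le_gradeE hR p), fun p q hpq ↦ ?_⟩
  obtain ⟨X, hX₁, hlt⟩ := (hf p).2.2
  have := hX.fg X hX₁
  have hge : LocalDepthGE p (natHeight p - f q) X := .of_le hpq ((hf q).2.1 X hX₁)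
  by_contra! hqp
  exact hlt (hge.mono (by have := (hf p).1; omega))

lemma exists_isLocalSummand_le_radical (hX : IsResolving R 𝒳) (hX₁ : ModuleCat.of R X ∈ 𝒳)
    (h : IsLocalSummand p A X) :
    ∃ Y ∈ 𝒳, IsLocalSummand p A Y ∧
      stableAnnihilator R A ≤ (stableAnnihilator R Y).radical := by
  have := hX.finite hX₁
  obtain ⟨Y, -, ⟨hY, hAY⟩, hle⟩ := exists_le_radical_stableAnnihilator
    (J := stableAnnihilator R A) (p := fun Y ↦ Y ∈ 𝒳 ∧ IsLocalSummand p A Y)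
    (fun X n π z hz hπ ⟨hX₁, s, hs, a, b, hab⟩ ↦ by
      refine ⟨hX.of_extension (fiberProduct.isSES_snd (isSES_ker hπ) _)
        (hX.of_syzygy (isSES_ker hπ) hX₁) hX₁, s, hs, ?_⟩
      obtain ⟨m, a', b', hab'⟩ := exists_comp_eq_smul_of_mem_stableAnnihilator hz
      obtain ⟨g, hg⟩ := exists_lift_of_projective hπ (a ∘ₗ b')
      exact ⟨fiberProduct.lift (g ∘ₗ a') a fun x ↦ by simp [hg, hab'],
        b ∘ₗ fiberProduct.snd _ _, by rw [← hab]; ext x; simp⟩)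
    (.of R X) ⟨hX₁, h⟩
  exact ⟨Y, hY, hAY, hle⟩

/-- With `π : F → X` a surjection from a free module, `V = F ×_X M` is a local summand of `Ω X × F`,
whose depth at `p` exceeds that of `X`, and `M` is a direct summand of the middle term of
`0 → V → F × M → X → 0`. -/
lemma mem_of_isLocalSummand (hX : IsResolving R 𝒳) (hZ : IsResolving R 𝒵) {h : ℕ}
    (hR : LocalDepthGE p h R) (hmem : ∀ M ∈ 𝒵, LocalDepthGE p h M → M ∈ 𝒳)
    {t j : ℕ} (htj : h ≤ t + j) {M X : ModuleCat.{u} R} (hM : M ∈ 𝒵) (hXZ : X ∈ 𝒳 ∩ 𝒵)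
    (hMX : IsLocalSummand p M X) (hdepth : LocalDepthGE p t X) : M ∈ 𝒳 := by
  obtain ⟨s, hs, a, b, hab⟩ := hMX
  induction j generalizing t M X s with
  | zero => exact hmem M hM (.of_smul_retract hs hab (hdepth.mono htj))
  | succ j ih =>
    rcases le_or_gt h t with ht | ht
    · exact hmem M hM (.of_smul_retract hs hab (hdepth.mono ht))
    have := hX.fg X hXZ.1
    have := hZ.fg M hM
    obtain ⟨n, π, hπ⟩ := Module.Finite.exists_fin' R X
    have hXZ' := hX.inter hZ
    have hF : LocalDepthGE p (t + 1) (Fin n → R) := .of_projective (hR.mono ht)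
    have hker : LocalDepthGE p (t + 1) (LinearMap.ker π) :=
      DepthGE.left ((isSES_ker hπ).stalk p) hF hdepth
    have hker' : ModuleCat.of R (LinearMap.ker π) ∈ 𝒳 ∩ 𝒵 := hXZ'.of_syzygy (isSES_ker hπ) hXZ
    obtain ⟨s', hs', a', b', hab'⟩ := isLocalSummand_fiberProduct hπ hs hab
    have hV : ModuleCat.of R (fiberProduct π a) ∈ 𝒳 :=
      ih (t := t + 1) (X := .of R (LinearMap.ker π × (Fin n → R))) (by omega)
        (hZ.of_extension (fiberProduct.isSES_snd (isSES_ker hπ) a) hker'.2 hM)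
        (hXZ'.prod hker' hXZ'.of_projective)
        (DepthGE.middle (isSES_inl_snd.stalk p) hker hF) s' hs' a' b' hab'
    exact hX.of_retract (a := LinearMap.inr R (Fin n → R) M) (b := LinearMap.snd R (Fin n → R) M)
      (fun _ ↦ rfl) (hX.of_extension (fiberProduct.isSES_subtype hπ a) hV hXZ.1)

/-- The local theorem over `R_p` applies to the closure of `𝒳_p`, since the maximal Cohen–Macaulay
modules over the regular ring `R_p` are free. -/
lemma exists_isLocalSummand_of_mem_minimalPrimes (hX : IsResolving R 𝒳)
    (hR : LocalDepthGE p (natHeight p) R) (hreg : IsRegLocalRing (StalkRing p)) {t : ℕ}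
    (hmin : IsMinLocalDepth 𝒳 p t) {I : Ideal R} (hp : p.asIdeal ∈ I.minimalPrimes)
    [Module.Finite R M] (hI : I ≤ (stableAnnihilator R M).radical) (hM : LocalDepthGE p t M) :
    ∃ Y ∈ 𝒳, IsLocalSummand p M Y ∧ I ≤ (stableAnnihilator R Y).radical := by
  obtain ⟨X, hX₁, hlt⟩ := hmin.2
  have hfree : freeOnPuncturedSpec (StalkRing p) ∩
      modulesOfDepthGE (StalkRing p) (natHeight p) ⊆ localizedSubcat 𝒳 p := by
    rintro N ⟨⟨_, -⟩, _, hN⟩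
    have := free_of_isRegLocalRing hreg hR hN
    exact localizedSubcat_of_projective (N := N) hX
  have := hX.fg X hX₁
  obtain ⟨Y, hY, a, b, hab⟩ : ModuleCat.of _ (Stalk p M) ∈ localizedSubcat 𝒳 p :=
    (isResolving_localizedSubcat hX p).inter_modulesOfDepthGE_subset
      (LocalDepthGE.self_iff.1 hR) hfree (hX.isMinLocalDepth_le_natHeight hmin)
      (stalk_mem_localizedSubcat hX₁) (hmin.1 X hX₁) hlt
      ⟨stalk_mem_freeOnPuncturedSpec hp hI,
        inferInstanceAs (Module.Finite (StalkRing p) (Stalk p M)), hM⟩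
  have := hX.fg Y hY
  obtain ⟨Z, hZ, hMZ, hle⟩ := hX.exists_isLocalSummand_le_radical hY
    (isLocalSummand_of_retract (LinearMap.ext hab))
  exact ⟨Z, hZ, hMZ, hI.trans (Ideal.radical_le_radical_iff.2 hle)⟩

variable [IsLocalRing R] {d : ℕ}

lemma mem_of_mem_freeOnPuncturedSpec (hX : IsResolving R 𝒳)
    (hd : ringKrullDim R = (d : WithBot ℕ∞)) (hR : DepthGE R d R)
    (hk : residueMod R ∈ iterSyzygyPreimage d 𝒳) {t : ℕ}
    (hmin : IsMinLocalDepth 𝒳 (closedPoint R) t) {M : ModuleCat.{u} R}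
    (hM : M ∈ freeOnPuncturedSpec R) (hdepth : LocalDepthGE (closedPoint R) t M) : M ∈ 𝒳 := by
  obtain ⟨X, hX₁, hlt⟩ := hmin.2
  have := hX.fg X hX₁
  have := hM.1
  have ht : t ≤ d := natHeight_closedPoint hd ▸ hX.isMinLocalDepth_le_natHeight hmin
  refine hX.inter_modulesOfDepthGE_subset hR
    (hX.inter_modulesOfDepthGE_subset_of_ringKrullDim_eq hd hR hk) ht hX₁
    (LocalDepthGE.closedPoint_iff.1 (hmin.1 X hX₁))
    (fun h ↦ hlt (LocalDepthGE.closedPoint_iff.2 h)) ⟨hM, hM.1, ?_⟩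
  exact LocalDepthGE.closedPoint_iff.1 hdepth

lemma psiDepth_subset (hX : IsResolving R 𝒳) (hd : ringKrullDim R = (d : WithBot ℕ∞))
    (hR : DepthGE R d R)
    (hreg : ∀ p : PrimeSpectrum R, p.asIdeal ≠ maximalIdeal R → IsRegLocalRing (StalkRing p))
    (hk : residueMod R ∈ iterSyzygyPreimage d 𝒳) {f : PrimeSpectrum R → ℕ}
    (hmin : ∀ p, IsMinLocalDepth 𝒳 p (natHeight p - f p)) : psiDepth R f ⊆ 𝒳 := by
  suffices h : ∀ I : Ideal R, psiDepth R f ∩ freeOff I ⊆ 𝒳 from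
    fun M hM ↦ h ⊥ ⟨hM, hM.1, bot_le⟩
  intro I
  induction I using WellFoundedGT.induction with
  | ind I ih =>
  rintro M ⟨hM, hMfin, hI⟩
  have hdepth := (mem_psiDepth_iff.1 hM).2
  by_cases hIm : maximalIdeal R ≤ I.radical
  · exact hX.mem_of_mem_freeOnPuncturedSpec hd hR hk (hmin _)
      ⟨hMfin, hIm.trans (Ideal.radical_le_radical_iff.2 hI)⟩ (hdepth _)
  obtain ⟨P, hP, hne⟩ : ∃ P ∈ I.minimalPrimes, P ≠ maximalIdeal R := by
    by_contra! hall
    rw [← Ideal.sInf_minimalPrimes] at hIm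
    exact hIm (le_sInf fun P hP ↦ (hall P hP).ge)
  let p : PrimeSpectrum R := ⟨P, hP.1.1⟩
  have hRp := hR.localDepthGE_natHeight hd p
  obtain ⟨Y, hY, hMY, hIY⟩ := hX.exists_isLocalSummand_of_mem_minimalPrimes hRp (hreg p hne)
    (hmin p) hP hI (hdepth p)
  refine hX.mem_of_isLocalSummand
    ((isResolving_psiDepth (hR.localDepthGE_natHeight hd) f).inter (isResolving_freeOff I)) hRp
    ?_ (t := 0) (Nat.zero_add _).ge ⟨hM, hMfin, hI⟩
    ⟨hY, mem_psiDepth_iff.2 ⟨hX.fg Y hY, fun q ↦ (hmin q).1 Y hY⟩, hX.fg Y hY, hIY⟩ hMY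
    DepthGE.zero
  rintro N ⟨hN, hNfin, hIN⟩ hNdepth
  have := free_of_isRegLocalRing (hreg p hne) hRp hNdepth
  have : Module.Projective (StalkRing p) (Stalk p N) := .of_free
  refine ih (I ⊔ stableAnnihilator R N) (left_lt_sup.2 fun hle ↦ ?_)
    ⟨hN, hNfin, sup_le hIN Ideal.le_radical⟩
  exact not_stableAnnihilator_le_of_projective_stalk (p := p) (hle.trans hP.1.2)

end IsResolving

end Classification

/-- Corollary: over a `d`-dimensional Cohen-Macaulay local ring with an isolated
singularity, `φ` and `ψ` are mutually inverse bijections between the resolving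
subcategories of `mod R` containing `Ω^d k` and the grade consistent functions on
`Spec R`. -/
theorem isolated_singularity_classification [IsNoetherianRing R] [IsLocalRing R]
    (hCM : IsCMLocalRing R) (d : ℕ) (hd : ringKrullDim R = (d : WithBot ℕ∞))
    (hisol : ∀ p : PrimeSpectrum R, p.asIdeal ≠ IsLocalRing.maximalIdeal R →
      IsRegLocalRing (Localization.AtPrime p.asIdeal)) :
    (∀ 𝒳 : Set (ModuleCat.{u} R), IsResolving R 𝒳 →
      (∀ K : ModuleCat.{u} R, IsMinSyz R d (residueMod R) K → K ∈ 𝒳) →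
      ∃ f : PrimeSpectrum R → ℕ, GradeConsistent R f ∧
        (∀ p : PrimeSpectrum R,
          (f p : ℕ∞) = heightE R p - ⨅ X ∈ 𝒳, localDepth R p X) ∧
        psiDepth R f = 𝒳) ∧
    (∀ f : PrimeSpectrum R → ℕ, GradeConsistent R f →
      IsResolving R (psiDepth R f) ∧
      (∀ K : ModuleCat.{u} R, IsMinSyz R d (residueMod R) K → K ∈ psiDepth R f) ∧
      (∀ p : PrimeSpectrum R,
        (f p : ℕ∞) = heightE R p - ⨅ X ∈ psiDepth R f, localDepth R p X)) := by
  have hdepth := hCM.depthGE hd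
  have hR := hdepth.localDepthGE_natHeight hd
  refine ⟨fun 𝒳 hX hk ↦ ?_, fun f hf ↦ ⟨isResolving_psiDepth hR f,
    fun K hK ↦ mem_psiDepth_of_isMinSyz_residueMod hd hR f hK, fun p ↦
      (hf.isMinLocalDepth_psiDepth hR p).natCast_eq_heightE_sub_iInf (fun X hX ↦ hX.1)
        (hf.le_natHeight p)⟩⟩
  obtain ⟨f, hf⟩ := hX.exists_isMinLocalDepth_natHeight_sub
  obtain ⟨K, hK⟩ := exists_isMinSyz d (residueMod R)
  have hres : residueMod R ∈ iterSyzygyPreimage d 𝒳 :=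
    hX.mem_iterSyzygyPreimage_of_isMinSyz hK (hk K hK)
  exact ⟨f, hX.gradeConsistent hR hf,
    fun p ↦ (hf p).2.natCast_eq_heightE_sub_iInf hX.fg (hf p).1,
    (hX.psiDepth_subset hd hdepth hisol hres fun p ↦ (hf p).2).antisymm fun X hX₁ ↦
      mem_psiDepth_iff.2 ⟨hX.fg X hX₁, fun p ↦ (hf p).2.1 X hX₁⟩⟩

end ResolvPaper
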